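/- arXiv:2110.03838 — 3 statements merged into one kernel-verified Lean document; each statement's English description precedes it below -/
import Mathlib

section
/- Let p ∈ ℕ₀ and 0 < α < 2. Let φ ∈ C_c^N(ℝ²) with N ≥ 2p+4 and set f = φ·s where s is the on-diagonal singular kernel in dimension n = 2. Let g ∈ C_c^∞(ℝ²) be radially symmetric with g(0) = 1 and ∂^k g(0) = 0 for all k ∈ ℕ₀² with 1 ≤ |k|₁ ≤ 2p+1, and for each sufficiently small h > 0 let ω(h) ∈ ℝ^{N_p} be the solution of the on-diagonal moment linear system K G(h) ω(h) = c(h). Then there exists ω̄ ∈ ℝ^{N_p} such that |ω(h) − ω̄|₂ = O(h^{2p+2}) as h → 0, and moreover, defining the corrected trapezoidal rule Q_h^p[f] = T_h^0[f] + h^{2−α} Σ_{γ∈𝓘_p} ω̄_γ Σ_{β∈𝓖_γ} φ(βh), there exists a constant C > 0 such that |Q_h^p[f] − ∫_{ℝ²} f(x) dx| ≤ C h^{2p+4−α} for all sufficiently small h > 0. -/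
open MeasureTheory Real

noncomputable def euclNorm {n : ℕ} (x : Fin n → ℝ) : ℝ := Real.sqrt (∑ j, x j ^ 2)

noncomputable def pd {n : ℕ} (j : Fin n) (f : (Fin n → ℝ) → ℝ) : (Fin n → ℝ) → ℝ :=
  fun x => fderiv ℝ f x (Pi.single j 1)

noncomputable def md {n : ℕ} (γ : Fin n → ℕ) (f : (Fin n → ℝ) → ℝ) : (Fin n → ℝ) → ℝ :=
  (List.finRange n).foldr (fun j g => (pd j)^[γ j] g) f

noncomputable def trap {n : ℕ} (h : ℝ) (f : (Fin n → ℝ) → ℝ) : ℝ :=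
  h ^ n * ∑' β : {β : Fin n → ℤ // β ≠ 0}, f (fun j => (β.1 j : ℝ) * h)

/-- The on-diagonal singular kernel `s(x) = x₁² / |x|^{2+α}` on `ℝ²`. -/
noncomputable def sOn (α : ℝ) (x : Fin 2 → ℝ) : ℝ := x 0 ^ 2 / euclNorm x ^ ((2:ℝ) + α)

/-- The set `𝓖_γ` of all sign changes of `(γ₁, γ₂)`. -/
def Gon (γ : ℕ × ℕ) : Finset (ℤ × ℤ) :=
  {((γ.1 : ℤ), (γ.2 : ℤ)), (-(γ.1 : ℤ), (γ.2 : ℤ)), ((γ.1 : ℤ), -(γ.2 : ℤ)),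
    (-(γ.1 : ℤ), -(γ.2 : ℤ))}

noncomputable def gridPt (β : ℤ × ℤ) (h : ℝ) : Fin 2 → ℝ := ![(β.1 : ℝ) * h, (β.2 : ℝ) * h]

/-- weighted symbol-type class -/
def SS : ℕ → ℝ → ℝ → ((Fin 2 → ℝ) → ℝ) → Prop
  | 0, r, A, u => Measurable u ∧ (∀ x, x ≠ 0 → ContinuousAt u x) ∧ ∀ x, x ≠ 0 → |u x| ≤ A * ‖x‖ ^ r
  | q + 1, r, A, u => Measurable u ∧ (∀ x, x ≠ 0 → DifferentiableAt ℝ u x) ∧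
      (∀ x, x ≠ 0 → |u x| ≤ A * ‖x‖ ^ r) ∧ ∀ j, SS q (r - 1) A (pd j u)

lemma SS.meas {q : ℕ} {r A : ℝ} {u : (Fin 2 → ℝ) → ℝ} (h : SS q r A u) : Measurable u := by
  cases q <;> exact h.1

lemma SS.bd {q : ℕ} {r A : ℝ} {u : (Fin 2 → ℝ) → ℝ} (h : SS q r A u) :
    ∀ x, x ≠ 0 → |u x| ≤ A * ‖x‖ ^ r := by
  cases q
  · exact h.2.2
  · exact h.2.2.1

lemma SS.cont {q : ℕ} {r A : ℝ} {u : (Fin 2 → ℝ) → ℝ} (h : SS q r A u) :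
    ∀ x, x ≠ 0 → ContinuousAt u x := by
  cases q
  · exact h.2.1
  · exact fun x hx => (h.2.1 x hx).continuousAt

lemma SS.nonneg {q : ℕ} {r A : ℝ} {u : (Fin 2 → ℝ) → ℝ} (h : SS q r A u) : 0 ≤ A := by
  have h1 := h.bd (fun _ => 1) (by intro h; simpa using congrFun h 0)
  have : ‖(fun _ => 1 : Fin 2 → ℝ)‖ = 1 := by simp
  rw [this, one_rpow, mul_one] at h1
  exact (abs_nonneg _).trans h1

lemma pd_supp {u : (Fin 2 → ℝ) → ℝ} {R : ℝ} (h : ∀ x, R < ‖x‖ → u x = 0) (j : Fin 2) :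
    ∀ x, R < ‖x‖ → pd j u x = 0 := by
  intro x hx
  have : u =ᶠ[nhds x] fun _ => 0 := by
    filter_upwards [(isOpen_lt continuous_const continuous_norm).mem_nhds hx] with y hy
    exact h y hy
  unfold pd
  rw [this.fderiv_eq]; simp

lemma pd_meas (u : (Fin 2 → ℝ) → ℝ) (j : Fin 2) : Measurable (pd j u) :=
  measurable_fderiv_apply_const ℝ u _

/-- the embedding of the lattice -/
def cst (β : Fin 2 → ℤ) : Fin 2 → ℝ := fun j => (β j : ℝ)

lemma cst_norm (β : Fin 2 → ℤ) : ‖cst β‖ = ‖β‖ := by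
  have : ∀ b, ‖((β b : ℤ) : ℝ)‖₊ = ‖β b‖₊ := fun b => NNReal.eq (Int.norm_cast_real _)
  simp [cst, Pi.norm_def, this]

lemma one_le_norm {β : Fin 2 → ℤ} (h : β ≠ 0) : 1 ≤ ‖β‖ := by
  obtain ⟨j, hj⟩ := Function.ne_iff.mp h
  refine le_trans ?_ (norm_le_pi_norm β j)
  rw [Int.norm_eq_abs]
  have : (1:ℤ) ≤ |β j| := Int.one_le_abs hj
  exact_mod_cast this

lemma norm_lb {β : Fin 2 → ℤ} (h : β ≠ 0) {y : Fin 2 → ℝ} (hy : ‖y‖ ≤ 1 / 2) :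
    ‖β‖ / 2 ≤ ‖cst β + y‖ := by
  have := norm_sub_le_norm_add (cst β) y
  rw [cst_norm] at this
  have := one_le_norm h
  linarith

lemma add_ne {β : Fin 2 → ℤ} (h : β ≠ 0) {y : Fin 2 → ℝ} (hy : ‖y‖ ≤ 1 / 2) :
    cst β + y ≠ 0 := by
  have := norm_lb h hy
  have := one_le_norm h
  rw [← norm_pos_iff]
  linarith

lemma cst_ne {β : Fin 2 → ℤ} (h : β ≠ 0) : cst β ≠ 0 := by
  simpa using add_ne h (y := 0) (by simp)

lemma summ (f : (Fin 2 → ℤ) → ℝ) (R : ℝ) (h : ∀ β, R < ‖β‖ → f β = 0) : Summable f := by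
  apply summable_of_hasFiniteSupport
  refine (isCompact_iff_finite.mp (isCompact_closedBall (0 : Fin 2 → ℤ) R)).subset ?_
  intro β hβ
  by_contra h'
  apply hβ
  apply h
  simpa using h'

lemma summ' (f : (Fin 2 → ℤ) → ℝ) (R : ℝ) (h : ∀ β, R < ‖β‖ → f β = 0) :
    Summable fun β : {β : Fin 2 → ℤ // β ≠ 0} => f β.1 :=
  (summ f R h).comp_injective Subtype.val_injective

lemma tsum_split (f : (Fin 2 → ℤ) → ℝ) (hf : Summable f) :
    ∑' β, f β = f 0 + ∑' β : {β : Fin 2 → ℤ // β ≠ 0}, f β.1 := by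
  rw [← hf.tsum_subtype_add_tsum_subtype_compl {0}]
  congr 1
  rw [tsum_singleton]

lemma pd_fderiv_sum (u : (Fin 2 → ℝ) → ℝ) (x y : Fin 2 → ℝ) :
    fderiv ℝ u x y = ∑ j, y j * pd j u x := by
  conv_lhs => rw [← Finset.univ_sum_single y]
  rw [map_sum]
  refine Finset.sum_congr rfl fun j _ => ?_
  unfold pd
  rw [← smul_eq_mul, ← map_smul, ← Pi.single_smul]
  simp

lemma ftc0 {q : ℕ} {r A : ℝ} {u : (Fin 2 → ℝ) → ℝ} (hu : SS (q+1) r A u)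
    {b : Fin 2 → ℝ} {y : Fin 2 → ℝ} (hne : ∀ t ∈ Set.Icc (0:ℝ) 1, b + t • y ≠ 0) :
    ∑ j, ∫ t in Set.Icc (0:ℝ) 1, y j * pd j u (b + t • y) = u (b + y) - u b := by
  have hco : ∀ j, ContinuousOn (fun t : ℝ => y j * pd j u (b + t • y)) (Set.Icc (0:ℝ) 1) := by
    intro j t ht
    have h1 := (hu.2.2.2 j).cont _ (hne t ht)
    apply ContinuousAt.continuousWithinAt
    refine continuousAt_const.mul (ContinuousAt.comp (f := fun t : ℝ => b + t • y) h1 ?_)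
    fun_prop
  have hint : ∀ j, IntegrableOn (fun t : ℝ => y j * pd j u (b + t • y)) (Set.Icc (0:ℝ) 1) :=
    fun j => (hco j).integrableOn_Icc
  rw [← integral_finsetSum _ (fun j _ => hint j)]
  rw [integral_Icc_eq_integral_Ioc, ← intervalIntegral.integral_of_le zero_le_one]
  rw [intervalIntegral.integral_eq_sub_of_hasDerivAt (f := fun t : ℝ => u (b + t • y))]
  · simp
  · intro t ht
    rw [Set.uIcc_of_le zero_le_one] at ht
    have h1 := (hu.2.1 _ (hne t ht)).hasFDerivAt
    have h2 : HasDerivAt (fun t : ℝ => b + t • y) y t := by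
      simpa using ((hasDerivAt_id t).smul_const y).const_add (b)
    have := h1.comp_hasDerivAt t h2
    rw [pd_fderiv_sum] at this
    exact this
  · rw [intervalIntegrable_iff_integrableOn_Icc_of_le zero_le_one]
    exact integrable_finsetSum _ (fun j _ => hint j)

lemma ftc {q : ℕ} {r A : ℝ} {u : (Fin 2 → ℝ) → ℝ} (hu : SS (q+1) r A u)
    {β : Fin 2 → ℤ} (h : β ≠ 0) {y : Fin 2 → ℝ} (hy : ‖y‖ ≤ 1 / 2) :
    ∑ j, ∫ t in Set.Icc (0:ℝ) 1, y j * pd j u (cst β + t • y) = u (cst β + y) - u (cst β) := by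
  refine ftc0 hu fun t ht => add_ne h ?_
  rw [norm_smul, norm_of_nonneg ht.1]
  nlinarith [ht.1, ht.2, norm_nonneg y]

lemma rpow_le_add {a b x : ℝ} (ha : 0 < a) (h1 : a ≤ x) (h2 : x ≤ b) (r : ℝ) :
    x ^ r ≤ a ^ r + b ^ r := by
  have hx : 0 < x := ha.trans_le h1
  have hb : 0 < b := hx.trans_le h2
  rcases le_total 0 r with hr | hr
  · have := rpow_le_rpow hx.le h2 hr
    have := rpow_nonneg ha.le r
    linarith
  · have := rpow_le_rpow_of_nonpos ha h1 hr
    have := rpow_nonneg hb.le r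
    linarith

lemma L_int {q : ℕ} {r A : ℝ} {u : (Fin 2 → ℝ) → ℝ} (hu : SS q r A u)
    {β : Fin 2 → ℤ} (h : β ≠ 0) {Ω : Type} [MeasurableSpace Ω] (μ : Measure Ω) [IsFiniteMeasure μ]
    (w : Ω → ℝ) (Y : Ω → Fin 2 → ℝ) (hw : Measurable w) (hY : Measurable Y)
    (B : ℝ) (hB : ∀ ω, |w ω| ≤ B) (hY2 : ∀ ω, ‖Y ω‖ ≤ 1 / 2) :
    Integrable (fun ω => w ω * u (cst β + Y ω)) μ := by
  refine Integrable.of_bound (C := B * (A * ((‖β‖/2)^r + (‖β‖ + 1/2)^r))) ?_ ?_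
  · exact (hw.mul (hu.meas.comp (hY.const_add _))).aestronglyMeasurable
  · refine Filter.Eventually.of_forall fun ω => ?_
    rw [norm_mul, norm_eq_abs, norm_eq_abs]
    have hA := hu.nonneg
    refine mul_le_mul (hB ω) ?_ (abs_nonneg _) ((abs_nonneg _).trans (hB ω))
    refine (hu.bd _ (add_ne h (hY2 ω))).trans ?_
    refine mul_le_mul_of_nonneg_left ?_ hA
    refine rpow_le_add ?_ (norm_lb h (hY2 ω)) ?_ r
    · have := one_le_norm h; linarith
    · refine (norm_add_le _ _).trans ?_
      rw [cst_norm]; linarith [hY2 ω]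

lemma L_supp {u : (Fin 2 → ℝ) → ℝ} {R : ℝ} (hR : ∀ x, R < ‖x‖ → u x = 0)
    {y : Fin 2 → ℝ} (hy : ‖y‖ ≤ 1 / 2) (β : Fin 2 → ℤ) (hβ : R + 1/2 < ‖β‖) :
    u (cst β + y) = 0 := by
  apply hR
  have := norm_sub_le_norm_add (cst β) y
  rw [cst_norm] at this
  linarith

/-- telescoping -/
lemma telesc {q : ℕ} {r A R : ℝ} {u : (Fin 2 → ℝ) → ℝ} (hu : SS q r A u)
    (hR : ∀ x, R < ‖x‖ → u x = 0) (j : Fin 2) :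
    |∑' β : {β : Fin 2 → ℤ // β ≠ 0}, (u (cst β.1 + Pi.single j (1/2)) - u (cst β.1 + Pi.single j (-1/2)))|
      ≤ 2 * (1/2:ℝ)^r * A := by
  have n1 : ‖(Pi.single j (1/2) : Fin 2 → ℝ)‖ = 1/2 := by
    rw [Pi.norm_single]; norm_num
  have n2 : ‖(Pi.single j (-1/2) : Fin 2 → ℝ)‖ = 1/2 := by
    rw [Pi.norm_single]; norm_num
  have z1 : (Pi.single j (1/2) : Fin 2 → ℝ) ≠ 0 := by rw [← norm_pos_iff, n1]; norm_num
  have z2 : (Pi.single j (-1/2) : Fin 2 → ℝ) ≠ 0 := by rw [← norm_pos_iff, n2]; norm_num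
  have s1 : ∀ β, R + 1/2 < ‖β‖ → u (cst β + Pi.single j (1/2)) = 0 := L_supp hR n1.le
  have s2 : ∀ β, R + 1/2 < ‖β‖ → u (cst β + Pi.single j (-1/2)) = 0 := L_supp hR n2.le
  have t1 := tsum_split _ (summ (fun β => u (cst β + Pi.single j (1/2))) _ s1)
  have t2 := tsum_split _ (summ (fun β => u (cst β + Pi.single j (-1/2))) _ s2)
  have t3 : ∑' β, u (cst β + Pi.single j (1/2)) = ∑' β, u (cst β + Pi.single j (-1/2)) := by
    refine Eq.trans ?_ ((Equiv.addRight (Pi.single j (1:ℤ) : Fin 2 → ℤ)).tsum_eq (fun β => u (cst β + Pi.single j (-1/2))))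
    refine tsum_congr fun β => ?_
    congr 1
    ext i
    by_cases hi : i = j
    · subst hi; simp [cst]; ring
    · simp [cst, hi]
  rw [Summable.tsum_sub (summ' _ _ s1) (summ' _ _ s2)]
  have c0 : cst 0 = 0 := by ext; simp [cst]
  have b1 := hu.bd _ z1
  have b2 := hu.bd _ z2
  rw [n1] at b1
  rw [n2] at b2
  simp only [c0, zero_add] at t1 t2
  rw [abs_le] at *
  constructor <;> linarith

lemma combine {ι : Type} (F : ι → ℝ) (f1 f2 f3 : Fin 2 → ι → ℝ) (W : Fin 2 → ℝ)
    {C1 C2 C3 : Fin 2 → ℝ} {A : ℝ}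
    (key : ∀ β, F β = ∑ j, (f1 j β - W j * f2 j β + W j * f3 j β))
    (s1 : ∀ j, Summable (f1 j)) (s2 : ∀ j, Summable (f2 j)) (s3 : ∀ j, Summable (f3 j))
    (b1 : ∀ j, |∑' β, f1 j β| ≤ C1 j * A) (b2 : ∀ j, |∑' β, f2 j β| ≤ C2 j * A)
    (b3 : ∀ j, |∑' β, f3 j β| ≤ C3 j * A) :
    |∑' β, F β| ≤ (∑ j, (C1 j + |W j| * C2 j + |W j| * C3 j)) * A := by
  rw [tsum_congr key]
  rw [Summable.tsum_finsetSum (fun j _ => ((s1 j).sub ((s2 j).mul_left _)).add ((s3 j).mul_left _))]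
  rw [Finset.sum_mul]
  refine (Finset.abs_sum_le_sum_abs _ _).trans (Finset.sum_le_sum fun j _ => ?_)
  rw [Summable.tsum_add ((s1 j).sub ((s2 j).mul_left _)) ((s3 j).mul_left _),
    Summable.tsum_sub (s1 j) ((s2 j).mul_left _), tsum_mul_left, tsum_mul_left]
  refine (abs_add_le _ _).trans ?_
  refine (add_le_add_left (abs_sub _ _) _).trans ?_
  rw [abs_mul, abs_mul]
  have b2' := mul_le_mul_of_nonneg_left (b2 j) (abs_nonneg (W j))
  have b3' := mul_le_mul_of_nonneg_left (b3 j) (abs_nonneg (W j))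
  refine (add_le_add (add_le_add (b1 j) b2') b3').trans (le_of_eq (by ring))

set_option maxHeartbeats 800000 in
theorem core (q : ℕ) : ∀ r : ℝ, r + 2 < q → ∀ (Ω : Type) [MeasurableSpace Ω] (μ : Measure Ω)
    [IsFiniteMeasure μ] (w : Ω → ℝ) (Y : Ω → Fin 2 → ℝ), Measurable w → Measurable Y →
    (∃ B, ∀ ω, |w ω| ≤ B) → (∀ ω, ‖Y ω‖ ≤ 1 / 2) →
    ∃ C : ℝ, ∀ (u : (Fin 2 → ℝ) → ℝ) (A R : ℝ), SS q r A u → (∀ x, R < ‖x‖ → u x = 0) →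
      |∑' β : {β : Fin 2 → ℤ // β ≠ 0},
        ((∫ ω, w ω * u (cst β.1 + Y ω) ∂μ) - (∫ ω, w ω ∂μ) * u (cst β.1))| ≤ C * A := by
  induction q with
  | zero =>
    intro r hr Ω _ μ _ w Y hw hY ⟨B, hB⟩ hY2
    push_cast at hr
    have hs : Summable fun β : {β : Fin 2 → ℤ // β ≠ 0} => ‖β.1‖ ^ r := by
      have := EisensteinSeries.summable_one_div_norm_rpow (k := -r) (by linarith)
      simp only [neg_neg] at this
      exact this.comp_injective Subtype.val_injective
    refine ⟨2 * (max B 0 * μ.real Set.univ * (1/2:ℝ)^r) * ∑' β : {β : Fin 2 → ℤ // β ≠ 0}, ‖β.1‖ ^ r, ?_⟩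
    intro u A R hu hR
    have hA := hu.nonneg
    rw [← norm_eq_abs]
    have := tsum_of_norm_bounded (f := fun β : {β : Fin 2 → ℤ // β ≠ 0} =>
        ((∫ ω, w ω * u (cst β.1 + Y ω) ∂μ) - (∫ ω, w ω ∂μ) * u (cst β.1)))
      (hs.hasSum.mul_left (2 * (max B 0 * μ.real Set.univ * (1/2:ℝ)^r) * A)) ?_
    · refine this.trans (le_of_eq (by ring))
    rintro ⟨β, hβ⟩
    have h1 := one_le_norm hβ
    have hub : ∀ y, ‖y‖ ≤ 1/2 → |u (cst β + y)| ≤ A * ((1/2:ℝ)^r * ‖β‖^r) := by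
      intro y hy
      refine (hu.bd _ (add_ne hβ hy)).trans (mul_le_mul_of_nonneg_left ?_ hA)
      rw [← mul_rpow (by norm_num) (by linarith)]
      refine rpow_le_rpow_of_nonpos (by linarith) ?_ (by linarith)
      have := norm_lb hβ hy
      linarith
    have hB' : ∀ ω, |w ω| ≤ max B 0 := fun ω => (hB ω).trans (le_max_left _ _)
    have hB0 : 0 ≤ max B 0 := le_max_right _ _
    have e1 : ‖∫ ω, w ω * u (cst β + Y ω) ∂μ‖ ≤ (max B 0 * (A * ((1/2:ℝ)^r * ‖β‖^r))) * μ.real Set.univ := by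
      refine norm_integral_le_of_norm_le_const (Filter.Eventually.of_forall fun ω => ?_)
      rw [norm_mul, norm_eq_abs, norm_eq_abs]
      exact mul_le_mul (hB' ω) (hub _ (hY2 ω)) (abs_nonneg _) hB0
    have e2 : ‖∫ ω, w ω ∂μ‖ ≤ max B 0 * μ.real Set.univ := by
      refine norm_integral_le_of_norm_le_const (Filter.Eventually.of_forall fun ω => ?_)
      exact hB' ω
    have e3 := hub 0 (by simp)
    rw [add_zero] at e3
    have e4 : ‖(∫ ω, w ω ∂μ) * u (cst β)‖ ≤ (max B 0 * μ.real Set.univ) * (A * ((1/2:ℝ)^r * ‖β‖^r)) := by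
      rw [norm_mul]
      exact mul_le_mul e2 e3 (norm_nonneg _) ((norm_nonneg _).trans e2)
    refine (norm_sub_le _ _).trans ((add_le_add e1 e4).trans (le_of_eq (by ring)))
  | succ q ih =>
    intro r hr Ω _ μ _ w Y hw hY ⟨B, hB⟩ hY2
    push_cast at hr
    -- the derived functionals
    obtain ⟨ν, hν⟩ : ∃ ν : Measure ℝ, ν = volume.restrict (Set.Icc (0:ℝ) 1) := ⟨_, rfl⟩
    have : IsFiniteMeasure ν := by rw [hν]; infer_instance
    obtain ⟨τ, hτ⟩ : ∃ τ : ℝ → ℝ, τ = fun t => max 0 (min 1 t) := ⟨_, rfl⟩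
    have hτm : Measurable τ := by rw [hτ]; fun_prop
    have hτ0 : ∀ t, |τ t| ≤ 1 := by
      intro t
      have h0 : 0 ≤ τ t := by rw [hτ]; exact le_max_left _ _
      have h1 : τ t ≤ 1 := by rw [hτ]; exact max_le zero_le_one (min_le_left _ _)
      rw [abs_le]; constructor <;> linarith
    have hτe : ∀ t ∈ Set.Icc (0:ℝ) 1, τ t = t := by
      intro t ht
      simp [hτ, ht.1, ht.2]
    have hYc : ∀ ω j, |Y ω j| ≤ 1/2 := fun ω j => (norm_le_pi_norm (Y ω) j).trans (hY2 ω)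
    have hYj : ∀ j, Measurable fun ω => Y ω j := fun j => (measurable_pi_apply j).comp hY
    have hWb : ∀ j, ∀ z : Ω × ℝ, |w z.1 * Y z.1 j| ≤ |B| := by
      intro j z
      rw [abs_mul]
      have h1 := (hB z.1).trans (le_abs_self B)
      have h2 := hYc z.1 j
      nlinarith [abs_nonneg (w z.1), abs_nonneg (Y z.1 j)]
    have hYb : ∀ z : Ω × ℝ, ‖τ z.2 • Y z.1‖ ≤ 1/2 := by
      intro z
      rw [norm_smul, norm_eq_abs]
      nlinarith [hτ0 z.2, hY2 z.1, norm_nonneg (Y z.1), abs_nonneg (τ z.2)]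
    have hWm : ∀ j, Measurable fun z : Ω × ℝ => w z.1 * Y z.1 j :=
      fun j => (hw.comp measurable_fst).mul ((hYj j).comp measurable_fst)
    have hYm : Measurable fun z : Ω × ℝ => τ z.2 • Y z.1 :=
      (hτm.comp measurable_snd).smul (hY.comp measurable_fst)
    have hMb : ∀ j : Fin 2, ∀ t : ℝ, ‖(Pi.single j (τ t - 1/2) : Fin 2 → ℝ)‖ ≤ 1/2 := by
      intro j t
      rw [Pi.norm_single, norm_eq_abs, abs_le]
      have h0 : 0 ≤ τ t := by rw [hτ]; exact le_max_left _ _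
      have h1 : τ t ≤ 1 := by rw [hτ]; exact max_le zero_le_one (min_le_left _ _)
      constructor <;> linarith
    have hMm : ∀ j : Fin 2, Measurable fun t : ℝ => (Pi.single j (τ t - 1/2) : Fin 2 → ℝ) := by
      intro j
      rw [measurable_pi_iff]
      intro i
      by_cases hi : i = j
      · subst hi; simp only [Pi.single_eq_same]; exact hτm.sub_const _
      · simp [Pi.single_eq_of_ne hi]
    have hr' : r - 1 + 2 < q := by linarith
    choose C1 hC1 using fun j => ih (r-1) hr' (Ω × ℝ) (μ.prod ν) (fun z => w z.1 * Y z.1 j)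
      (fun z => τ z.2 • Y z.1) (hWm j) hYm ⟨|B|, hWb j⟩ hYb
    choose C2 hC2 using fun j => ih (r-1) hr' ℝ ν (fun _ => 1)
      (fun t => Pi.single j (τ t - 1/2)) measurable_const (hMm j) ⟨1, by simp⟩ (hMb j)
    obtain ⟨W, hWd⟩ : ∃ W : Fin 2 → ℝ, ∀ j, ∫ z, w z.1 * Y z.1 j ∂(μ.prod ν) = W j := ⟨_, fun _ => rfl⟩
    simp only [hWd] at hC1
    refine ⟨∑ j, (C1 j + |W j| * C2 j + |W j| * (2 * (1/2:ℝ)^r)), ?_⟩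
    intro u A R hu hR
    have hA := hu.nonneg
    have hν1 : ∫ _t, (1:ℝ) ∂ν = 1 := by simp [hν]
    have hM : ∀ β, β ≠ 0 → ∀ j, ∫ t, (1:ℝ) * pd j u (cst β + Pi.single j (τ t - 1/2)) ∂ν =
        u (cst β + Pi.single j (1/2)) - u (cst β + Pi.single j (-1/2)) := by
      intro β hβ j
      have hne : ∀ t ∈ Set.Icc (0:ℝ) 1, (cst β + Pi.single j (-1/2)) + t • (Pi.single j 1 : Fin 2 → ℝ)
          = cst β + Pi.single j (τ t - 1/2) := by
        intro t ht
        rw [hτe t ht, add_assoc, ← Pi.single_smul, ← Pi.single_add]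
        congr 2
        simp; ring
      have := ftc0 hu (b := cst β + Pi.single j (-1/2)) (y := Pi.single j 1)
        (fun t ht => by rw [hne t ht]; exact add_ne hβ (hMb j t))
      rw [Finset.sum_eq_single j] at this
      · rw [Pi.single_eq_same, add_assoc, ← Pi.single_add] at this
        rw [show (-1/2 + 1 : ℝ) = 1/2 by norm_num] at this
        rw [← this]
        rw [hν]
        refine setIntegral_congr_fun measurableSet_Icc fun t ht => ?_
        rw [hne t ht]
      · intro i _ hi
        simp [Pi.single_eq_of_ne hi]
      · simp
    have hL : ∀ β, β ≠ 0 → (∫ ω, w ω * u (cst β + Y ω) ∂μ) - (∫ ω, w ω ∂μ) * u (cst β) =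
        ∑ j, ∫ z, (w z.1 * Y z.1 j) * pd j u (cst β + τ z.2 • Y z.1) ∂(μ.prod ν) := by
      intro β hβ
      have i1 := L_int hu hβ μ w Y hw hY B hB hY2
      have i2 := L_int hu hβ μ w (fun _ => 0) hw measurable_const B hB (by simp)
      simp only [add_zero] at i2
      rw [← integral_mul_const, ← integral_sub i1 i2]
      have i3 : ∀ j, Integrable (fun z : Ω × ℝ => (w z.1 * Y z.1 j) * pd j u (cst β + τ z.2 • Y z.1)) (μ.prod ν) :=
        fun j => L_int (hu.2.2.2 j) hβ (μ.prod ν) _ _ (hWm j) hYm |B| (hWb j) hYb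
      rw [Finset.sum_congr rfl (fun j _ => integral_prod _ (i3 j))]
      rw [← integral_finsetSum _ (fun j _ => (i3 j).integral_prod_left)]
      refine integral_congr_ae (Filter.Eventually.of_forall fun ω => ?_)
      beta_reduce
      rw [← mul_sub, ← ftc hu hβ (hY2 ω), Finset.mul_sum]
      refine Finset.sum_congr rfl fun j _ => ?_
      rw [← integral_const_mul]
      rw [hν]
      refine setIntegral_congr_fun measurableSet_Icc fun t ht => ?_
      simp only
      rw [hτe t ht]; ring
    have hp : ∀ j x, R < ‖x‖ → pd j u x = 0 := fun j => pd_supp hR j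
    have z0 : ∀ j β, R + 1/2 < ‖β‖ → pd j u (cst β) = 0 := by
      intro j β hβ
      simpa using L_supp (hp j) (y := 0) (by simp) β hβ
    obtain ⟨f1, hf1⟩ : ∃ f : Fin 2 → (Fin 2 → ℤ) → ℝ, ∀ j β, f j β =
      (∫ z, (w z.1 * Y z.1 j) * pd j u (cst β + τ z.2 • Y z.1) ∂(μ.prod ν)) - W j * pd j u (cst β) :=
      ⟨_, fun _ _ => rfl⟩
    obtain ⟨f2, hf2⟩ : ∃ f : Fin 2 → (Fin 2 → ℤ) → ℝ, ∀ j β, f j β =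
      (∫ t, (1:ℝ) * pd j u (cst β + Pi.single j (τ t - 1/2)) ∂ν) - (∫ _t, (1:ℝ) ∂ν) * pd j u (cst β) :=
      ⟨_, fun _ _ => rfl⟩
    obtain ⟨f3, hf3⟩ : ∃ f : Fin 2 → (Fin 2 → ℤ) → ℝ, ∀ j β, f j β =
      u (cst β + Pi.single j (1/2)) - u (cst β + Pi.single j (-1/2)) :=
      ⟨_, fun _ _ => rfl⟩
    have b1 : ∀ j, |∑' β : {β : Fin 2 → ℤ // β ≠ 0}, f1 j β.1| ≤ C1 j * A := by
      intro j
      have := hC1 j (pd j u) A R (hu.2.2.2 j) (hp j)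
      simp only [hf1]; exact this
    have b2 : ∀ j, |∑' β : {β : Fin 2 → ℤ // β ≠ 0}, f2 j β.1| ≤ C2 j * A := by
      intro j
      have := hC2 j (pd j u) A R (hu.2.2.2 j) (hp j)
      simp only [hf2]; exact this
    have b3 : ∀ j, |∑' β : {β : Fin 2 → ℤ // β ≠ 0}, f3 j β.1| ≤ 2 * (1/2:ℝ)^r * A := by
      intro j
      have := telesc hu hR j
      simp only [hf3]; exact this
    have s1 : ∀ j, ∀ β, R + 1/2 < ‖β‖ → f1 j β = 0 := by
      intro j β hβ
      rw [hf1, z0 j β hβ]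
      simp only [fun z => L_supp (hp j) (hYb z) β hβ]
      simp
    have s2 : ∀ j, ∀ β, R + 1/2 < ‖β‖ → f2 j β = 0 := by
      intro j β hβ
      rw [hf2, z0 j β hβ]
      simp only [fun z => L_supp (hp j) (hMb j z) β hβ]
      simp
    have s3 : ∀ j, ∀ β, R + 1/2 < ‖β‖ → f3 j β = 0 := by
      intro j β hβ
      rw [hf3, L_supp hR _ β hβ, L_supp hR _ β hβ, sub_zero] <;> (rw [Pi.norm_single]; norm_num)
    refine combine (C1 := C1) (C2 := C2) (C3 := fun _ => 2 * (1/2:ℝ)^r) (A := A) _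
      (fun j β => f1 j β.1) (fun j β => f2 j β.1) (fun j β => f3 j β.1) W ?_
      (fun j => summ' _ _ (s1 j)) (fun j => summ' _ _ (s2 j)) (fun j => summ' _ _ (s3 j)) b1 b2 b3
    intro β
    rw [hL β.1 β.2]
    refine Finset.sum_congr rfl fun j _ => ?_
    rw [hf1, hf2, hf3, hM β.1 β.2, hν1]; ring

lemma intg_ball {r : ℝ} (hr : -2 < r) (R : ℝ) :
    IntegrableOn (fun x : Fin 2 → ℝ => ‖x‖ ^ r) (Metric.closedBall 0 R) := by
  have key : Integrable (fun x : Fin 2 → ℝ => (Set.indicator (Set.Iic R) (fun t : ℝ => t ^ r)) ‖x‖) := by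
    rw [integrable_fun_norm_addHaar]
    have h1 : IntegrableOn (fun t : ℝ => t ^ (r + 1)) (Set.Ioc 0 R) := by
      rcases le_total 0 R with h | h
      · rw [← intervalIntegrable_iff_integrableOn_Ioc_of_le h]
        exact intervalIntegral.intervalIntegrable_rpow' (by linarith)
      · rw [Set.Ioc_eq_empty (by linarith)]; exact integrableOn_empty
    have h2 : IntegrableOn (Set.indicator (Set.Iic R) (fun t : ℝ => t ^ (r + 1))) (Set.Ioi 0) := by
      rw [IntegrableOn, integrable_indicator_iff measurableSet_Iic, IntegrableOn,
        Measure.restrict_restrict measurableSet_Iic, Set.inter_comm, Set.Ioi_inter_Iic]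
      exact h1
    refine h2.congr_fun (fun t ht => ?_) measurableSet_Ioi
    have ht' : (0:ℝ) < t := ht
    by_cases h : t ∈ Set.Iic R
    · simp only [Set.indicator_of_mem h]
      rw [rpow_add ht', rpow_one]; simp [mul_comm]
    · simp [Set.indicator_of_notMem h]
  rw [← integrable_indicator_iff Metric.isClosed_closedBall.measurableSet]
  refine key.congr (Filter.Eventually.of_forall fun x => ?_)
  by_cases h : ‖x‖ ≤ R
  · simp [Set.indicator, h]
  · simp [Set.indicator, h]

lemma ae_ne : ∀ᵐ x : Fin 2 → ℝ, x ≠ 0 := by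
  have : (volume : Measure (Fin 2 → ℝ)) {0} = 0 := measure_singleton _
  exact compl_mem_ae_iff.mpr this

lemma SS.integrable {q : ℕ} {r A R : ℝ} {u : (Fin 2 → ℝ) → ℝ} (hu : SS q r A u) (hr : -2 < r)
    (hR : ∀ x, R < ‖x‖ → u x = 0) : Integrable u := by
  have h1 := (intg_ball hr R).const_mul A
  have h2 : IntegrableOn u (Metric.closedBall 0 R) := by
    refine Integrable.mono' h1 hu.meas.aestronglyMeasurable ?_
    refine ae_restrict_of_ae ?_
    filter_upwards [ae_ne] with x hx
    exact hu.bd x hx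
  refine h2.integrable_of_forall_notMem_eq_zero fun x hx => hR x ?_
  simpa using hx

/-- unit cell -/
def cell (β : Fin 2 → ℤ) : Set (Fin 2 → ℝ) := {x | ∀ j, round (x j) = β j}

lemma cell_eq : cell 0 = Set.pi Set.univ fun _ => Set.Ico (-1/2 : ℝ) (1/2) := by
  ext x
  simp only [cell, Set.mem_ofPred_eq, Set.mem_pi, Set.mem_univ, true_imp_iff, Pi.zero_apply, Set.mem_Ico]
  refine forall_congr' fun j => ?_
  rw [round_eq, Int.floor_eq_iff]
  constructor
  · rintro ⟨h1, h2⟩; push_cast at h1 h2; constructor <;> linarith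
  · rintro ⟨h1, h2⟩; push_cast; constructor <;> linarith

lemma cell_meas0 : MeasurableSet (cell 0) := by
  rw [cell_eq]; exact MeasurableSet.univ_pi fun _ => measurableSet_Ico

lemma cell_pre (β : Fin 2 → ℤ) : (fun x => cst β + x) ⁻¹' (cell β) = cell 0 := by
  ext x
  simp only [cell, cst, Set.mem_preimage, Set.mem_ofPred_eq, Pi.add_apply, Pi.zero_apply]
  refine forall_congr' fun j => ?_
  rw [add_comm, round_add_intCast]; simp

lemma cell_meas (β : Fin 2 → ℤ) : MeasurableSet (cell β) := by
  have : cell β = (fun x => -cst β + x) ⁻¹' (cell 0) := by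
    rw [← cell_pre β, ← Set.preimage_comp]
    have : ((fun x => cst β + x) ∘ fun x => -cst β + x) = id := by ext x; simp
    rw [this]; rfl
  rw [this]
  exact (measurable_const_add _) cell_meas0

lemma cell_vol : (volume (cell 0)) = 1 := by
  rw [cell_eq, volume_pi_pi]
  norm_num

lemma cell_hasSum {u : (Fin 2 → ℝ) → ℝ} (hu : Integrable u) :
    HasSum (fun β => ∫ x in cell 0, u (cst β + x)) (∫ x, u x) := by
  have hd : Pairwise (Function.onFun Disjoint cell) := by
    intro β γ h
    rw [Function.onFun, Set.disjoint_left]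
    intro x h1 h2
    exact h (funext fun j => (h1 j).symm.trans (h2 j))
  have hU : ⋃ β, cell β = Set.univ := by
    rw [Set.eq_univ_iff_forall]
    intro x
    rw [Set.mem_iUnion]
    exact ⟨fun j => round (x j), fun j => rfl⟩
  have := hasSum_integral_iUnion (μ := volume) (f := u) cell_meas hd (by rw [hU]; exact hu.integrableOn)
  rw [hU, setIntegral_univ] at this
  have e : ∀ β, ∫ x in cell β, u x = ∫ x in cell 0, u (cst β + x) := by
    intro β
    rw [← cell_pre β]
    exact ((measurePreserving_add_left volume (cst β)).setIntegral_preimage_emb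
      (measurableEmbedding_addLeft _) u (cell β)).symm
  simpa only [e] using this

theorem E1 {q : ℕ} {r : ℝ} (hr : -2 < r) (hq : r + 2 < q) :
    ∃ C : ℝ, ∀ (u : (Fin 2 → ℝ) → ℝ) (A R : ℝ), SS q r A u → (∀ x, R < ‖x‖ → u x = 0) →
      |(∫ x, u x) - ∑' β : {β : Fin 2 → ℤ // β ≠ 0}, u (cst β.1)| ≤ C * A := by
  have hYb : ∀ y : Fin 2 → ℝ, ‖(fun j => y j - round (y j) : Fin 2 → ℝ)‖ ≤ 1 / 2 := by
    intro y
    rw [pi_norm_le_iff_of_nonneg (by norm_num)]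
    intro j
    exact abs_sub_round _
  have hYm : Measurable fun y : Fin 2 → ℝ => (fun j => y j - round (y j) : Fin 2 → ℝ) := by
    rw [measurable_pi_iff]
    intro j
    have h1 : Measurable fun y : Fin 2 → ℝ => y j := measurable_pi_apply j
    have h2 : Measurable fun y : Fin 2 → ℝ => ((round (y j) : ℤ) : ℝ) := by
      simp only [round_eq]
      exact (measurable_from_top (f := fun n : ℤ => (n : ℝ))).comp (Int.measurable_floor.comp (h1.add_const _))
    exact h1.sub h2
  have hfin : IsFiniteMeasure (volume.restrict (cell 0)) := by
    constructor; rw [Measure.restrict_apply_univ, cell_vol]; simp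
  obtain ⟨C, hC⟩ := core q r hq (Fin 2 → ℝ) (volume.restrict (cell 0)) (fun _ => 1) _
    measurable_const hYm ⟨1, by simp⟩ hYb
  refine ⟨(∫ x in cell 0, ‖x‖ ^ r) + C, ?_⟩
  intro u A R hu hR
  have hi := hu.integrable hr hR
  have hsum := cell_hasSum hi
  have h0 := tsum_split _ hsum.summable
  rw [hsum.tsum_eq] at h0
  have hcore := hC u A R hu hR
  have e1 : ∀ β : {β : Fin 2 → ℤ // β ≠ 0}, 
      (∫ y in cell 0, (1:ℝ) * u (cst β.1 + fun j => y j - round (y j))) = ∫ y in cell 0, u (cst β.1 + y) := by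
    intro β
    refine setIntegral_congr_fun cell_meas0 fun y hy => ?_
    beta_reduce
    rw [one_mul]
    congr 2
    ext j
    rw [hy j]; simp
  have e2 : (∫ _y in cell 0, (1:ℝ)) = 1 := by
    rw [setIntegral_const, Measure.real, cell_vol]; simp
  simp only [e1, e2] at hcore
  simp only [one_mul] at hcore
  have sA : Summable fun β : {β : Fin 2 → ℤ // β ≠ 0} => u (cst β.1) := by
    refine summ' (fun β => u (cst β)) R fun β hβ => hR _ ?_
    rwa [cst_norm]
  have sB : Summable fun β : {β : Fin 2 → ℤ // β ≠ 0} => ∫ y in cell 0, u (cst β.1 + y) :=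
    hsum.summable.comp_injective Subtype.val_injective
  rw [Summable.tsum_sub sB sA] at hcore
  have c0 : cst 0 = 0 := by ext; simp [cst]
  have hcs : cell 0 ⊆ Metric.closedBall 0 1 := by
    intro x hx
    rw [cell_eq] at hx
    rw [mem_closedBall_zero_iff, pi_norm_le_iff_of_nonneg zero_le_one]
    intro j
    have := hx j trivial
    rw [norm_eq_abs, abs_le]
    constructor <;> linarith [this.1, this.2]
  have b0 : |∫ y in cell 0, u (cst 0 + y)| ≤ (∫ x in cell 0, ‖x‖ ^ r) * A := by
    rw [← norm_eq_abs, ← integral_mul_const]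
    refine norm_integral_le_of_norm_le (((intg_ball hr 1).mono_set hcs).mul_const A) ?_
    refine ae_restrict_of_ae ?_
    filter_upwards [ae_ne] with x hx
    rw [c0, zero_add, mul_comm]
    exact hu.bd x hx
  rw [h0, add_sub_assoc, add_mul]
  exact (abs_add_le _ _).trans (add_le_add b0 hcore)

lemma pd_scale (u : (Fin 2 → ℝ) → ℝ) (h : ℝ) (j : Fin 2) :
    pd j (fun x => u (h • x)) = fun x => h * pd j u (h • x) := by
  ext x
  unfold pd
  rw [fderiv_comp_smul]
  simp

lemma SS.const_mul {q : ℕ} : ∀ {r A : ℝ} {u : (Fin 2 → ℝ) → ℝ}, SS q r A u → ∀ {c : ℝ}, 0 ≤ c →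
    SS q r (c * A) (fun x => c * u x) := by
  induction q with
  | zero =>
    intro r A u hu c hc
    refine ⟨hu.1.const_mul c, fun x hx => (hu.2.1 x hx).const_mul c, fun x hx => ?_⟩
    rw [abs_mul, abs_of_nonneg hc, mul_assoc]
    exact mul_le_mul_of_nonneg_left (hu.2.2 x hx) hc
  | succ q ih =>
    intro r A u hu c hc
    refine ⟨hu.1.const_mul c, fun x hx => (hu.2.1 x hx).const_mul c, fun x hx => ?_, fun j => ?_⟩
    · rw [abs_mul, abs_of_nonneg hc, mul_assoc]
      exact mul_le_mul_of_nonneg_left (hu.2.2.1 x hx) hc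
    · have : pd j (fun x => c * u x) = fun x => c * pd j u x := by
        ext x
        unfold pd
        rw [show (fun x => c * u x) = c • u from rfl, fderiv_const_smul_field]; simp
      rw [this]
      exact ih (hu.2.2.2 j) hc

lemma SS.scale {q : ℕ} : ∀ {r A : ℝ} {u : (Fin 2 → ℝ) → ℝ}, SS q r A u → ∀ {h : ℝ}, 0 < h →
    SS q r (h ^ r * A) (fun x => u (h • x)) := by
  have hb : ∀ {r A h : ℝ} {u : (Fin 2 → ℝ) → ℝ}, (∀ x, x ≠ 0 → |u x| ≤ A * ‖x‖ ^ r) → 0 < h →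
      ∀ x, x ≠ 0 → |u (h • x)| ≤ h ^ r * A * ‖x‖ ^ r := by
    intro r A h u hu hh x hx
    refine (hu (h • x) (smul_ne_zero hh.ne' hx)).trans (le_of_eq ?_)
    rw [norm_smul, norm_of_nonneg hh.le, mul_rpow hh.le (norm_nonneg _)]; ring
  induction q with
  | zero =>
    intro r A u hu h hh
    refine ⟨hu.1.comp (measurable_const_smul h), fun x hx => ?_, hb hu.2.2 hh⟩
    exact ContinuousAt.comp (f := fun x : Fin 2 → ℝ => h • x) (hu.2.1 _ (smul_ne_zero hh.ne' hx)) (by fun_prop)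
  | succ q ih =>
    intro r A u hu h hh
    refine ⟨hu.1.comp (measurable_const_smul h), fun x hx => ?_, hb hu.2.2.1 hh, fun j => ?_⟩
    · exact DifferentiableAt.comp (f := fun x : Fin 2 → ℝ => h • x) x (hu.2.1 _ (smul_ne_zero hh.ne' hx)) (by fun_prop)
    · rw [pd_scale]
      have := (ih (hu.2.2.2 j) hh).const_mul hh.le
      have e : h ^ r * A = h * (h ^ (r - 1) * A) := by
        rw [rpow_sub_one hh.ne']; field_simp
      rw [e]; exact this

theorem Eh {q : ℕ} {r A R : ℝ} (hr : -2 < r) (hq : r + 2 < q) {u : (Fin 2 → ℝ) → ℝ}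
    (hu : SS q r A u) (hR : ∀ x, R < ‖x‖ → u x = 0) :
    ∃ C : ℝ, 0 < C ∧ ∀ h : ℝ, 0 < h → |(∫ x, u x) - trap h u| ≤ C * h ^ (r + 2) := by
  obtain ⟨C, hC⟩ := E1 hr hq
  refine ⟨|C * A| + 1, by positivity, fun h hh => ?_⟩
  have h1 := hC _ _ (R / h) (hu.scale hh) (fun x hx => hR _ (by
    rw [norm_smul, norm_of_nonneg hh.le]
    rw [div_lt_iff₀ hh] at hx; linarith))
  rw [Measure.integral_comp_smul] at h1
  have e1 : (∫ x, u x) - trap h u = h ^ 2 * (|(h ^ Module.finrank ℝ (Fin 2 → ℝ))⁻¹| • (∫ x, u x)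
      - ∑' β : {β : Fin 2 → ℤ // β ≠ 0}, u (h • cst β.1)) := by
    have : ∀ β : Fin 2 → ℤ, h • cst β = fun j => (β j : ℝ) * h := by
      intro β; ext j; simp [cst, mul_comm]
    simp only [this, trap]
    rw [Module.finrank_fin_fun, abs_of_pos (by positivity), smul_eq_mul, mul_sub]
    field_simp
  rw [e1, abs_mul, abs_of_pos (by positivity : 0 < h ^ 2)]
  have e2 : h ^ (r + 2) = h ^ 2 * h ^ r := by
    rw [rpow_add hh, mul_comm]; norm_num
  rw [e2]
  have : C * (h ^ r * A) ≤ (|C * A| + 1) * h ^ r := by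
    have := le_abs_self (C * A)
    have h3 : 0 < h ^ r := rpow_pos_of_pos hh r
    nlinarith
  calc _ ≤ h ^ 2 * ((|C * A| + 1) * h ^ r) := mul_le_mul_of_nonneg_left (h1.trans this) (by positivity)
    _ = _ := by ring

lemma pd_congr {u v : (Fin 2 → ℝ) → ℝ} {x : Fin 2 → ℝ} (h : u =ᶠ[nhds x] v) (j : Fin 2) :
    pd j u x = pd j v x := by
  unfold pd; rw [h.fderiv_eq]

lemma ev_of_off {u v : (Fin 2 → ℝ) → ℝ} (h : ∀ x, x ≠ 0 → u x = v x) {x : Fin 2 → ℝ} (hx : x ≠ 0) :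
    u =ᶠ[nhds x] v := by
  filter_upwards [isOpen_ne.mem_nhds hx] with y hy using h y hy

lemma SS.congr {q : ℕ} : ∀ {r A : ℝ} {u v : (Fin 2 → ℝ) → ℝ}, SS q r A u → Measurable v →
    (∀ x, x ≠ 0 → u x = v x) → SS q r A v := by
  induction q with
  | zero =>
    intro r A u v hu hv h
    refine ⟨hv, fun x hx => (hu.2.1 x hx).congr (ev_of_off h hx), fun x hx => ?_⟩
    rw [← h x hx]; exact hu.2.2 x hx
  | succ q ih =>
    intro r A u v hu hv h
    refine ⟨hv, fun x hx => (hu.2.1 x hx).congr_of_eventuallyEq (ev_of_off h hx).symm, fun x hx => ?_, fun j => ?_⟩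
    · rw [← h x hx]; exact hu.2.2.1 x hx
    · exact ih (hu.2.2.2 j) (pd_meas v j) fun x hx => pd_congr (ev_of_off h hx) j

lemma SS.mono {q : ℕ} : ∀ {r A B : ℝ} {u : (Fin 2 → ℝ) → ℝ}, SS q r A u → A ≤ B → SS q r B u := by
  have hb : ∀ {r A B : ℝ} {u : (Fin 2 → ℝ) → ℝ}, (∀ x, x ≠ 0 → |u x| ≤ A * ‖x‖ ^ r) → A ≤ B →
      ∀ x, x ≠ 0 → |u x| ≤ B * ‖x‖ ^ r := fun h hAB x hx =>
    (h x hx).trans (mul_le_mul_of_nonneg_right hAB (rpow_nonneg (norm_nonneg _) _))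
  induction q with
  | zero => exact fun hu h => ⟨hu.1, hu.2.1, hb hu.2.2 h⟩
  | succ q ih => exact fun hu h => ⟨hu.1, hu.2.1, hb hu.2.2.1 h, fun j => ih (hu.2.2.2 j) h⟩

lemma SS.down {q : ℕ} : ∀ {r A : ℝ} {u : (Fin 2 → ℝ) → ℝ}, SS (q+1) r A u → SS q r A u := by
  induction q with
  | zero => exact fun hu => ⟨hu.1, hu.cont, hu.bd⟩
  | succ q ih => exact fun hu => ⟨hu.1, hu.2.1, hu.2.2.1, fun j => ih (hu.2.2.2 j)⟩

lemma SS.add {q : ℕ} : ∀ {r A B : ℝ} {u v : (Fin 2 → ℝ) → ℝ}, SS q r A u → SS q r B v →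
    SS q r (A + B) (fun x => u x + v x) := by
  have hb : ∀ {r A B : ℝ} {u v : (Fin 2 → ℝ) → ℝ}, (∀ x, x ≠ 0 → |u x| ≤ A * ‖x‖ ^ r) →
      (∀ x, x ≠ 0 → |v x| ≤ B * ‖x‖ ^ r) → ∀ x, x ≠ 0 → |u x + v x| ≤ (A + B) * ‖x‖ ^ r := by
    intro r A B u v h1 h2 x hx
    rw [add_mul]
    exact (abs_add_le _ _).trans (add_le_add (h1 x hx) (h2 x hx))
  induction q with
  | zero => exact fun hu hv => ⟨hu.1.add hv.1, fun x hx => (hu.2.1 x hx).add (hv.2.1 x hx), hb hu.2.2 hv.2.2⟩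
  | succ q ih =>
    intro r A B u v hu hv
    refine ⟨hu.1.add hv.1, fun x hx => (hu.2.1 x hx).add (hv.2.1 x hx), hb hu.2.2.1 hv.2.2.1, fun j => ?_⟩
    refine (ih (hu.2.2.2 j) (hv.2.2.2 j)).congr (pd_meas _ j) fun x hx => ?_
    unfold pd
    rw [fderiv_fun_add (hu.2.1 x hx) (hv.2.1 x hx)]; simp

lemma pd_mul {u v : (Fin 2 → ℝ) → ℝ} {x : Fin 2 → ℝ} (hu : DifferentiableAt ℝ u x)
    (hv : DifferentiableAt ℝ v x) (j : Fin 2) :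
    pd j (fun x => u x * v x) x = pd j u x * v x + u x * pd j v x := by
  unfold pd
  rw [fderiv_fun_mul hu hv]; simp; ring

lemma SS.mul {q : ℕ} : ∀ {r s A B : ℝ} {u v : (Fin 2 → ℝ) → ℝ}, SS q r A u → SS q s B v →
    SS q (r + s) (2 ^ q * (A * B)) (fun x => u x * v x) := by
  have hb : ∀ {r s A B : ℝ} {u v : (Fin 2 → ℝ) → ℝ}, (∀ x, x ≠ 0 → |u x| ≤ A * ‖x‖ ^ r) →
      (∀ x, x ≠ 0 → |v x| ≤ B * ‖x‖ ^ s) → ∀ x, x ≠ 0 → |u x * v x| ≤ (A * B) * ‖x‖ ^ (r + s) := by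
    intro r s A B u v h1 h2 x hx
    rw [abs_mul, rpow_add (norm_pos_iff.mpr hx), mul_mul_mul_comm]
    exact mul_le_mul (h1 x hx) (h2 x hx) (abs_nonneg _) ((abs_nonneg _).trans (h1 x hx))
  induction q with
  | zero =>
    intro r s A B u v hu hv
    refine ⟨hu.1.mul hv.1, fun x hx => (hu.2.1 x hx).mul (hv.2.1 x hx), ?_⟩
    simpa using hb hu.2.2 hv.2.2
  | succ q ih =>
    intro r s A B u v hu hv
    refine ⟨hu.1.mul hv.1, fun x hx => (hu.2.1 x hx).mul (hv.2.1 x hx), fun x hx => ?_, fun j => ?_⟩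
    · refine (hb hu.2.2.1 hv.2.2.1 x hx).trans (mul_le_mul_of_nonneg_right ?_ (rpow_nonneg (norm_nonneg _) _))
      have := mul_nonneg hu.nonneg hv.nonneg
      have h2 : (1:ℝ) ≤ 2 ^ (q+1) := one_le_pow₀ (by norm_num)
      nlinarith
    · have h1 := ih (hu.2.2.2 j) hv.down
      have h2 := ih hu.down (hv.2.2.2 j)
      rw [show r - 1 + s = r + s - 1 by ring] at h1
      rw [show r + (s - 1) = r + s - 1 by ring] at h2
      have h3 := h1.add h2
      rw [show (2:ℝ) ^ q * (A * B) + 2 ^ q * (A * B) = 2 ^ (q+1) * (A * B) by ring] at h3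
      exact h3.congr (pd_meas _ j) fun x hx => (pd_mul (hu.2.1 x hx) (hv.2.1 x hx) j).symm

lemma pd_const (c : ℝ) (j : Fin 2) : pd j (fun _ => c) = fun _ => 0 := by
  ext x; simp [pd]

lemma SS_zero (q : ℕ) : ∀ r : ℝ, SS q r 0 (fun _ => 0) := by
  induction q with
  | zero => exact fun r => ⟨measurable_const, fun x _ => continuousAt_const, by simp⟩
  | succ q ih =>
    refine fun r => ⟨measurable_const, fun x _ => differentiableAt_const _, by simp, fun j => ?_⟩
    rw [pd_const]; exact ih _

lemma SS_const (q : ℕ) (c : ℝ) : SS q 0 |c| (fun _ => c) := by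
  cases q with
  | zero => exact ⟨measurable_const, fun x _ => continuousAt_const, by simp⟩
  | succ q =>
    refine ⟨measurable_const, fun x _ => differentiableAt_const _, by simp, fun j => ?_⟩
    rw [pd_const]; exact (SS_zero _ _).mono (abs_nonneg c)

lemma pd_coord (i j : Fin 2) : pd j (fun x => x i) = fun _ => if i = j then 1 else 0 := by
  ext x
  have : HasFDerivAt (fun x : Fin 2 → ℝ => x i) (ContinuousLinearMap.proj (R := ℝ) (φ := fun _ : Fin 2 => ℝ) i) x :=
    (ContinuousLinearMap.proj (R := ℝ) (φ := fun _ : Fin 2 => ℝ) i).hasFDerivAt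
  unfold pd
  rw [this.fderiv]; simp [Pi.single_apply]

lemma SS_coord (q : ℕ) (i : Fin 2) : SS q 1 1 (fun x => x i) := by
  have hb : ∀ x : Fin 2 → ℝ, x ≠ 0 → |x i| ≤ 1 * ‖x‖ ^ (1:ℝ) := by
    intro x _
    simpa using norm_le_pi_norm x i
  cases q with
  | zero => exact ⟨measurable_pi_apply i, fun x _ => (continuous_apply i).continuousAt, hb⟩
  | succ q =>
    refine ⟨measurable_pi_apply i, fun x _ => by fun_prop, hb, fun j => ?_⟩
    rw [pd_coord, sub_self]
    refine (SS_const q _).mono ?_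
    split_ifs <;> simp

lemma N_pos {x : Fin 2 → ℝ} (hx : x ≠ 0) : 0 < x 0 ^ 2 + x 1 ^ 2 := by
  by_contra h
  have h0 : x 0 = 0 := by nlinarith [sq_nonneg (x 0), sq_nonneg (x 1)]
  have h1 : x 1 = 0 := by nlinarith [sq_nonneg (x 0), sq_nonneg (x 1)]
  apply hx
  ext i; fin_cases i <;> simp [h0, h1]

lemma N_bd {x : Fin 2 → ℝ} : ‖x‖ ^ 2 ≤ x 0 ^ 2 + x 1 ^ 2 ∧ x 0 ^ 2 + x 1 ^ 2 ≤ (2 * ‖x‖) ^ 2 := by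
  have h0 : |x 0| ≤ ‖x‖ := norm_le_pi_norm x 0
  have h1 : |x 1| ≤ ‖x‖ := norm_le_pi_norm x 1
  constructor
  · have : ‖x‖ ≤ √(x 0 ^ 2 + x 1 ^ 2) := by
      rw [pi_norm_le_iff_of_nonneg (sqrt_nonneg _)]
      intro i
      rw [norm_eq_abs]
      apply abs_le_sqrt
      fin_cases i
      · simp; positivity
      · simp; positivity
    calc ‖x‖ ^ 2 ≤ √(x 0 ^ 2 + x 1 ^ 2) ^ 2 := by gcongr
      _ = _ := sq_sqrt (by positivity)
  · nlinarith [sq_abs (x 0), sq_abs (x 1), abs_nonneg (x 0), abs_nonneg (x 1)]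

lemma pd_N (r : ℝ) (j : Fin 2) {x : Fin 2 → ℝ} (hx : x ≠ 0) :
    DifferentiableAt ℝ (fun x : Fin 2 → ℝ => (x 0 ^ 2 + x 1 ^ 2) ^ (r / 2)) x ∧
    pd j (fun x : Fin 2 → ℝ => (x 0 ^ 2 + x 1 ^ 2) ^ (r / 2)) x =
      (r * x j) * (x 0 ^ 2 + x 1 ^ 2) ^ ((r - 2) / 2) := by
  have h0 : HasFDerivAt (fun x : Fin 2 → ℝ => x 0) (ContinuousLinearMap.proj (R := ℝ) (φ := fun _ : Fin 2 => ℝ) 0) x :=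
    (ContinuousLinearMap.proj (R := ℝ) (φ := fun _ : Fin 2 => ℝ) 0).hasFDerivAt
  have h1 : HasFDerivAt (fun x : Fin 2 → ℝ => x 1) (ContinuousLinearMap.proj (R := ℝ) (φ := fun _ : Fin 2 => ℝ) 1) x :=
    (ContinuousLinearMap.proj (R := ℝ) (φ := fun _ : Fin 2 => ℝ) 1).hasFDerivAt
  have h2 := (((h0.pow 2).add (h1.pow 2)).rpow_const (p := r/2) (Or.inl (N_pos hx).ne'))
  refine ⟨h2.differentiableAt, ?_⟩
  unfold pd
  have h3 := h2.fderiv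
  simp only [Pi.add_apply, Pi.pow_apply] at h3
  rw [h3]
  rw [show (r - 2) / 2 = r / 2 - 1 by ring]
  fin_cases j
  · simp; ring
  · simp; ring

lemma SS_N (q : ℕ) : ∀ r : ℝ, ∃ A, SS q r A (fun x => (x 0 ^ 2 + x 1 ^ 2) ^ (r / 2)) := by
  have hm : ∀ r : ℝ, Measurable (fun x : Fin 2 → ℝ => (x 0 ^ 2 + x 1 ^ 2) ^ (r / 2)) := by
    intro r
    have h0 : Measurable fun x : Fin 2 → ℝ => x 0 := measurable_pi_apply 0
    have h1 : Measurable fun x : Fin 2 → ℝ => x 1 := measurable_pi_apply 1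
    exact ((h0.pow_const 2).add (h1.pow_const 2)).pow_const _
  have hb : ∀ r : ℝ, ∀ x : Fin 2 → ℝ, x ≠ 0 → |(x 0 ^ 2 + x 1 ^ 2) ^ (r / 2)| ≤ (1 + 2 ^ r) * ‖x‖ ^ r := by
    intro r x hx
    have hn : 0 < ‖x‖ := norm_pos_iff.mpr hx
    rw [abs_of_pos (rpow_pos_of_pos (N_pos hx) _)]
    refine (rpow_le_add (by positivity) N_bd.1 N_bd.2 (r/2)).trans (le_of_eq ?_)
    rw [← rpow_natCast, ← rpow_natCast, ← rpow_mul hn.le, ← rpow_mul (by positivity)]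
    rw [show ((2:ℕ):ℝ) * (r/2) = r by push_cast; ring, mul_rpow (by norm_num) hn.le]; ring
  induction q with
  | zero => exact fun r => ⟨_, hm r, fun x hx => (pd_N r 0 hx).1.continuousAt, hb r⟩
  | succ q ih =>
    intro r
    obtain ⟨A, hA⟩ := ih (r - 2)
    have h1 : ∀ j : Fin 2, SS q (r - 1) (2 ^ q * ((2 ^ q * (|r| * 1)) * A))
        (pd j (fun x : Fin 2 → ℝ => (x 0 ^ 2 + x 1 ^ 2) ^ (r / 2))) := by
      intro j
      have := ((SS_const q r).mul (SS_coord q j)).mul hA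
      rw [show (0:ℝ) + 1 + (r - 2) = r - 1 by ring] at this
      exact this.congr (pd_meas _ j) fun x hx => (pd_N r j hx).2.symm
    refine ⟨(1 + 2 ^ r) + (2 ^ q * ((2 ^ q * (|r| * 1)) * A)), hm r, fun x hx => (pd_N r 0 hx).1, ?_, ?_⟩
    · intro x hx
      refine (hb r x hx).trans (mul_le_mul_of_nonneg_right ?_ (rpow_nonneg (norm_nonneg _) _))
      linarith [(h1 0).nonneg]
    · intro j
      refine (h1 j).mono ?_
      have : (0:ℝ) < 2 ^ r := rpow_pos_of_pos (by norm_num) r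
      linarith

lemma sOn_eq (α : ℝ) (x : Fin 2 → ℝ) :
    sOn α x = x 0 * x 0 * (x 0 ^ 2 + x 1 ^ 2) ^ ((-(2 + α)) / 2) := by
  have h : 0 ≤ x 0 ^ 2 + x 1 ^ 2 := by positivity
  rw [sOn, euclNorm, Fin.sum_univ_two, sqrt_eq_rpow, ← rpow_mul h, div_eq_mul_inv, ← rpow_neg h]
  ring_nf

lemma SS_s (q : ℕ) (α : ℝ) : ∃ A, SS q (-α) A (sOn α) := by
  obtain ⟨A, hA⟩ := SS_N q (-(2 + α))
  have := ((SS_coord q 0).mul (SS_coord q 0)).mul hA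
  rw [show (1:ℝ) + 1 + -(2 + α) = -α by ring] at this
  refine ⟨2 ^ q * (2 ^ q * (1 * 1) * A), ?_⟩
  rw [show sOn α = _ from funext (sOn_eq α)]
  exact this

lemma pd_cd {q : ℕ} {u : (Fin 2 → ℝ) → ℝ} (hu : ContDiff ℝ ((q + 1 : ℕ) : WithTop ℕ∞) u) (j : Fin 2) :
    ContDiff ℝ (q : WithTop ℕ∞) (pd j u) := by
  have h : ContDiff ℝ (q : WithTop ℕ∞) (fderiv ℝ u) := hu.fderiv_right (by push_cast; rfl)
  exact h.clm_apply contDiff_const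

lemma cd_le {q m : ℕ} {u : (Fin 2 → ℝ) → ℝ} (hu : ContDiff ℝ (q : WithTop ℕ∞) u) (h : m ≤ q) :
    ContDiff ℝ (m : WithTop ℕ∞) u := hu.of_le (by exact_mod_cast h)

lemma cd_diff {q : ℕ} {u : (Fin 2 → ℝ) → ℝ} (hu : ContDiff ℝ ((q + 1 : ℕ) : WithTop ℕ∞) u) :
    Differentiable ℝ u := hu.differentiable (by simp)

/-- vanishing to order `m` at the origin -/
def Flat : ℕ → ((Fin 2 → ℝ) → ℝ) → Prop
  | 0, _ => True
  | m + 1, u => u 0 = 0 ∧ ∀ j, Flat m (pd j u)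

lemma Flat.down {m : ℕ} : ∀ {u : (Fin 2 → ℝ) → ℝ}, Flat (m + 1) u → Flat m u := by
  induction m with
  | zero => exact fun _ => trivial
  | succ m ih => exact fun h => ⟨h.1, fun j => ih (h.2 j)⟩

lemma Flat.add {m : ℕ} : ∀ {u v : (Fin 2 → ℝ) → ℝ}, ContDiff ℝ (m : WithTop ℕ∞) u →
    ContDiff ℝ (m : WithTop ℕ∞) v → Flat m u → Flat m v → Flat m (fun x => u x + v x) := by
  induction m with
  | zero => exact fun _ _ _ _ => trivial
  | succ m ih =>
    intro u v hu hv h1 h2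
    refine ⟨by simp [h1.1, h2.1], fun j => ?_⟩
    have : pd j (fun x => u x + v x) = fun x => pd j u x + pd j v x := by
      ext x
      unfold pd
      rw [fderiv_fun_add (cd_diff hu x) (cd_diff hv x)]; simp
    rw [this]
    exact ih (pd_cd hu j) (pd_cd hv j) (h1.2 j) (h2.2 j)

lemma Flat.mul {m : ℕ} : ∀ {u v : (Fin 2 → ℝ) → ℝ}, ContDiff ℝ (m : WithTop ℕ∞) u →
    ContDiff ℝ (m : WithTop ℕ∞) v → Flat m u → Flat m (fun x => u x * v x) := by
  induction m with
  | zero => exact fun _ _ _ => trivial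
  | succ m ih =>
    intro u v hu hv h1
    refine ⟨by simp [h1.1], fun j => ?_⟩
    have : pd j (fun x => u x * v x) = fun x => pd j u x * v x + u x * pd j v x := by
      ext x
      exact pd_mul (cd_diff hu x) (cd_diff hv x) j
    rw [this]
    have hu' := cd_le hu (Nat.le_succ m)
    have hv' := cd_le hv (Nat.le_succ m)
    exact Flat.add ((pd_cd hu j).mul hv') (hu'.mul (pd_cd hv j)) (ih (pd_cd hu j) hv' (h1.2 j))
      (ih hu' (pd_cd hv j) h1.down)

lemma coord_cd (q : ℕ) (i : Fin 2) : ContDiff ℝ (q : WithTop ℕ∞) (fun x : Fin 2 → ℝ => x i) :=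
  contDiff_apply ℝ ℝ i

lemma Flat.coord {m : ℕ} (i : Fin 2) : ∀ {u : (Fin 2 → ℝ) → ℝ},
    ContDiff ℝ ((m + 1 : ℕ) : WithTop ℕ∞) u →
    Flat m u → Flat (m + 1) (fun x => x i * u x) := by
  induction m with
  | zero => exact fun _ _ => ⟨by simp, fun _ => trivial⟩
  | succ m ih =>
    intro u hu h
    refine ⟨by simp, fun j => ?_⟩
    have : pd j (fun x => x i * u x) = fun x => u x * (if i = j then 1 else 0) + x i * pd j u x := by
      ext x
      rw [pd_mul (cd_diff (coord_cd (m+1) i) x) (cd_diff hu x) j, pd_coord]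
      ring
    rw [this]
    have hu' := cd_le hu (Nat.le_succ (m+1))
    exact Flat.add (hu'.mul contDiff_const) ((coord_cd _ i).mul (pd_cd hu j))
      (h.mul hu' contDiff_const) (ih (pd_cd hu j) (h.2 j))

lemma Flat.scale {m : ℕ} (l : ℝ) : ∀ {u : (Fin 2 → ℝ) → ℝ}, ContDiff ℝ (m : WithTop ℕ∞) u →
    Flat m u → Flat m (fun x => u (l • x)) := by
  induction m with
  | zero => exact fun _ _ => trivial
  | succ m ih =>
    intro u hu h
    refine ⟨by simp [h.1], fun j => ?_⟩
    rw [pd_scale]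
    have h1 : ContDiff ℝ (m : WithTop ℕ∞) (fun x => pd j u (l • x)) :=
      (pd_cd hu j).comp (contDiff_const_smul l)
    have h2 := (ih (pd_cd hu j) (h.2 j)).mul h1 (contDiff_const (c := l))
    simpa only [mul_comm] using h2

lemma Flat.bound {m : ℕ} : ∀ {u : (Fin 2 → ℝ) → ℝ}, ContDiff ℝ (m : WithTop ℕ∞) u → Flat m u →
    ∀ R : ℝ, ∃ A, 0 ≤ A ∧ ∀ x, ‖x‖ ≤ R → |u x| ≤ A * ‖x‖ ^ m := by
  induction m with
  | zero =>
    intro u hu _ R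
    obtain ⟨A, hA⟩ := (isCompact_closedBall (0 : Fin 2 → ℝ) R).exists_bound_of_continuousOn hu.continuous.continuousOn
    refine ⟨max A 0, le_max_right _ _, fun x hx => ?_⟩
    have := hA x (by simpa using hx)
    simpa using Or.inl this
  | succ m ih =>
    intro u hu h R
    obtain ⟨A, hA, h0⟩ := ih (pd_cd hu 0) (h.2 0) R
    obtain ⟨B, hB, h1⟩ := ih (pd_cd hu 1) (h.2 1) R
    refine ⟨A + B, by positivity, fun x hx => ?_⟩
    have h2 : ∀ y ∈ Metric.closedBall (0 : Fin 2 → ℝ) ‖x‖, ‖fderiv ℝ u y‖ ≤ (A + B) * ‖x‖ ^ m := by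
      intro y hy
      have hy' : ‖y‖ ≤ ‖x‖ := by simpa using hy
      refine ContinuousLinearMap.opNorm_le_bound _ (by positivity) fun z => ?_
      rw [pd_fderiv_sum, Fin.sum_univ_two, norm_eq_abs]
      have e0 : |pd 0 u y| ≤ A * ‖x‖ ^ m := (h0 y (hy'.trans hx)).trans (by gcongr)
      have e1 : |pd 1 u y| ≤ B * ‖x‖ ^ m := (h1 y (hy'.trans hx)).trans (by gcongr)
      have z0 : |z 0| ≤ ‖z‖ := norm_le_pi_norm z 0
      have z1 : |z 1| ≤ ‖z‖ := norm_le_pi_norm z 1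
      calc |z 0 * pd 0 u y + z 1 * pd 1 u y| ≤ |z 0| * |pd 0 u y| + |z 1| * |pd 1 u y| := by
            rw [← abs_mul, ← abs_mul]; exact abs_add_le _ _
        _ ≤ ‖z‖ * (A * ‖x‖ ^ m) + ‖z‖ * (B * ‖x‖ ^ m) := by gcongr
        _ = _ := by ring
    have := Convex.norm_image_sub_le_of_norm_fderiv_le (𝕜 := ℝ) (fun y _ => cd_diff hu y) h2
      (convex_closedBall _ _) (x := 0) (y := x) (by simp) (by simp)
    rw [h.1, sub_zero, sub_zero, norm_eq_abs] at this
    rw [pow_succ, ← mul_assoc]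
    exact this

lemma Flat.bd {m : ℕ} {u : (Fin 2 → ℝ) → ℝ} (hu : ContDiff ℝ (m : WithTop ℕ∞) u) (h : Flat m u)
    {R r : ℝ} (hR : ∀ x, R < ‖x‖ → u x = 0) (hr : r ≤ m) :
    ∃ A, ∀ x, x ≠ 0 → |u x| ≤ A * ‖x‖ ^ r := by
  obtain ⟨A, hA, hb⟩ := h.bound hu R
  refine ⟨A * |R| ^ ((m : ℝ) - r), fun x hx => ?_⟩
  have hn : 0 < ‖x‖ := norm_pos_iff.mpr hx
  rcases lt_or_ge R ‖x‖ with h1 | h1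
  · rw [hR x h1]; simp; positivity
  · refine (hb x h1).trans ?_
    rw [mul_assoc]
    gcongr
    calc ‖x‖ ^ m = ‖x‖ ^ ((m:ℝ) - r) * ‖x‖ ^ r := by rw [← rpow_add hn]; simp
      _ ≤ _ := by
        gcongr
        exact h1.trans (le_abs_self R)

lemma Flat.SS {q : ℕ} : ∀ {m : ℕ} {u : (Fin 2 → ℝ) → ℝ} {R r : ℝ}, ContDiff ℝ (q : WithTop ℕ∞) u →
    m ≤ q → Flat m u → (∀ x, R < ‖x‖ → u x = 0) → r ≤ m → ∃ A, SS q r A u := by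
  induction q with
  | zero =>
    intro m u R r hu hm h hR hr
    obtain ⟨A, hA⟩ := h.bd (cd_le hu hm) hR hr
    exact ⟨A, hu.continuous.measurable, fun x _ => hu.continuous.continuousAt, hA⟩
  | succ q ih =>
    intro m u R r hu hm h hR hr
    obtain ⟨A, hA⟩ := h.bd (cd_le hu hm) hR hr
    have key : ∀ j, ∃ A, _root_.SS q (r - 1) A (pd j u) := by
      intro j
      cases m with
      | zero => exact ih (m := 0) (pd_cd hu j) (Nat.zero_le _) trivial (pd_supp hR j) (by push_cast at hr ⊢; linarith)
      | succ m => exact ih (m := m) (pd_cd hu j) (by omega) (h.2 j) (pd_supp hR j) (by push_cast at hr ⊢; linarith)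
    obtain ⟨A0, h0⟩ := key 0
    obtain ⟨A1, h1⟩ := key 1
    refine ⟨max A (max A0 A1), hu.continuous.measurable, fun x _ => cd_diff hu x, fun x hx => ?_, fun j => ?_⟩
    · refine (hA x hx).trans ?_
      gcongr
      exact le_max_left _ _
    · fin_cases j
      · exact h0.mono ((le_max_left _ _).trans (le_max_right _ _))
      · exact h1.mono ((le_max_right _ _).trans (le_max_right _ _))

lemma pd_comm {u : (Fin 2 → ℝ) → ℝ} (hu : ContDiff ℝ ((2 : ℕ) : WithTop ℕ∞) u) :
    pd 0 (pd 1 u) = pd 1 (pd 0 u) := by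
  have hd : Differentiable ℝ (fderiv ℝ u) :=
    (hu.fderiv_right (m := 1) (by norm_num)).differentiable (by simp)
  have key : ∀ i j x, pd i (pd j u) x = fderiv ℝ (fderiv ℝ u) x (Pi.single i 1) (Pi.single j 1) := by
    intro i j x
    unfold pd
    rw [fderiv_clm_apply (hd x) (differentiableAt_const _)]
    simp
  ext x
  rw [key, key]
  exact (hu.contDiffAt.isSymmSndFDerivAt (by simp)).eq _ _

lemma pd_comm_iter (b : ℕ) : ∀ {u : (Fin 2 → ℝ) → ℝ}, ContDiff ℝ ((b + 1 : ℕ) : WithTop ℕ∞) u →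
    (pd 1)^[b] (pd 0 u) = pd 0 ((pd 1)^[b] u) := by
  induction b with
  | zero => exact fun _ => rfl
  | succ b ih =>
    intro u hu
    rw [Function.iterate_succ_apply, Function.iterate_succ_apply, ← pd_comm (cd_le hu (by omega)), ih (pd_cd hu 1)]

lemma Flat_of_D {m : ℕ} : ∀ {u : (Fin 2 → ℝ) → ℝ}, ContDiff ℝ (m : WithTop ℕ∞) u →
    (∀ a b, a + b < m → (pd 0)^[a] ((pd 1)^[b] u) 0 = 0) → Flat m u := by
  induction m with
  | zero => exact fun _ _ => trivial
  | succ m ih =>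
    intro u hu h
    refine ⟨h 0 0 (by omega), fun j => ih (pd_cd hu j) fun a b hab => ?_⟩
    fin_cases j
    · have := h (a+1) b (by omega)
      rw [Function.iterate_succ_apply] at this
      rw [← this, ← pd_comm_iter b (cd_le hu (by omega))]
      rfl
    · exact h a (b+1) (by omega)

/-- monomials -/
def M (a b : ℕ) (x : Fin 2 → ℝ) : ℝ := x 0 ^ a * x 1 ^ b

lemma M_cd (q : WithTop ℕ∞) (a b : ℕ) : ContDiff ℝ q (M a b) :=
  ((contDiff_apply ℝ ℝ 0).pow a).mul ((contDiff_apply ℝ ℝ 1).pow b)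

lemma pd0_M (a b : ℕ) : pd 0 (M a b) = fun x => (a : ℝ) * M (a - 1) b x := by
  ext x
  have h0 : HasFDerivAt (fun x : Fin 2 → ℝ => x 0) (ContinuousLinearMap.proj (R := ℝ) (φ := fun _ : Fin 2 => ℝ) 0) x :=
    (ContinuousLinearMap.proj (R := ℝ) (φ := fun _ : Fin 2 => ℝ) 0).hasFDerivAt
  have h1 : HasFDerivAt (fun x : Fin 2 → ℝ => x 1) (ContinuousLinearMap.proj (R := ℝ) (φ := fun _ : Fin 2 => ℝ) 1) x :=
    (ContinuousLinearMap.proj (R := ℝ) (φ := fun _ : Fin 2 => ℝ) 1).hasFDerivAt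
  have h2 : HasFDerivAt (M a b) _ x := (h0.pow a).mul (h1.pow b)
  unfold pd
  rw [h2.fderiv]
  simp [M]; ring

lemma pd1_M (a b : ℕ) : pd 1 (M a b) = fun x => (b : ℝ) * M a (b - 1) x := by
  ext x
  have h0 : HasFDerivAt (fun x : Fin 2 → ℝ => x 0) (ContinuousLinearMap.proj (R := ℝ) (φ := fun _ : Fin 2 => ℝ) 0) x :=
    (ContinuousLinearMap.proj (R := ℝ) (φ := fun _ : Fin 2 => ℝ) 0).hasFDerivAt
  have h1 : HasFDerivAt (fun x : Fin 2 → ℝ => x 1) (ContinuousLinearMap.proj (R := ℝ) (φ := fun _ : Fin 2 => ℝ) 1) x :=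
    (ContinuousLinearMap.proj (R := ℝ) (φ := fun _ : Fin 2 => ℝ) 1).hasFDerivAt
  have h2 : HasFDerivAt (M a b) _ x := (h0.pow a).mul (h1.pow b)
  unfold pd
  rw [h2.fderiv]
  simp [M]; ring

lemma pd_cmul (c : ℝ) (u : (Fin 2 → ℝ) → ℝ) (j : Fin 2) :
    pd j (fun x => c * u x) = fun x => c * pd j u x := by
  ext x
  unfold pd
  have : (fun x => c * u x) = c • u := rfl
  rw [this, fderiv_const_smul_field]; rfl

lemma pd_iter_cmul (n : ℕ) (c : ℝ) (j : Fin 2) : ∀ (u : (Fin 2 → ℝ) → ℝ),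
    (pd j)^[n] (fun x => c * u x) = fun x => c * (pd j)^[n] u x := by
  induction n with
  | zero => exact fun _ => rfl
  | succ n ih => intro u; rw [Function.iterate_succ_apply, pd_cmul, ih]; rfl

lemma pd0_iter_M (n : ℕ) : ∀ a b, (pd 0)^[n] (M a b) = fun x => (a.descFactorial n : ℝ) * M (a - n) b x := by
  induction n with
  | zero => intro a b; ext x; simp
  | succ n ih =>
    intro a b
    rw [Function.iterate_succ_apply', ih, pd_cmul, pd0_M]
    ext x
    rw [Nat.descFactorial_succ, Nat.sub_sub]; push_cast; ring

lemma pd1_iter_M (n : ℕ) : ∀ a b, (pd 1)^[n] (M a b) = fun x => (b.descFactorial n : ℝ) * M a (b - n) x := by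
  induction n with
  | zero => intro a b; ext x; simp
  | succ n ih =>
    intro a b
    rw [Function.iterate_succ_apply', ih, pd_cmul, pd1_M]
    ext x
    rw [Nat.descFactorial_succ, Nat.sub_sub]; push_cast; ring

lemma D_M (a b c d : ℕ) : (pd 0)^[a] ((pd 1)^[b] (M c d)) 0 =
    if (c, d) = (a, b) then (a.factorial : ℝ) * b.factorial else 0 := by
  rw [pd1_iter_M, pd_iter_cmul, pd0_iter_M]
  split_ifs with h
  · obtain ⟨rfl, rfl⟩ := Prod.mk.inj h
    simp [M, Nat.descFactorial_self]; ring
  · simp only [M, Pi.zero_apply]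
    rcases lt_trichotomy c a with h1 | h1 | h1
    · simp [Nat.descFactorial_eq_zero_iff_lt.mpr h1]
    · rcases lt_trichotomy d b with h2 | h2 | h2
      · simp [Nat.descFactorial_eq_zero_iff_lt.mpr h2]
      · simp [h1, h2] at h
      · simp [zero_pow (show d - b ≠ 0 by omega)]
    · simp [zero_pow (show c - a ≠ 0 by omega)]

lemma pd_iter_lin {ι : Type} (s : Finset ι) (t : ι → ℝ) (j : Fin 2) (n : ℕ) :
    ∀ (u : (Fin 2 → ℝ) → ℝ) (f : ι → (Fin 2 → ℝ) → ℝ), ContDiff ℝ (n : WithTop ℕ∞) u →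
    (∀ i, ContDiff ℝ (n : WithTop ℕ∞) (f i)) →
    (pd j)^[n] (fun x => u x - ∑ i ∈ s, t i * f i x) =
      fun x => (pd j)^[n] u x - ∑ i ∈ s, t i * (pd j)^[n] (f i) x := by
  induction n with
  | zero => exact fun _ _ _ _ => rfl
  | succ n ih =>
    intro u f hu hf
    have : pd j (fun x => u x - ∑ i ∈ s, t i * f i x) = fun x => pd j u x - ∑ i ∈ s, t i * pd j (f i) x := by
      ext x
      have hd : ∀ i ∈ s, DifferentiableAt ℝ (fun x => t i * f i x) x := fun i _ =>
        (cd_diff (hf i) x).const_mul _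
      unfold pd
      rw [fderiv_fun_sub (cd_diff hu x) (DifferentiableAt.fun_sum hd), fderiv_fun_sum hd]
      simp only [sub_apply, sum_apply]
      congr 1
      refine Finset.sum_congr rfl fun i _ => ?_
      rw [fderiv_const_mul (cd_diff (hf i) x)]; rfl
    rw [Function.iterate_succ_apply, this, ih _ _ (pd_cd hu j) fun i => pd_cd (hf i) j]
    rfl

lemma pd_iter_cd {q : ℕ} (n : ℕ) (j : Fin 2) : ∀ {u : (Fin 2 → ℝ) → ℝ},
    ContDiff ℝ ((q + n : ℕ) : WithTop ℕ∞) u → ContDiff ℝ (q : WithTop ℕ∞) ((pd j)^[n] u) := by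
  induction n with
  | zero => exact fun h => h
  | succ n ih => intro u h; rw [Function.iterate_succ_apply]; exact ih (pd_cd h j)

lemma taylor {m : ℕ} {u : (Fin 2 → ℝ) → ℝ} (hu : ContDiff ℝ (m : WithTop ℕ∞) u) :
    ∃ (s : Finset (ℕ × ℕ)) (t : ℕ × ℕ → ℝ), (∀ k ∈ s, k.1 + k.2 < m) ∧
      Flat m (fun x => u x - ∑ k ∈ s, t k * M k.1 k.2 x) := by
  obtain ⟨s, hs⟩ : ∃ s : Finset (ℕ × ℕ), ∀ k, k ∈ s ↔ k.1 + k.2 < m := by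
    refine ⟨(Finset.range m ×ˢ Finset.range m).filter fun k => k.1 + k.2 < m, fun k => ?_⟩
    simp only [Finset.mem_filter, Finset.mem_product, Finset.mem_range]
    omega
  refine ⟨s, fun k => (pd 0)^[k.1] ((pd 1)^[k.2] u) 0 / (k.1.factorial * k.2.factorial), fun k hk => (hs k).mp hk, ?_⟩
  refine Flat_of_D (hu.sub (ContDiff.sum fun k _ => contDiff_const.mul (M_cd _ _ _))) fun a b hab => ?_
  rw [pd_iter_lin _ _ _ b _ _ (cd_le hu (by omega)) fun k => M_cd _ _ _,
    pd_iter_lin _ _ _ a _ _ (pd_iter_cd b 1 (cd_le hu (by omega))) fun k => pd_iter_cd b 1 (M_cd _ _ _)]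
  simp only [D_M]
  rw [Finset.sum_eq_single (a, b)]
  · simp
    field_simp
    simp
  · intro k _ hk
    rw [if_neg (by simpa using hk)]; simp
  · intro h
    exact absurd ((hs _).mpr hab) h

/-- quadrature error -/
noncomputable def EE (α h : ℝ) (u : (Fin 2 → ℝ) → ℝ) : ℝ :=
  (∫ x, u x * sOn α x) - trap h (fun x => u x * sOn α x)

/-- continuous with bounded support -/
def CS (u : (Fin 2 → ℝ) → ℝ) : Prop := Continuous u ∧ ∃ R : ℝ, ∀ x, R < ‖x‖ → u x = 0

lemma CS.mul {u v : (Fin 2 → ℝ) → ℝ} (hu : CS u) (hv : Continuous v) : CS (fun x => u x * v x) := by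
  obtain ⟨R, hR⟩ := hu.2
  exact ⟨hu.1.mul hv, R, fun x hx => by simp [hR x hx]⟩

lemma CS.cmul {u : (Fin 2 → ℝ) → ℝ} (hu : CS u) (c : ℝ) : CS (fun x => c * u x) := by
  obtain ⟨R, hR⟩ := hu.2
  exact ⟨continuous_const.mul hu.1, R, fun x hx => by simp [hR x hx]⟩

lemma CS.add {u v : (Fin 2 → ℝ) → ℝ} (hu : CS u) (hv : CS v) : CS (fun x => u x + v x) := by
  obtain ⟨R, hR⟩ := hu.2
  obtain ⟨S, hS⟩ := hv.2
  exact ⟨hu.1.add hv.1, max R S, fun x hx => by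
    simp [hR x ((le_max_left _ _).trans_lt hx), hS x ((le_max_right _ _).trans_lt hx)]⟩

lemma CS_of {u : (Fin 2 → ℝ) → ℝ} (hu : Continuous u) (hc : HasCompactSupport u) : CS u := by
  obtain ⟨R, hR⟩ := hc.isBounded.subset_closedBall 0
  refine ⟨hu, R, fun x hx => ?_⟩
  by_contra h
  have := hR (subset_tsupport u h)
  simp at this
  linarith

lemma CS.scale {u : (Fin 2 → ℝ) → ℝ} (hu : CS u) {l : ℝ} (hl : 0 < l) : CS (fun x => u (l • x)) := by
  obtain ⟨R, hR⟩ := hu.2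
  refine ⟨hu.1.comp (continuous_const_smul l), R / l, fun x hx => hR _ ?_⟩
  rw [norm_smul, norm_of_nonneg hl.le]
  rwa [div_lt_iff₀' hl] at hx

lemma CS.int {u : (Fin 2 → ℝ) → ℝ} (hu : CS u) {α : ℝ} (hα : α < 2) :
    Integrable (fun x => u x * sOn α x) := by
  obtain ⟨R, hR⟩ := hu.2
  obtain ⟨A, hA⟩ := Flat.SS (q := 0) (m := 0) (r := 0) (contDiff_zero.mpr hu.1) le_rfl trivial hR (by simp)
  obtain ⟨B, hB⟩ := SS_s 0 α
  exact (hA.mul hB).integrable (R := R) (by linarith) fun x hx => by simp [hR x hx]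

lemma CS.sum {u : (Fin 2 → ℝ) → ℝ} (hu : CS u) {h : ℝ} (hh : 0 < h) (α : ℝ) :
    Summable (fun β : {β : Fin 2 → ℤ // β ≠ 0} =>
      u (fun j => (β.1 j : ℝ) * h) * sOn α (fun j => (β.1 j : ℝ) * h)) := by
  obtain ⟨R, hR⟩ := hu.2
  refine summ' (fun β => u (fun j => (β j : ℝ) * h) * sOn α (fun j => (β j : ℝ) * h)) (R / h) fun β hβ => ?_
  have : (fun j => (β j : ℝ) * h) = h • cst β := by ext j; simp [cst, mul_comm]
  rw [this, hR, zero_mul]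
  rw [norm_smul, cst_norm, norm_of_nonneg hh.le]
  rwa [div_lt_iff₀' hh] at hβ

lemma EE_add {u v : (Fin 2 → ℝ) → ℝ} (hu : CS u) (hv : CS v) {α h : ℝ} (hα : α < 2) (hh : 0 < h) :
    EE α h (fun x => u x + v x) = EE α h u + EE α h v := by
  unfold EE trap
  simp only [add_mul]
  rw [integral_add (hu.int hα) (hv.int hα), (hu.sum hh α).tsum_add (hv.sum hh α)]
  ring

lemma EE_cmul (u : (Fin 2 → ℝ) → ℝ) (α h c : ℝ) :
    EE α h (fun x => c * u x) = c * EE α h u := by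
  unfold EE trap
  simp only [mul_assoc]
  rw [integral_const_mul, tsum_mul_left]
  ring

lemma CS_sum {ι : Type} (s : Finset ι) (t : ι → ℝ) (f : ι → (Fin 2 → ℝ) → ℝ) (hf : ∀ i, CS (f i)) :
    CS (fun x => ∑ i ∈ s, t i * f i x) := by
  classical
  induction s using Finset.induction_on with
  | empty => exact ⟨by simpa using continuous_const, 0, by simp⟩
  | insert a s ha ih =>
    simp only [Finset.sum_insert ha]
    exact ((hf a).cmul _).add ih

lemma EE_sum {ι : Type} (s : Finset ι) (t : ι → ℝ) (f : ι → (Fin 2 → ℝ) → ℝ) (hf : ∀ i, CS (f i))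
    {α h : ℝ} (hα : α < 2) (hh : 0 < h) :
    EE α h (fun x => ∑ i ∈ s, t i * f i x) = ∑ i ∈ s, t i * EE α h (f i) := by
  classical
  induction s using Finset.induction_on with
  | empty => simp [EE, trap]
  | insert a s ha ih =>
    simp only [Finset.sum_insert ha]
    rw [EE_add ((hf a).cmul _) (CS_sum s t f hf) hα hh, EE_cmul, ih]

lemma EE_flat {q m : ℕ} {α : ℝ} (hα0 : 0 < α) (hα2 : α < 2) {u : (Fin 2 → ℝ) → ℝ} (hc : CS u)
    (hu : ContDiff ℝ (q : WithTop ℕ∞) u) (hm : m + 2 ≤ q) (h : Flat m u) :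
    ∃ C, 0 < C ∧ ∀ h : ℝ, 0 < h → |EE α h u| ≤ C * h ^ ((m : ℝ) + 2 - α) := by
  obtain ⟨R, hR⟩ := hc.2
  obtain ⟨A, hA⟩ := h.SS (r := m) hu (by omega) hR le_rfl
  obtain ⟨B, hB⟩ := SS_s q α
  have hq : (m : ℝ) + 2 ≤ q := by exact_mod_cast hm
  have h0 : (0:ℝ) ≤ m := Nat.cast_nonneg m
  obtain ⟨C, hC, hb⟩ := Eh (R := R) (by linarith) (by linarith) (hA.mul hB) (fun x hx => by simp [hR x hx])
  refine ⟨C, hC, fun h hh => ?_⟩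
  have := hb h hh
  rwa [show (m:ℝ) + -α + 2 = m + 2 - α by ring] at this

lemma sOn_scale (α : ℝ) {l : ℝ} (hl : 0 < l) (x : Fin 2 → ℝ) : sOn α x = l ^ α * sOn α (l • x) := by
  rw [sOn_eq, sOn_eq]
  simp only [Pi.smul_apply, smul_eq_mul]
  rw [show (l * x 0) ^ 2 + (l * x 1) ^ 2 = l ^ 2 * (x 0 ^ 2 + x 1 ^ 2) by ring,
    mul_rpow (by positivity) (by positivity), ← rpow_natCast l 2, ← rpow_mul hl.le]
  have : l ^ α * (l * l * l ^ (((2:ℕ):ℝ) * (-(2 + α) / 2))) = 1 := by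
    have : l * l = l ^ (2:ℝ) := by rw [rpow_two]; ring
    rw [this, ← rpow_add hl, ← rpow_add hl]
    rw [← rpow_zero l]; congr 1; push_cast; ring
  linear_combination (-(x 0 * x 0 * (x 0 ^ 2 + x 1 ^ 2) ^ (-(2 + α) / 2))) * this

lemma EE_scale (α h : ℝ) {l : ℝ} (hl : 0 < l) (u : (Fin 2 → ℝ) → ℝ) :
    EE α h (fun x => u (l • x)) = l ^ (α - 2) * EE α (l * h) u := by
  have e : l ^ α = l ^ (α - 2) * l ^ 2 := by
    rw [← rpow_natCast, ← rpow_add hl]; congr 1; push_cast; ring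
  have h1 : (fun x => u (l • x) * sOn α x) = fun x => l ^ α * (fun y => u y * sOn α y) (l • x) := by
    ext x; simp only [sOn_scale α hl x]; ring
  unfold EE
  rw [h1, integral_const_mul, Measure.integral_comp_smul volume (fun y => u y * sOn α y) l]
  have h2 : trap h (fun x => l ^ α * (fun y => u y * sOn α y) (l • x)) =
      l ^ (α - 2) * trap (l * h) (fun y => u y * sOn α y) := by
    unfold trap
    rw [tsum_mul_left]
    have : ∀ β : {β : Fin 2 → ℤ // β ≠ 0}, (l • fun j => (β.1 j : ℝ) * h) = fun j => (β.1 j : ℝ) * (l * h) := by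
      intro β; ext j; simp; ring
    simp only [this]
    rw [e]; ring
  rw [h2, e]
  have : |(l ^ Module.finrank ℝ (Fin 2 → ℝ))⁻¹| = (l ^ 2)⁻¹ := by
    rw [abs_of_pos (by positivity)]; simp
  rw [this, smul_eq_mul, mul_sub]
  congr 1
  field_simp

/-- sign change of coordinates -/
def sg (ε : Fin 2 → ℤˣ) (x : Fin 2 → ℝ) : Fin 2 → ℝ := fun j => ((ε j : ℤ) : ℝ) * x j

lemma eps_sq (e : ℤˣ) : (((e : ℤ) : ℝ)) * ((e : ℤ) : ℝ) = 1 := by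
  rcases Int.units_eq_one_or e with h | h <;> simp [h]

lemma sg_inv (ε : Fin 2 → ℤˣ) : Function.Involutive (sg ε) := by
  intro x; ext j
  simp only [sg]
  rw [← mul_assoc, eps_sq, one_mul]

lemma sg_sq (ε : Fin 2 → ℤˣ) (x : Fin 2 → ℝ) (j : Fin 2) : sg ε x j ^ 2 = x j ^ 2 := by
  simp only [sg]
  rw [mul_pow, sq, eps_sq, one_mul]

lemma sg_mp (ε : Fin 2 → ℤˣ) : MeasurePreserving (sg ε) := by
  apply volume_preserving_pi (f := fun j x => ((ε j : ℤ) : ℝ) * x)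
  intro i
  rcases Int.units_eq_one_or (ε i) with h | h
  · have := MeasurePreserving.id (volume : Measure ℝ)
    simp only [h, Units.val_one, Int.cast_one, one_mul]
    exact this
  · simpa [h] using Measure.measurePreserving_neg (volume : Measure ℝ)

lemma sOn_sg (ε : Fin 2 → ℤˣ) (α : ℝ) (x : Fin 2 → ℝ) : sOn α (sg ε x) = sOn α x := by
  unfold sOn euclNorm
  simp only [sg_sq]

lemma EE_sg (ε : Fin 2 → ℤˣ) (α h : ℝ) (u : (Fin 2 → ℝ) → ℝ) :
    EE α h (fun x => u (sg ε x)) = EE α h u := by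
  have h1 : (fun x => u (sg ε x) * sOn α x) = fun x => (fun y => u y * sOn α y) (sg ε x) := by
    ext x; simp only [sOn_sg]
  unfold EE
  rw [h1]
  congr 1
  · exact (sg_mp ε).integral_comp' (f := MeasurableEquiv.ofInvolutive (sg ε) (sg_inv ε) (sg_mp ε).measurable)
      (fun y => u y * sOn α y)
  · unfold trap
    congr 1
    have hinv : ∀ β : Fin 2 → ℤ, (fun j => (ε j : ℤ) * ((ε j : ℤ) * β j)) = β := by
      intro β; ext j
      rw [← mul_assoc, ← Units.val_mul, Int.units_mul_self]; simp
    have hne : ∀ β : Fin 2 → ℤ, β ≠ 0 → (fun j => (ε j : ℤ) * β j) ≠ 0 := by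
      intro β hβ h0
      apply hβ
      rw [← hinv β]
      ext j
      rw [show (ε j : ℤ) * β j = 0 from congrFun h0 j]; simp
    let e : {β : Fin 2 → ℤ // β ≠ 0} ≃ {β : Fin 2 → ℤ // β ≠ 0} :=
      { toFun := fun β => ⟨fun j => (ε j : ℤ) * β.1 j, hne _ β.2⟩
        invFun := fun β => ⟨fun j => (ε j : ℤ) * β.1 j, hne _ β.2⟩
        left_inv := fun β => Subtype.ext (hinv β.1)
        right_inv := fun β => Subtype.ext (hinv β.1) }
    rw [← e.tsum_eq (fun β => (fun x => u x * sOn α x) fun j => (β.1 j : ℝ) * h)]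
    refine tsum_congr fun β => ?_
    have : sg ε (fun j => (β.1 j : ℝ) * h) = fun j => ((e β).1 j : ℝ) * h := by
      ext j; simp [sg, e]; ring
    beta_reduce
    rw [this]

lemma lim_exists (k : ℕ) (hk : 1 ≤ k) (c : ℝ → ℝ)
    (hc : ∀ l : ℝ, 0 < l → ∃ C, ∀ h : ℝ, 0 < h → |c h - c (l * h)| ≤ C * h ^ k) :
    ∃ cb C : ℝ, 0 < C ∧ ∀ h : ℝ, 0 < h → |c h - cb| ≤ C * h ^ k := by
  obtain ⟨C, hC⟩ := hc (1/2) (by norm_num)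
  have hC0 : 0 ≤ C := by simpa using (abs_nonneg _).trans (hC 1 one_pos)
  -- along the dyadic sequence
  have hd : ∀ h : ℝ, 0 < h → ∀ n : ℕ, dist (c ((1/2)^n * h)) (c ((1/2)^(n+1) * h)) ≤ (C * h ^ k) / 2 / 2 ^ n * 2 := by
    intro h hh n
    have := hC ((1/2)^n * h) (by positivity)
    rw [dist_eq, pow_succ' _ n, mul_assoc]
    refine this.trans ?_
    rw [mul_pow, ← pow_mul, mul_comm n k, pow_mul]
    have h1 : (((1:ℝ)/2)^k)^n ≤ (1/2)^n := by
      gcongr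
      exact pow_le_of_le_one (by norm_num) (by norm_num) (by omega)
    calc C * ((((1:ℝ)/2)^k)^n * h ^ k) ≤ C * ((1/2)^n * h ^ k) := by gcongr
      _ = _ := by rw [div_pow, one_pow]; field_simp
  have hd' : ∀ h : ℝ, 0 < h → ∀ n : ℕ, dist (c ((1/2)^n * h)) (c ((1/2)^(n+1) * h)) ≤ (2 * C * h ^ k) / 2 / 2 ^ n := by
    intro h hh n
    refine (hd h hh n).trans (le_of_eq ?_)
    ring
  have hlim : ∀ h : ℝ, 0 < h → ∃ L, Filter.Tendsto (fun n : ℕ => c ((1/2)^n * h)) Filter.atTop (nhds L) :=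
    fun h hh => cauchySeq_tendsto_of_complete (cauchySeq_of_le_geometric_two (hd' h hh))
  obtain ⟨L, hL⟩ := hlim 1 one_pos
  refine ⟨L, 2 * C + 1, by linarith, fun h hh => ?_⟩
  have hL' : Filter.Tendsto (fun n : ℕ => c ((1/2)^n * h)) Filter.atTop (nhds L) := by
    obtain ⟨C', hC'⟩ := hc h hh
    have h0 : Filter.Tendsto (fun n : ℕ => c ((1/2)^n * 1) - c (h * ((1/2)^n * 1))) Filter.atTop (nhds 0) := by
      refine squeeze_zero_norm (fun n => hC' ((1/2)^n * 1) (by positivity)) ?_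
      have : Filter.Tendsto (fun n : ℕ => ((1:ℝ)/2)^n * 1) Filter.atTop (nhds 0) := by
        simpa using tendsto_pow_atTop_nhds_zero_of_lt_one (r := (1:ℝ)/2) (by norm_num) (by norm_num)
      have := (this.pow k).const_mul C'
      rwa [zero_pow (by omega), mul_zero] at this
    have := hL.sub h0
    simp only [sub_zero, sub_sub_cancel] at this
    refine this.congr fun n => ?_
    congr 1; ring
  have := dist_le_of_le_geometric_two_of_tendsto₀ (hd' h hh) hL'
  rw [dist_eq] at this
  simp only [pow_zero, one_mul] at this
  refine this.trans ?_
  have : 0 < h ^ k := by positivity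
  nlinarith

lemma newton_ne (a n : ℕ) : (∏ k ∈ Finset.range a, (Polynomial.X - Polynomial.C ((k:ℝ)^2))).eval ((n:ℝ)^2) ≠ 0 ↔ a ≤ n := by
  rw [Polynomial.eval_prod, Finset.prod_ne_zero_iff]
  simp only [Finset.mem_range, Polynomial.eval_sub, Polynomial.eval_X, Polynomial.eval_C]
  constructor
  · intro h
    by_contra hn
    exact h n (by omega) (sub_self _)
  · intro h k hk
    have h1 : (k:ℝ) < n := by exact_mod_cast (by omega : k < n)
    have h2 : (0:ℝ) ≤ k := Nat.cast_nonneg k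
    nlinarith

lemma newton_deg (a : ℕ) : (∏ k ∈ Finset.range a, (Polynomial.X - Polynomial.C ((k:ℝ)^2))).natDegree = a := by
  rw [Polynomial.natDegree_finsetProd_X_sub_C_eq_card]; simp

lemma vand {N p : ℕ} (ξ : Fin N → ℕ × ℕ) (hinj : Function.Injective ξ) (hmem : ∀ i, (ξ i).1 + (ξ i).2 ≤ p)
    (w : Fin N → ℝ)
    (hw : ∀ a b : ℕ, a + b ≤ p → ∑ j, w j * ((((ξ j).1 : ℝ)^2)^a * (((ξ j).2 : ℝ)^2)^b) = 0) : w = 0 := by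
  have hpoly : ∀ f g : Polynomial ℝ, f.natDegree + g.natDegree ≤ p →
      ∑ j, w j * (f.eval (((ξ j).1 : ℝ)^2) * g.eval (((ξ j).2 : ℝ)^2)) = 0 := by
    intro f g hfg
    have : ∀ j, w j * (f.eval (((ξ j).1 : ℝ)^2) * g.eval (((ξ j).2 : ℝ)^2)) =
        ∑ a ∈ Finset.range (f.natDegree + 1), ∑ b ∈ Finset.range (g.natDegree + 1),
          f.coeff a * g.coeff b * (w j * ((((ξ j).1 : ℝ)^2)^a * (((ξ j).2 : ℝ)^2)^b)) := by
      intro j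
      rw [Polynomial.eval_eq_sum_range, Polynomial.eval_eq_sum_range, Finset.sum_mul_sum, Finset.mul_sum]
      refine Finset.sum_congr rfl fun a _ => ?_
      rw [Finset.mul_sum]
      refine Finset.sum_congr rfl fun b _ => ?_
      ring
    rw [Finset.sum_congr rfl fun j _ => this j, Finset.sum_comm]
    refine Finset.sum_eq_zero fun a ha => ?_
    rw [Finset.sum_comm]
    refine Finset.sum_eq_zero fun b hb => ?_
    rw [← Finset.mul_sum, hw a b, mul_zero]
    simp at ha hb; omega
  have main : ∀ n : ℕ, ∀ j, p - ((ξ j).1 + (ξ j).2) = n → w j = 0 := by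
    intro n
    induction n using Nat.strong_induction_on with
    | _ n ih =>
      intro j0 hj0
      have h := hpoly (∏ k ∈ Finset.range (ξ j0).1, (Polynomial.X - Polynomial.C ((k:ℝ)^2)))
        (∏ k ∈ Finset.range (ξ j0).2, (Polynomial.X - Polynomial.C ((k:ℝ)^2)))
        (by rw [newton_deg, newton_deg]; exact hmem j0)
      rw [Finset.sum_eq_single j0] at h
      · have h1 := (newton_ne (ξ j0).1 (ξ j0).1).mpr le_rfl
        have h2 := (newton_ne (ξ j0).2 (ξ j0).2).mpr le_rfl
        exact (mul_eq_zero.mp h).resolve_right (mul_ne_zero h1 h2)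
      · intro j _ hj
        by_cases h1 : (ξ j0).1 ≤ (ξ j).1
        · by_cases h2 : (ξ j0).2 ≤ (ξ j).2
          · have hne : ξ j ≠ ξ j0 := fun h => hj (hinj h)
            have : w j = 0 := by
              refine ih _ ?_ j rfl
              have := hmem j
              have : ¬ ((ξ j).1 = (ξ j0).1 ∧ (ξ j).2 = (ξ j0).2) := fun h => hne (Prod.ext h.1 h.2)
              omega
            rw [this, zero_mul]
          · have := (newton_ne (ξ j0).2 (ξ j).2).not.mpr h2
            rw [not_not] at this
            rw [this]; simp
        · have := (newton_ne (ξ j0).1 (ξ j).1).not.mpr h1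
          rw [not_not] at this
          rw [this]; simp
      · simp
  ext j
  exact main _ j rfl

lemma Gon_sq {γ : ℕ × ℕ} {β : ℤ × ℤ} (h : β ∈ Gon γ) :
    (β.1 : ℝ)^2 = (γ.1 : ℝ)^2 ∧ (β.2 : ℝ)^2 = (γ.2 : ℝ)^2 := by
  simp only [Gon, Finset.mem_insert, Finset.mem_singleton] at h
  rcases h with rfl | rfl | rfl | rfl <;> simp

lemma K_inv {N p : ℕ} (ξ : Fin N → ℕ × ℕ) (hinj : Function.Injective ξ) (hmem : ∀ i, (ξ i).1 + (ξ i).2 ≤ p)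
    (hsurj : ∀ γ : ℕ × ℕ, γ.1 + γ.2 ≤ p → ∃ i, ξ i = γ)
    (K : Matrix (Fin N) (Fin N) ℝ)
    (hK : ∀ i j, K i j = ∑ β ∈ Gon (ξ j),
      (β.1 : ℝ) ^ (2 * (ξ i).1) * (β.2 : ℝ) ^ (2 * (ξ i).2)) : IsUnit K.det := by
  rw [isUnit_iff_ne_zero]
  intro h0
  obtain ⟨v, hv, hKv⟩ := Matrix.exists_mulVec_eq_zero_iff.mpr h0
  apply hv
  have hcard : ∀ j, ((Gon (ξ j)).card : ℝ) ≠ 0 := by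
    intro j
    have : (Gon (ξ j)).Nonempty := ⟨(((ξ j).1 : ℤ), ((ξ j).2 : ℤ)), by simp [Gon]⟩
    exact_mod_cast this.card_ne_zero
  have := vand ξ hinj hmem (fun j => (Gon (ξ j)).card * v j) (by
    intro a b hab
    obtain ⟨i, hi⟩ := hsurj (a, b) hab
    have h1 := congrFun hKv i
    rw [Matrix.mulVec, dotProduct] at h1
    rw [← show (0 : Fin N → ℝ) i = 0 from rfl, ← h1]
    refine Finset.sum_congr rfl fun j _ => ?_
    rw [hK, hi]
    have : ∀ β ∈ Gon (ξ j), (β.1 : ℝ) ^ (2 * a) * (β.2 : ℝ) ^ (2 * b) =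
        (((ξ j).1 : ℝ)^2)^a * (((ξ j).2 : ℝ)^2)^b := by
      intro β hβ
      rw [pow_mul, pow_mul, (Gon_sq hβ).1, (Gon_sq hβ).2]
    rw [Finset.sum_congr rfl this, Finset.sum_const, nsmul_eq_mul]
    ring)
  ext j
  have := congrFun this j
  simpa [hcard j] using this

lemma Flat.M_mul {m : ℕ} {u : (Fin 2 → ℝ) → ℝ} (hu : ∀ q : ℕ, ContDiff ℝ (q : WithTop ℕ∞) u)
    (h : Flat m u) (a b : ℕ) : Flat (m + (a + b)) (fun x => M a b x * u x) := by
  induction a with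
  | zero =>
    induction b with
    | zero => simpa [M] using h
    | succ b ih =>
      have := ih.coord 1 ((M_cd _ 0 b).mul (hu _))
      have e : (fun x => M 0 (b+1) x * u x) = fun x => x 1 * (M 0 b x * u x) := by
        ext x; simp only [M]; ring
      rw [e]; exact this
  | succ a ih =>
    have := ih.coord 0 ((M_cd _ a b).mul (hu _))
    have e : (fun x => M (a+1) b x * u x) = fun x => x 0 * (M a b x * u x) := by
      ext x; simp only [M]; ring
    rw [e, show m + (a + 1 + b) = m + (a + b) + 1 by ring]; exact this

lemma c_lim {p : ℕ} {α : ℝ} (hα0 : 0 < α) (hα2 : α < 2) {g : (Fin 2 → ℝ) → ℝ}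
    (hg : ∀ q : ℕ, ContDiff ℝ (q : WithTop ℕ∞) g) (hgc : CS g)
    (hfl : Flat (2 * p + 2) (fun x => g x - 1)) (a b : ℕ) :
    ∃ cb C : ℝ, 0 < C ∧ ∀ h : ℝ, 0 < h →
      |h ^ (-((a : ℝ) + b + 2 - α)) * EE α h (fun x => g x * M a b x) - cb| ≤ C * h ^ (2 * p + 2) := by
  refine lim_exists (2 * p + 2) (by omega) (fun h => h ^ (-((a : ℝ) + b + 2 - α)) * EE α h (fun x => g x * M a b x)) ?_
  intro l hl
  have hgl : ∀ q : ℕ, ContDiff ℝ (q : WithTop ℕ∞) (fun x => g (l • x)) := fun q =>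
    (hg q).comp (contDiff_const_smul l)
  have hd : ∀ q : ℕ, ContDiff ℝ (q : WithTop ℕ∞) (fun x => g x + -1 * g (l • x)) := fun q =>
    (hg q).add (contDiff_const.mul (hgl q))
  have hflat : Flat (2 * p + 2) (fun x => g x + -1 * g (l • x)) := by
    have h1 : ∀ q : ℕ, ContDiff ℝ (q : WithTop ℕ∞) (fun x => g x - 1) := fun q => (hg q).sub contDiff_const
    have h2 := hfl.scale l (h1 _)
    have h3 : ContDiff ℝ ((2 * p + 2 : ℕ) : WithTop ℕ∞) (fun x => g (l • x) - 1) := (hgl _).sub contDiff_const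
    have h4 := h2.mul h3 (contDiff_const (c := (-1 : ℝ)))
    have h5 := hfl.add (h1 _) (h3.mul (contDiff_const (c := (-1 : ℝ)))) h4
    have : (fun x => g x + -1 * g (l • x)) = fun x => g x - 1 + (g (l • x) - 1) * (-1) := by
      ext x; ring
    rw [this]; exact h5
  have hM := hflat.M_mul hd a b
  have hMc : Continuous (M a b) := (M_cd 0 a b).continuous
  have hcs1 : CS (fun x => g x * M a b x) := hgc.mul hMc
  have hcs2 : CS (fun x => g (l • x) * M a b x) := (hgc.scale hl).mul hMc
  have heq : (fun x => M a b x * (g x + -1 * g (l • x))) =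
      fun x => g x * M a b x + -1 * (g (l • x) * M a b x) := by ext x; ring
  obtain ⟨C, hC, hb⟩ := EE_flat (q := 2 * p + 2 + (a + b) + 2) hα0 hα2
    (u := fun x => M a b x * (g x + -1 * g (l • x))) (by rw [heq]; exact hcs1.add (hcs2.cmul _))
    ((M_cd _ a b).mul (hd _)) le_rfl hM
  refine ⟨C, fun h hh => ?_⟩
  have hb := hb h hh
  rw [heq, EE_add hcs1 (hcs2.cmul _) hα2 hh, EE_cmul] at hb
  have hsc := EE_scale α h hl (fun x => g x * M a b x)
  have hMs : (fun x => g (l • x) * M a b (l • x)) = fun x => l ^ (a + b) * (g (l • x) * M a b x) := by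
    ext x; simp only [M, Pi.smul_apply, smul_eq_mul]; ring
  rw [hMs, EE_cmul] at hsc
  have key : (l * h) ^ (-((a : ℝ) + b + 2 - α)) * EE α (l * h) (fun x => g x * M a b x) =
      h ^ (-((a : ℝ) + b + 2 - α)) * EE α h (fun x => g (l • x) * M a b x) := by
    have e1 : l ^ (-((a : ℝ) + b + 2 - α)) * l ^ (a + b) = l ^ (α - 2) := by
      rw [← rpow_natCast, ← rpow_add hl]; congr 1; push_cast; ring
    have e2 : 0 < l ^ (a + b) := by positivity
    rw [mul_rpow hl.le hh.le]
    have e3 : l ^ (-((a : ℝ) + b + 2 - α)) * EE α (l * h) (fun x => g x * M a b x) =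
      EE α h (fun x => g (l • x) * M a b x) := by
      apply mul_left_cancel₀ e2.ne'
      rw [hsc, ← e1]; ring
    rw [← e3]; ring
  rw [key, ← mul_sub, abs_mul, abs_of_pos (rpow_pos_of_pos hh _)]
  rw [show EE α h (fun x => g x * M a b x) + -1 * EE α h (fun x => g (l • x) * M a b x) =
    EE α h (fun x => g x * M a b x) - EE α h (fun x => g (l • x) * M a b x) by ring] at hb
  calc _ ≤ h ^ (-((a : ℝ) + b + 2 - α)) * (C * h ^ (((2 * p + 2 + (a + b) : ℕ) : ℝ) + 2 - α)) := by gcongr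
    _ = C * (h ^ (-((a : ℝ) + b + 2 - α)) * h ^ (((2 * p + 2 + (a + b) : ℕ) : ℝ) + 2 - α)) := by ring
    _ = C * h ^ (2 * p + 2) := by
      rw [← rpow_add hh, ← rpow_natCast]; congr 2; push_cast; ring

lemma M_sg (ε : Fin 2 → ℤˣ) (a b : ℕ) (x : Fin 2 → ℝ) :
    M a b (sg ε x) = ((ε 0 : ℤ) : ℝ) ^ a * ((ε 1 : ℤ) : ℝ) ^ b * M a b x := by
  simp only [M, sg]; ring

lemma EE_odd {g : (Fin 2 → ℝ) → ℝ} (hgrad : ∀ x y, euclNorm x = euclNorm y → g x = g y) (α h : ℝ)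
    {a b : ℕ} (hab : Odd a ∨ Odd b) : EE α h (fun x => g x * M a b x) = 0 := by
  have key : ∀ ε : Fin 2 → ℤˣ, ((ε 0 : ℤ) : ℝ) ^ a * ((ε 1 : ℤ) : ℝ) ^ b = -1 →
      EE α h (fun x => g x * M a b x) = 0 := by
    intro ε he
    have h1 := EE_sg ε α h (fun x => g x * M a b x)
    have h2 : (fun x => g (sg ε x) * M a b (sg ε x)) = fun x => -1 * (g x * M a b x) := by
      ext x
      rw [M_sg, he, hgrad (sg ε x) x (by simp only [euclNorm, sg_sq])]; ring
    rw [h2, EE_cmul] at h1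
    linarith
  rcases hab with ha | hb
  · apply key ![-1, 1]; simp [ha.neg_one_pow]
  · apply key ![1, -1]; simp [hb.neg_one_pow]

lemma Gon_odd (γ : ℕ × ℕ) (h : ℝ) {a b : ℕ} (hab : Odd a ∨ Odd b) :
    ∑ β ∈ Gon γ, M a b (gridPt β h) = 0 := by
  rcases hab with ha | hb
  · have : ∑ β ∈ Gon γ, M a b (gridPt β h) = ∑ β ∈ Gon γ, -M a b (gridPt β h) := by
      refine Finset.sum_nbij' (fun β => (-β.1, β.2)) (fun β => (-β.1, β.2)) ?_ ?_ ?_ ?_ ?_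
      · intro β hβ
        simp only [Gon, Finset.mem_insert, Finset.mem_singleton] at hβ ⊢
        rcases hβ with rfl | rfl | rfl | rfl <;> simp
      · intro β hβ
        simp only [Gon, Finset.mem_insert, Finset.mem_singleton] at hβ ⊢
        rcases hβ with rfl | rfl | rfl | rfl <;> simp
      · intro β _; simp
      · intro β _; simp
      · intro β _; simp [M, gridPt, ha.neg_pow]
    rw [Finset.sum_neg_distrib] at this
    linarith
  · have : ∑ β ∈ Gon γ, M a b (gridPt β h) = ∑ β ∈ Gon γ, -M a b (gridPt β h) := by
      refine Finset.sum_nbij' (fun β => (β.1, -β.2)) (fun β => (β.1, -β.2)) ?_ ?_ ?_ ?_ ?_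
      · intro β hβ
        simp only [Gon, Finset.mem_insert, Finset.mem_singleton] at hβ ⊢
        rcases hβ with rfl | rfl | rfl | rfl <;> simp
      · intro β hβ
        simp only [Gon, Finset.mem_insert, Finset.mem_singleton] at hβ ⊢
        rcases hβ with rfl | rfl | rfl | rfl <;> simp
      · intro β _; simp
      · intro β _; simp
      · intro β _; simp [M, gridPt, hb.neg_pow]
    rw [Finset.sum_neg_distrib] at this
    linarith

lemma bigO_out {f k : ℝ → ℝ} (h : f =O[nhdsWithin 0 (Set.Ioi 0)] k) (hk : ∀ x : ℝ, 0 < x → 0 ≤ k x) :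
    ∃ C > (0:ℝ), ∃ h₁ > (0:ℝ), ∀ x : ℝ, 0 < x → x < h₁ → |f x| ≤ C * k x := by
  obtain ⟨C, hC, hb⟩ := h.exists_pos
  rw [Asymptotics.IsBigOWith] at hb
  obtain ⟨u, hu, hs⟩ := (mem_nhdsGT_iff_exists_Ioo_subset).mp hb
  refine ⟨C, hC, u, hu, fun x hx hxu => ?_⟩
  have := hs ⟨hx, hxu⟩
  simp only [Set.mem_ofPred_eq, norm_eq_abs, abs_of_nonneg (hk x hx)] at this
  exact this

lemma bigO_in {f k : ℝ → ℝ} {C : ℝ} (h : ∀ x : ℝ, 0 < x → x < 1 → |f x| ≤ C * k x) (hC : 0 ≤ C) :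
    f =O[nhdsWithin 0 (Set.Ioi 0)] k := by
  refine Asymptotics.IsBigO.of_bound C ?_
  filter_upwards [Ioo_mem_nhdsGT (zero_lt_one (α := ℝ))] with x hx
  refine (h x hx.1 hx.2).trans ?_
  rw [norm_eq_abs]
  gcongr
  exact le_abs_self _

lemma grid_bd {m : ℕ} {u : (Fin 2 → ℝ) → ℝ} (hu : ContDiff ℝ (m : WithTop ℕ∞) u) (hf : Flat m u)
    (β : ℤ × ℤ) : (fun h => u (gridPt β h)) =O[nhdsWithin 0 (Set.Ioi 0)] fun h => h ^ m := by
  obtain ⟨B, hB⟩ : ∃ B, B = ‖(![(β.1 : ℝ), (β.2 : ℝ)] : Fin 2 → ℝ)‖ := ⟨_, rfl⟩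
  have hB0 : 0 ≤ B := hB ▸ norm_nonneg _
  obtain ⟨A, hA, hb⟩ := hf.bound hu B
  refine bigO_in (C := A * B ^ m) (fun h h0 h1 => ?_) (by positivity)
  have e : gridPt β h = h • ![(β.1 : ℝ), (β.2 : ℝ)] := by
    ext i; fin_cases i <;> simp [gridPt, mul_comm]
  have hn : ‖gridPt β h‖ = h * B := by rw [e, norm_smul, norm_of_nonneg h0.le, hB]
  have := hb (gridPt β h) (by rw [hn]; nlinarith)
  rw [hn] at this
  refine this.trans (le_of_eq ?_)
  rw [mul_pow]; ring

lemma g_flat {p : ℕ} {g : (Fin 2 → ℝ) → ℝ} (hg : ∀ q : ℕ, ContDiff ℝ (q : WithTop ℕ∞) g) (hg0 : g 0 = 1)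
    (hgd : ∀ k : Fin 2 → ℕ, 1 ≤ ∑ j, k j → ∑ j, k j ≤ 2 * p + 1 → md k g 0 = 0) :
    Flat (2 * p + 2) (fun x => g x - 1) := by
  have e : (fun x => g x - 1) = fun x => g x - ∑ k ∈ ({(0, 0)} : Finset (ℕ × ℕ)), (fun _ => (1:ℝ)) k * M k.1 k.2 x := by
    ext x; simp [M]
  rw [e]
  refine Flat_of_D (by rw [← e]; exact (hg _).sub contDiff_const) fun a b hab => ?_
  rw [pd_iter_lin _ _ _ b _ _ (hg _) fun k => M_cd _ _ _,
    pd_iter_lin _ _ _ a _ _ (pd_iter_cd b 1 (hg _)) fun k => pd_iter_cd b 1 (M_cd _ _ _)]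
  simp only [D_M, Finset.sum_singleton]
  split_ifs with h
  · obtain ⟨rfl, rfl⟩ := Prod.mk.inj h
    simp [hg0]
  · have := hgd ![a, b] (by
      simp only [Fin.sum_univ_two, Matrix.cons_val_zero, Matrix.cons_val_one]
      have : ¬ (a = 0 ∧ b = 0) := fun h' => h (by rw [h'.1, h'.2])
      omega) (by simp only [Fin.sum_univ_two, Matrix.cons_val_zero, Matrix.cons_val_one]; omega)
    have h2 : md ![a, b] g = (pd 0)^[a] ((pd 1)^[b] g) := rfl
    rw [h2] at this
    rw [this]; simp

theorem main_aux
    (p : ℕ) (α : ℝ) (hα0 : 0 < α) (hα2 : α < 2)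
    (φ : (Fin 2 → ℝ) → ℝ) (hφ : ContDiff ℝ ((2 * p + 4 : ℕ) : WithTop ℕ∞) φ) (hφc : CS φ)
    (g : (Fin 2 → ℝ) → ℝ) (hg : ∀ q : ℕ, ContDiff ℝ (q : WithTop ℕ∞) g) (hgc : CS g)
    (hgrad : ∀ x y, euclNorm x = euclNorm y → g x = g y)
    (hg0 : g 0 = 1)
    (hfl : Flat (2 * p + 2) (fun x => g x - 1))
    (Np : ℕ)
    (ξ : Fin Np → ℕ × ℕ) (hξinj : Function.Injective ξ)
    (hξmem : ∀ i, (ξ i).1 + (ξ i).2 ≤ p)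
    (hξsurj : ∀ γ : ℕ × ℕ, γ.1 + γ.2 ≤ p → ∃ i, ξ i = γ)
    (K : Matrix (Fin Np) (Fin Np) ℝ)
    (hK : ∀ i j, K i j = ∑ β ∈ Gon (ξ j),
      (β.1 : ℝ) ^ (2 * (ξ i).1) * (β.2 : ℝ) ^ (2 * (ξ i).2))
    (G : ℝ → Matrix (Fin Np) (Fin Np) ℝ)
    (hG : ∀ h, G h = Matrix.diagonal fun j => g (gridPt (((ξ j).1 : ℤ), ((ξ j).2 : ℤ)) h))
    (c : ℝ → Fin Np → ℝ)
    (hc : ∀ h : ℝ, 0 < h → ∀ i, c h i =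
      h ^ (-(((2 * (ξ i).1 : ℕ) : ℝ) + ((2 * (ξ i).2 : ℕ) : ℝ) + 2 - α)) *
        EE α h (fun x => g x * M (2 * (ξ i).1) (2 * (ξ i).2) x))
    (ω : ℝ → Fin Np → ℝ)
    (hω : ∃ h₀ > (0:ℝ), ∀ h : ℝ, 0 < h → h < h₀ → (K * G h).mulVec (ω h) = c h) :
    ∃ ωbar : Fin Np → ℝ,
      ((fun h => Real.sqrt (∑ i, (ω h i - ωbar i) ^ 2)) =O[nhdsWithin 0 (Set.Ioi 0)] fun h => h ^ (2 * p + 2)) ∧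
      ((fun h => h ^ ((2:ℝ) - α) * (∑ i, ωbar i * ∑ β ∈ Gon (ξ i), φ (gridPt β h)) - EE α h φ)
        =O[nhdsWithin 0 (Set.Ioi 0)] fun h => h ^ (2 * (p : ℝ) + 4 - α)) := by
  have hdet := K_inv ξ hξinj hξmem hξsurj K hK
  choose cb Cc hCc hcb using fun i => c_lim hα0 hα2 hg hgc hfl (2 * (ξ i).1) (2 * (ξ i).2)
  have hcO : ∀ i, (fun h => c h i - cb i) =O[nhdsWithin 0 (Set.Ioi 0)] fun h => h ^ (2 * p + 2) := by
    intro i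
    refine bigO_in (C := Cc i) (fun h h0 _ => ?_) (hCc i).le
    rw [hc h h0]; exact hcb i h h0
  obtain ⟨ωb, hωb⟩ : ∃ ωb, ωb = K⁻¹.mulVec cb := ⟨_, rfl⟩
  have hKω : K.mulVec ωb = cb := by
    rw [hωb, Matrix.mulVec_mulVec, Matrix.mul_nonsing_inv _ hdet, Matrix.one_mulVec]
  have hpow : (fun h : ℝ => h ^ (2 - α) * h ^ (2 * p + 2)) =ᶠ[nhdsWithin 0 (Set.Ioi 0)] fun h => h ^ (2 * (p : ℝ) + 4 - α) := by
    filter_upwards [self_mem_nhdsWithin] with h (h0 : 0 < h)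
    rw [← rpow_natCast, ← rpow_add h0]; congr 1; push_cast; ring
  refine ⟨ωb, ?_, ?_⟩
  · have hj : ∀ j, (fun h => ω h j - ωb j) =O[nhdsWithin 0 (Set.Ioi 0)] fun h => h ^ (2 * p + 2) := by
      intro j
      have hgO := grid_bd ((hg (2 * p + 2)).sub contDiff_const) hfl (((ξ j).1 : ℤ), ((ξ j).2 : ℤ))
      obtain ⟨γ, hγ⟩ : ∃ γ : ℝ → ℝ, γ = fun h => g (gridPt (((ξ j).1 : ℤ), ((ξ j).2 : ℤ)) h) := ⟨_, rfl⟩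
      have hgO : (fun h => γ h - 1) =O[nhdsWithin 0 (Set.Ioi 0)] fun h => h ^ (2 * p + 2) := by
        rw [hγ]; exact hgO
      have hp0 : Filter.Tendsto (fun h : ℝ => h ^ (2 * p + 2)) (nhdsWithin 0 (Set.Ioi 0)) (nhds 0) := by
        have : Continuous fun h : ℝ => h ^ (2 * p + 2) := by fun_prop
        have := (this.tendsto 0).mono_left (nhdsWithin_le_nhds (s := Set.Ioi 0))
        simpa using this
      have hγ1 : Filter.Tendsto γ (nhdsWithin 0 (Set.Ioi 0)) (nhds 1) := by
        have := (hgO.trans_tendsto hp0).add_const 1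
        simpa using this
      have hinv : (fun h => (γ h)⁻¹) =O[nhdsWithin 0 (Set.Ioi 0)] fun _ => (1:ℝ) :=
        (hγ1.inv₀ one_ne_zero).isBigO_one ℝ
      have hδ : (fun h => (∑ i, K⁻¹ j i * (c h i - cb i)) + (-ωb j) * (γ h - 1)) =O[nhdsWithin 0 (Set.Ioi 0)]
          fun h => h ^ (2 * p + 2) :=
        (Asymptotics.IsBigO.fun_sum fun i _ => (hcO i).const_mul_left _).add (hgO.const_mul_left _)
      have := hinv.mul hδ
      simp only [one_mul] at this
      refine Asymptotics.IsBigO.congr' this ?_ Filter.EventuallyEq.rfl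
      obtain ⟨h₀, hh₀, hω⟩ := hω
      filter_upwards [Ioo_mem_nhdsGT hh₀, hγ1.eventually_ne one_ne_zero] with h hh hγ0
      have h1 := hω h hh.1 hh.2
      have h2 : (G h).mulVec (ω h) = K⁻¹.mulVec (c h) := by
        rw [← h1, Matrix.mulVec_mulVec, ← Matrix.mul_assoc, Matrix.nonsing_inv_mul _ hdet, Matrix.one_mul]
      have h3 := congrFun h2 j
      rw [hG, Matrix.mulVec_diagonal] at h3
      have h4 : ∑ i, K⁻¹ j i * (c h i - cb i) = γ h * ω h j - ωb j := by
        simp only [mul_sub, Finset.sum_sub_distrib]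
        have e1 : ∑ i, K⁻¹ j i * c h i = γ h * ω h j := by rw [hγ]; exact h3.symm
        have e2 : ∑ i, K⁻¹ j i * cb i = ωb j := by rw [hωb]; rfl
        rw [e1, e2]
      rw [h4]
      field_simp
      ring
    have hs : (fun h => ∑ j, ‖ω h j - ωb j‖) =O[nhdsWithin 0 (Set.Ioi 0)] fun h => h ^ (2 * p + 2) :=
      Asymptotics.IsBigO.fun_sum fun j _ => (hj j).norm_left
    refine (Asymptotics.IsBigO.of_norm_le fun h => ?_).trans hs
    rw [norm_of_nonneg (sqrt_nonneg _)]
    apply sqrt_le_iff.mpr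
    refine ⟨by positivity, ?_⟩
    rw [sq, Finset.sum_mul]
    refine Finset.sum_le_sum fun i _ => ?_
    calc (ω h i - ωb i) ^ 2 = ‖ω h i - ωb i‖ * ‖ω h i - ωb i‖ := by rw [norm_eq_abs, abs_mul_abs_self, sq]
      _ ≤ _ := by
        gcongr
        exact Finset.single_le_sum (f := fun j => ‖ω h j - ωb j‖) (fun _ _ => norm_nonneg _) (Finset.mem_univ i)
  · obtain ⟨s, t, hs, hT⟩ := taylor (cd_le hφ (show 2 * p + 2 ≤ 2 * p + 4 by omega))
    have hgM : ∀ k : ℕ × ℕ, CS (fun x => g x * M k.1 k.2 x) := fun k => hgc.mul (M_cd 0 _ _).continuous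
    have hP : ∀ q : ℕ, ContDiff ℝ (q : WithTop ℕ∞) (fun x => ∑ k ∈ s, t k * M k.1 k.2 x) := fun q =>
      ContDiff.sum fun k _ => contDiff_const.mul (M_cd _ _ _)
    -- the remainder
    obtain ⟨R, hR⟩ : ∃ R : (Fin 2 → ℝ) → ℝ, R = fun x => φ x + -1 * ∑ k ∈ s, t k * (g x * M k.1 k.2 x) := ⟨_, rfl⟩
    have hRe : R = fun x => (φ x - ∑ k ∈ s, t k * M k.1 k.2 x) + (g x - 1) * (-1 * ∑ k ∈ s, t k * M k.1 k.2 x) := by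
      rw [hR]; ext x
      have : ∑ k ∈ s, t k * (g x * M k.1 k.2 x) = g x * ∑ k ∈ s, t k * M k.1 k.2 x := by
        rw [Finset.mul_sum]; exact Finset.sum_congr rfl fun k _ => by ring
      rw [this]; ring
    have hRcs : CS R := by rw [hR]; exact hφc.add ((CS_sum s t _ hgM).cmul _)
    have hg1 : ∀ q : ℕ, ContDiff ℝ (q : WithTop ℕ∞) (fun x => g x - 1) := fun q => (hg q).sub contDiff_const
    have hP' : ∀ q : ℕ, ContDiff ℝ (q : WithTop ℕ∞) (fun x => -1 * ∑ k ∈ s, t k * M k.1 k.2 x) := fun q =>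
      contDiff_const.mul (hP q)
    have hRcd : ContDiff ℝ ((2 * p + 4 : ℕ) : WithTop ℕ∞) R := by
      rw [hRe]; exact (hφ.sub (hP _)).add ((hg1 _).mul (hP' _))
    have hRfl : Flat (2 * p + 2) R := by
      rw [hRe]
      exact Flat.add ((cd_le hφ (by omega)).sub (hP _)) ((hg1 _).mul (hP' _)) hT (hfl.mul (hg1 _) (hP' _))
    obtain ⟨CR, hCR, hbR⟩ := EE_flat hα0 hα2 hRcs hRcd (by omega) hRfl
    have hRO : (fun h => EE α h R) =O[nhdsWithin 0 (Set.Ioi 0)] fun h => h ^ (2 * (p : ℝ) + 4 - α) := by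
      refine bigO_in (C := CR) (fun h h0 _ => ?_) hCR.le
      have := hbR h h0
      rwa [show ((2 * p + 2 : ℕ) : ℝ) + 2 - α = 2 * (p : ℝ) + 4 - α by push_cast; ring] at this
    have hA : (fun h => h ^ (2 - α) * ∑ i, ωb i * ∑ β ∈ Gon (ξ i),
        (fun x => φ x - ∑ k ∈ s, t k * M k.1 k.2 x) (gridPt β h)) =O[nhdsWithin 0 (Set.Ioi 0)]
        fun h => h ^ (2 * (p : ℝ) + 4 - α) := by
      refine (((Asymptotics.isBigO_refl _ _).mul (Asymptotics.IsBigO.fun_sum fun i _ =>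
        (Asymptotics.IsBigO.fun_sum fun β _ =>
          grid_bd ((cd_le hφ (by omega)).sub (hP _)) hT β).const_mul_left _))).congr' Filter.EventuallyEq.rfl hpow
    have hW : ∀ k ∈ s, (fun h => h ^ (2 - α) * (∑ i, ωb i * ∑ β ∈ Gon (ξ i), M k.1 k.2 (gridPt β h)) -
        EE α h (fun x => g x * M k.1 k.2 x)) =O[nhdsWithin 0 (Set.Ioi 0)] fun h => h ^ (2 * (p : ℝ) + 4 - α) := by
      intro k hk
      by_cases hodd : Odd k.1 ∨ Odd k.2
      · have : ∀ h, h ^ (2 - α) * (∑ i, ωb i * ∑ β ∈ Gon (ξ i), M k.1 k.2 (gridPt β h)) -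
            EE α h (fun x => g x * M k.1 k.2 x) = 0 := by
          intro h
          rw [EE_odd hgrad α h hodd]
          simp [Gon_odd _ h hodd]
        simp only [this]
        exact Asymptotics.isBigO_zero _ _
      · simp only [not_or, Nat.not_odd_iff_even] at hodd
        obtain ⟨⟨a, ha⟩, ⟨b, hb⟩⟩ := hodd
        have hkl := hs k hk
        obtain ⟨i, hi⟩ := hξsurj (a, b) (by simp only; omega)
        have h1 : k.1 = 2 * (ξ i).1 := by rw [hi]; simp only; omega
        have h2 : k.2 = 2 * (ξ i).2 := by rw [hi]; simp only; omega
        have hsm : (fun h : ℝ => h ^ (((2 * (ξ i).1 : ℕ) : ℝ) + ((2 * (ξ i).2 : ℕ) : ℝ) + 2 - α)) =O[nhdsWithin 0 (Set.Ioi 0)]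
            fun h : ℝ => h ^ (2 - α) := by
          refine bigO_in (C := 1) (fun h h0 h1 => ?_) zero_le_one
          rw [one_mul, abs_of_pos (rpow_pos_of_pos h0 _)]
          apply rpow_le_rpow_of_exponent_ge h0 h1.le
          have := Nat.cast_nonneg (α := ℝ) (2 * (ξ i).1)
          have := Nat.cast_nonneg (α := ℝ) (2 * (ξ i).2)
          linarith
        have h3 := (hsm.mul ((hcO i).const_mul_left (-1))).congr' Filter.EventuallyEq.rfl hpow
        refine h3.congr' ?_ Filter.EventuallyEq.rfl
        filter_upwards [self_mem_nhdsWithin] with h (h0 : 0 < h)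
        rw [h1, h2]
        have e1 : EE α h (fun x => g x * M (2 * (ξ i).1) (2 * (ξ i).2) x) =
            h ^ (((2 * (ξ i).1 : ℕ) : ℝ) + ((2 * (ξ i).2 : ℕ) : ℝ) + 2 - α) * c h i := by
          rw [hc h h0 i, ← mul_assoc, ← rpow_add h0, add_neg_cancel, rpow_zero, one_mul]
        have e2 : ∑ j, ωb j * ∑ β ∈ Gon (ξ j), M (2 * (ξ i).1) (2 * (ξ i).2) (gridPt β h) =
            h ^ (2 * (ξ i).1 + 2 * (ξ i).2) * cb i := by
          rw [← hKω, Matrix.mulVec, dotProduct, Finset.mul_sum]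
          refine Finset.sum_congr rfl fun j _ => ?_
          rw [hK, Finset.mul_sum, Finset.sum_mul, Finset.mul_sum]
          refine Finset.sum_congr rfl fun β _ => ?_
          simp only [M, gridPt, Matrix.cons_val_zero, Matrix.cons_val_one, mul_pow, pow_add]
          ring
        have e3 : h ^ (2 - α) * h ^ (2 * (ξ i).1 + 2 * (ξ i).2) =
            h ^ (((2 * (ξ i).1 : ℕ) : ℝ) + ((2 * (ξ i).2 : ℕ) : ℝ) + 2 - α) := by
          rw [← rpow_natCast, ← rpow_add h0]; congr 1; push_cast; ring
        rw [e1, e2]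
        linear_combination (-(cb i)) * e3
    have hfin := (hA.sub hRO).add (Asymptotics.IsBigO.fun_sum fun k hk => (hW k hk).const_mul_left (t k))
    refine hfin.congr' ?_ Filter.EventuallyEq.rfl
    filter_upwards [self_mem_nhdsWithin] with h (h0 : 0 < h)
    have e1 : EE α h R = EE α h φ + -1 * ∑ k ∈ s, t k * EE α h (fun x => g x * M k.1 k.2 x) := by
      rw [hR, EE_add hφc ((CS_sum s t _ hgM).cmul _) hα2 h0, EE_cmul, EE_sum s t _ hgM hα2 h0]
    have e2 : ∑ i, ωb i * ∑ β ∈ Gon (ξ i), (φ (gridPt β h) - ∑ k ∈ s, t k * M k.1 k.2 (gridPt β h)) =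
        (∑ i, ωb i * ∑ β ∈ Gon (ξ i), φ (gridPt β h)) -
          ∑ k ∈ s, t k * ∑ i, ωb i * ∑ β ∈ Gon (ξ i), M k.1 k.2 (gridPt β h) := by
      simp only [Finset.sum_sub_distrib, mul_sub]
      congr 1
      simp only [Finset.mul_sum]
      symm
      rw [Finset.sum_comm]
      refine Finset.sum_congr rfl fun i _ => ?_
      rw [Finset.sum_comm]
      refine Finset.sum_congr rfl fun β _ => Finset.sum_congr rfl fun k _ => ?_
      ring
    have e3 : ∑ k ∈ s, t k * (h ^ (2 - α) * (∑ i, ωb i * ∑ β ∈ Gon (ξ i), M k.1 k.2 (gridPt β h)) -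
        EE α h (fun x => g x * M k.1 k.2 x)) =
        h ^ (2 - α) * (∑ k ∈ s, t k * ∑ i, ωb i * ∑ β ∈ Gon (ξ i), M k.1 k.2 (gridPt β h)) -
          ∑ k ∈ s, t k * EE α h (fun x => g x * M k.1 k.2 x) := by
      simp only [mul_sub, Finset.sum_sub_distrib]
      congr 1
      rw [Finset.mul_sum]
      exact Finset.sum_congr rfl fun k _ => by ring
    beta_reduce
    rw [e1, e2, e3]
    ring

/-- convergence of the correction weights and `O(h^{2p+4-α})` accuracy of the
on-diagonal corrected trapezoidal rule. -/
theorem on_diagonal_corrected_trapezoidal_rule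
    (p : ℕ) (α : ℝ) (hα0 : 0 < α) (hα2 : α < 2)
    (Nsm : ℕ) (hNsm : 2 * p + 4 ≤ Nsm)
    (φ : (Fin 2 → ℝ) → ℝ) (hφ : ContDiff ℝ (Nsm : ℕ∞) φ) (hφc : HasCompactSupport φ)
    (g : (Fin 2 → ℝ) → ℝ) (hg : ContDiff ℝ (⊤ : ℕ∞) g) (hgc : HasCompactSupport g)
    (hgrad : ∀ x y, euclNorm x = euclNorm y → g x = g y)
    (hg0 : g 0 = 1)
    (hgd : ∀ k : Fin 2 → ℕ, 1 ≤ ∑ j, k j → ∑ j, k j ≤ 2 * p + 1 → md k g 0 = 0)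
    (Np : ℕ) (hNp : Np = (p + 1) * (p + 2) / 2)
    (ξ : Fin Np → ℕ × ℕ) (hξinj : Function.Injective ξ)
    (hξmem : ∀ i, (ξ i).1 + (ξ i).2 ≤ p)
    (hξsurj : ∀ γ : ℕ × ℕ, γ.1 + γ.2 ≤ p → ∃ i, ξ i = γ)
    (K : Matrix (Fin Np) (Fin Np) ℝ)
    (hK : ∀ i j, K i j = ∑ β ∈ Gon (ξ j),
      (β.1 : ℝ) ^ (2 * (ξ i).1) * (β.2 : ℝ) ^ (2 * (ξ i).2))
    (G : ℝ → Matrix (Fin Np) (Fin Np) ℝ)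
    (hG : ∀ h, G h = Matrix.diagonal fun j => g (gridPt (((ξ j).1 : ℤ), ((ξ j).2 : ℤ)) h))
    (c : ℝ → Fin Np → ℝ)
    (hc : ∀ h : ℝ, 0 < h → ∀ i, c h i =
      h ^ (-(2 * (((ξ i).1 : ℝ) + ((ξ i).2 : ℝ)) + 2 - α)) *
        ((∫ x : Fin 2 → ℝ, g x * sOn α x * x 0 ^ (2 * (ξ i).1) * x 1 ^ (2 * (ξ i).2)) -
          trap h fun x => g x * sOn α x * x 0 ^ (2 * (ξ i).1) * x 1 ^ (2 * (ξ i).2)))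
    (ω : ℝ → Fin Np → ℝ)
    (hω : ∃ h₀ > (0:ℝ), ∀ h : ℝ, 0 < h → h < h₀ → (K * G h).mulVec (ω h) = c h) :
    ∃ ωbar : Fin Np → ℝ,
      (∃ C > (0:ℝ), ∃ h₁ > (0:ℝ), ∀ h : ℝ, 0 < h → h < h₁ →
        Real.sqrt (∑ i, (ω h i - ωbar i) ^ 2) ≤ C * h ^ (2 * p + 2)) ∧
      (∃ C > (0:ℝ), ∃ h₁ > (0:ℝ), ∀ h : ℝ, 0 < h → h < h₁ →
        |trap h (fun x => φ x * sOn α x) +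
            h ^ ((2:ℝ) - α) * (∑ i, ωbar i * ∑ β ∈ Gon (ξ i), φ (gridPt β h)) -
            ∫ x : Fin 2 → ℝ, φ x * sOn α x| ≤ C * h ^ (2 * (p : ℝ) + 4 - α)) := by
  have hg' : ∀ q : ℕ, ContDiff ℝ (q : WithTop ℕ∞) g := fun q => hg.of_le (by exact_mod_cast le_top)
  have hφ' : ContDiff ℝ ((2 * p + 4 : ℕ) : WithTop ℕ∞) φ :=
    cd_le (q := Nsm) (by exact_mod_cast hφ) hNsm
  have hcs : CS g := CS_of hg.continuous hgc
  obtain ⟨ωb, h1, h2⟩ := main_aux p α hα0 hα2 φ hφ' (CS_of hφ.continuous hφc) g hg' hcs hgrad hg0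
    (g_flat hg' hg0 hgd) Np ξ hξinj hξmem hξsurj K hK G hG c (by
      intro h hh i
      rw [hc h hh i]
      have e : (fun x : Fin 2 → ℝ => g x * sOn α x * x 0 ^ (2 * (ξ i).1) * x 1 ^ (2 * (ξ i).2)) =
          fun x => (g x * M (2 * (ξ i).1) (2 * (ξ i).2) x) * sOn α x := by
        ext x; simp only [M]; ring
      rw [e, EE]
      congr 2
      push_cast; ring) ω hω
  refine ⟨ωb, ?_, ?_⟩
  · obtain ⟨C, hC, u, hu, hb⟩ := bigO_out h1 (fun x hx => by positivity)
    exact ⟨C, hC, u, hu, fun h h0 hh => (le_abs_self _).trans (hb h h0 hh)⟩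
  · obtain ⟨C, hC, u, hu, hb⟩ := bigO_out h2 (fun x hx => by positivity)
    refine ⟨C, hC, u, hu, fun h h0 hh => ?_⟩
    have := hb h h0 hh
    rw [EE] at this
    convert this using 2
    ring
end

section
/- Let n ∈ ℕ, 0 < α < 2, and η, k ∈ ℕ₀^n. There exists a polynomial P_{k,η} in n variables with deg P_{k,η} = 2 + |η|₁ + |k|₁ such that for all x ∈ ℝ^n∖{0}, ∂^k ( x^η x₁² / |x|^{n+α} ) = |x|^{−(n−2+α−|η|₁+|k|₁)} · P_{k,η}(x/|x|). -/
open MeasureTheory Real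

open MvPolynomial in
lemma aux_poly {n : ℕ} (p : MvPolynomial (Fin n) ℝ) (x : Fin n → ℝ) :
    ∃ L : (Fin n → ℝ) →L[ℝ] ℝ, HasFDerivAt (fun y => eval y p) L x ∧
      ∀ j, L (Pi.single j 1) = eval x (pderiv j p) := by
  induction p using MvPolynomial.induction_on with
  | C a => exact ⟨0, by simpa using hasFDerivAt_const a x, by simp⟩
  | add p q hp hq =>
    obtain ⟨L, hL, h1⟩ := hp
    obtain ⟨M, hM, h2⟩ := hq
    exact ⟨L + M, by simpa using hL.fun_add hM, by simp [h1, h2]⟩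
  | mul_X p i hp =>
    obtain ⟨L, hL, h1⟩ := hp
    refine ⟨_, by simpa using hL.fun_mul (hasFDerivAt_apply i x), ?_⟩
    intro j
    simp only [add_apply, smul_apply,
      ContinuousLinearMap.proj_apply, h1, smul_eq_mul, pderiv_mul, pderiv_X, map_add, map_mul, eval_X]
    by_cases h : i = j
    · subst h; simp; ring
    · simp [h]; ring

noncomputable def sqP (n : ℕ) : MvPolynomial (Fin n) ℝ := ∑ j, MvPolynomial.X j ^ 2

lemma sqP_eval {n : ℕ} (x : Fin n → ℝ) : MvPolynomial.eval x (sqP n) = ∑ j, x j ^ 2 := by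
  simp [sqP]

lemma sqP_pos {n : ℕ} {x : Fin n → ℝ} (hx : x ≠ 0) : 0 < ∑ j, x j ^ 2 := by
  obtain ⟨i, hi⟩ := Function.ne_iff.1 hx
  exact Finset.sum_pos' (fun _ _ => sq_nonneg _) ⟨i, Finset.mem_univ _, by
    have : x i ≠ 0 := hi
    positivity⟩

lemma euclNorm_pos {n : ℕ} {x : Fin n → ℝ} (hx : x ≠ 0) : 0 < euclNorm x :=
  Real.sqrt_pos.2 (sqP_pos hx)

lemma euclNorm_rpow {n : ℕ} (x : Fin n → ℝ) (s : ℝ) :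
    euclNorm x ^ s = (MvPolynomial.eval x (sqP n)) ^ (s / 2) := by
  rw [sqP_eval, euclNorm, Real.sqrt_eq_rpow, ← Real.rpow_mul (Finset.sum_nonneg fun _ _ => sq_nonneg _)]
  congr 1; ring

lemma sqP_hom (n : ℕ) : (sqP n).IsHomogeneous 2 :=
  MvPolynomial.IsHomogeneous.sum _ _ _ fun i _ => MvPolynomial.isHomogeneous_X_pow i 2

open MvPolynomial in
lemma sqP_pderiv {n : ℕ} (j : Fin n) : pderiv j (sqP n) = 2 * X j := by
  simp only [sqP, map_sum, pderiv_pow, pderiv_X]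
  rw [Finset.sum_eq_single j]
  · simp
  · intro b _ hb; simp [Pi.single_apply, hb.symm, hb]
  · simp

def Good {n : ℕ} (D : ℕ) (s : ℝ) (m : ℕ) (f : (Fin n → ℝ) → ℝ) : Prop :=
  ∃ Q : MvPolynomial (Fin n) ℝ, Q.IsHomogeneous (D + m) ∧
    ∀ x, x ≠ 0 → f x = MvPolynomial.eval x Q * euclNorm x ^ (-(s + 2 * m))

open MvPolynomial in
lemma Good.pd {n : ℕ} {D : ℕ} (hD : 0 < D) {s : ℝ} {m : ℕ} {f : (Fin n → ℝ) → ℝ}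
    (h : Good D s m f) (j : Fin n) : Good D s (m + 1) (pd j f) := by
  obtain ⟨Q, hQ, hf⟩ := h
  refine ⟨sqP n * pderiv j Q - C (s + 2 * m) * (X j * Q), ?_, ?_⟩
  · refine IsHomogeneous.sub ?_ ?_
    · have := (sqP_hom n).mul (hQ.pderiv (i := j))
      rwa [show 2 + (D + m - 1) = D + (m + 1) by omega] at this
    · have := ((isHomogeneous_X ℝ j).mul hQ).C_mul (s + 2 * m)
      rwa [show 1 + (D + m) = D + (m + 1) by omega] at this
  · intro x hx
    obtain ⟨L, hL, h1⟩ := aux_poly Q x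
    obtain ⟨M, hM, h2⟩ := aux_poly (sqP n) x
    have hpos : 0 < eval x (sqP n) := by rw [sqP_eval]; exact sqP_pos hx
    have hd := hL.fun_mul (hM.rpow_const (p := -(s + 2 * m) / 2) (Or.inl hpos.ne'))
    have he : f =ᶠ[nhds x] fun y => eval y Q * (eval y (sqP n)) ^ (-(s + 2 * m) / 2) := by
      filter_upwards [isOpen_ne.mem_nhds hx] with y hy
      rw [hf y hy, euclNorm_rpow]
    have hd' := hd.congr_of_eventuallyEq he
    rw [_root_.pd, hd'.fderiv, euclNorm_rpow]
    simp only [add_apply, smul_apply, smul_eq_mul, h1, h2,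
      sqP_pderiv, map_sub, map_mul, eval_C, eval_X, map_ofNat]
    have e1 : eval x (sqP n) ^ (-(s + 2 * m) / 2)
        = eval x (sqP n) * eval x (sqP n) ^ (-(s + 2 * m) / 2 - 1) := by
      rw [Real.rpow_sub_one hpos.ne']; field_simp
    have e2 : -(s + 2 * ((m + 1 : ℕ) : ℝ)) / 2 = -(s + 2 * m) / 2 - 1 := by push_cast; ring
    rw [e2, e1]; ring

lemma Good.iter {n : ℕ} {D : ℕ} (hD : 0 < D) {s : ℝ} {m : ℕ} {f : (Fin n → ℝ) → ℝ}
    (h : Good D s m f) (j : Fin n) (a : ℕ) : Good D s (m + a) ((_root_.pd j)^[a] f) := by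
  induction a with
  | zero => exact h
  | succ a ih => rw [Function.iterate_succ_apply']; exact ih.pd hD j

lemma Good.md {n : ℕ} {D : ℕ} (hD : 0 < D) {s : ℝ} {f : (Fin n → ℝ) → ℝ}
    (h : Good D s 0 f) (k : Fin n → ℕ) : Good D s (∑ j, k j) (md k f) := by
  have : ∀ l : List (Fin n), Good D s ((l.map k).sum)
      (l.foldr (fun j g => (_root_.pd j)^[k j] g) f) := by
    intro l
    induction l with
    | nil => exact h
    | cons a l ih =>
      simp only [List.map_cons, List.sum_cons, List.foldr_cons]
      rw [add_comm]; exact ih.iter hD a _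
  have := this (List.finRange n)
  rwa [← Fin.sum_univ_def] at this

open MvPolynomial in
lemma eval_scale {n d : ℕ} {Q : MvPolynomial (Fin n) ℝ} (hQ : Q.IsHomogeneous d)
    (r : ℝ) (x : Fin n → ℝ) : eval (fun j => r * x j) Q = r ^ d * eval x Q := by
  rw [eval_eq, eval_eq, Finset.mul_sum]
  refine Finset.sum_congr rfl fun i hi => ?_
  have := hQ.degree_eq_sum_deg_support hi
  simp only [mul_pow, Finset.prod_mul_distrib, Finset.prod_pow_eq_pow_sum]
  rw [this]; ring

open MvPolynomial in
lemma trick_deg {n : ℕ} (i : Fin n) (e : ℕ) :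
    ((sqP n - 1) * X i ^ e).totalDegree = 2 + e := by
  have h0 : sqP n ≠ 0 := by
    intro h
    have h2 := congrArg (eval (Pi.single i 1)) h
    rw [sqP_eval, map_zero] at h2
    exact absurd h2 (sqP_pos (by intro h; simpa using congrFun h i)).ne'
  have h1 : (sqP n).totalDegree = 2 := (sqP_hom n).totalDegree h0
  have h2 : (sqP n - 1).totalDegree = 2 := by
    rw [sub_eq_add_neg, totalDegree_add_eq_left_of_totalDegree_lt, h1]
    rw [h1, totalDegree_neg]; simp
  have h3 : sqP n - 1 ≠ 0 := by intro h; rw [h] at h2; simp at h2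
  rw [totalDegree_mul_of_isDomain h3 (pow_ne_zero _ (X_ne_zero i)), h2, totalDegree_X_pow]

theorem deriv_structure_on_diagonal_kernel
    (n : ℕ) (hn : 0 < n) (α : ℝ) (hα0 : 0 < α) (hα2 : α < 2)
    (η k : Fin n → ℕ) :
    ∃ P : MvPolynomial (Fin n) ℝ,
      P.totalDegree = 2 + (∑ j, η j) + (∑ j, k j) ∧
      ∀ x : Fin n → ℝ, x ≠ 0 →
        md k (fun y => (∏ j, y j ^ η j) * y ⟨0, hn⟩ ^ 2 / euclNorm y ^ ((n : ℝ) + α)) x =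
          euclNorm x ^ (-(((n : ℝ) - 2 + α - ∑ j, (η j : ℝ)) + ∑ j, (k j : ℝ))) *
            MvPolynomial.eval (fun j => x j / euclNorm x) P := by
  have h0 : Good (2 + ∑ j, η j) ((n : ℝ) + α) 0
      (fun y => (∏ j, y j ^ η j) * y ⟨0, hn⟩ ^ 2 / euclNorm y ^ ((n : ℝ) + α)) := by
    refine ⟨(∏ j, MvPolynomial.X j ^ η j) * MvPolynomial.X ⟨0, hn⟩ ^ 2, ?_, ?_⟩
    · have := (MvPolynomial.IsHomogeneous.prod Finset.univ
        (fun j : Fin n => (MvPolynomial.X j ^ η j : MvPolynomial (Fin n) ℝ)) η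
        fun i _ => MvPolynomial.isHomogeneous_X_pow i (η i)).mul
        (MvPolynomial.isHomogeneous_X_pow (R := ℝ) (⟨0, hn⟩ : Fin n) 2)
      convert this using 1; omega
    · intro x hx
      simp only [map_mul, map_prod, map_pow, MvPolynomial.eval_X]
      rw [Real.rpow_neg (euclNorm_pos hx).le]
      simp [div_eq_mul_inv]
  obtain ⟨Q, hQ, hf⟩ := h0.md (by omega) k
  have key : ∀ x : Fin n → ℝ, x ≠ 0 →
        md k (fun y => (∏ j, y j ^ η j) * y ⟨0, hn⟩ ^ 2 / euclNorm y ^ ((n : ℝ) + α)) x =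
          euclNorm x ^ (-(((n : ℝ) - 2 + α - ∑ j, (η j : ℝ)) + ∑ j, (k j : ℝ))) *
            MvPolynomial.eval (fun j => x j / euclNorm x) Q := by
    intro x hx
    have hp := euclNorm_pos hx
    rw [hf x hx]
    have : MvPolynomial.eval x Q = euclNorm x ^ (2 + ∑ j, η j + ∑ j, k j) *
        MvPolynomial.eval (fun j => x j / euclNorm x) Q := by
      rw [← eval_scale hQ]
      congr 2
      funext j; field_simp
    rw [this, ← Real.rpow_natCast, mul_right_comm, ← Real.rpow_add hp]
    congr 2
    push_cast; ring
  by_cases hz : Q = 0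
  -- degenerate case (e.g. n = 1, α = 1, η = 0): use a polynomial vanishing on the sphere
  · refine ⟨(sqP n - 1) * MvPolynomial.X ⟨0, hn⟩ ^ (∑ j, η j + ∑ j, k j), ?_, ?_⟩
    · rw [trick_deg]; omega
    · intro x hx
      have hp := euclNorm_pos hx
      rw [key x hx, hz]
      have : ∑ j, (x j / euclNorm x) ^ 2 = 1 := by
        simp only [div_pow]
        rw [← Finset.sum_div, div_eq_one_iff_eq (by positivity), euclNorm,
          Real.sq_sqrt (sqP_pos hx).le]
      simp [sqP_eval, this]
  · exact ⟨Q, hQ.totalDegree hz, key⟩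
end

section
/- Let n ∈ ℕ, p ∈ ℕ₀, 0 < α < 2, M = max(4p+4, n+1), and let ξ ∈ ℕ₀^n with |ξ|₁ ≤ p. Let Ψ ∈ C^∞(ℝ^n) be a radially symmetric cut-off with Ψ(x) = 0 for |x| ≤ 1/2 and Ψ(x) = 1 for |x| ≥ 1. Assume g ∈ C_c^N(ℝ^n) with N ≥ M and ∂^k g(0) = 0 for all 1 ≤ |k|₁ ≤ 2p+1. For k ∈ ℤ^n∖{0} choose j with |k_j| = max_{1≤l≤n}|k_l|, and define s_ξ(x) = x^{2ξ} x₁²/|x|^{n+α}, I_ξ(h,k) = ∫_{ℝ^n} e^{−2πi (k·x)/h} g(x) s_ξ(x) Ψ(x/h) dx, and W(ξ,k) = (−i)^M ∫_{ℝ^n} ∂_j^M(Ψ·s_ξ)(x) e^{−2πi k·x} dx (a finite quantity independent of h and of g). Then there exists C > 0, depending only on g and M, such that for all 0 < h ≤ 1 and all k ∈ ℤ^n∖{0}: | I_ξ(h,k) − g(0) W(ξ,k) h^{2|ξ|₁+2−α} (2π k_j)^{−M} | ≤ C |k|^{−M} ( h^{2p+4−α+2|ξ|₁} + h^M ). -/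
open MeasureTheory Real

lemma pd_contDiff {n : ℕ} (j : Fin n) {f : (Fin n → ℝ) → ℝ} {m : ℕ}
    (hf : ContDiff ℝ ((m + 1 : ℕ)) f) : ContDiff ℝ m (pd j f) := by
  have h := hf.fderiv_right (m := m) (by push_cast; exact le_rfl)
  exact h.clm_apply contDiff_const

lemma pdL_contDiff {n : ℕ} (L : List (Fin n)) {f : (Fin n → ℝ) → ℝ} {m : ℕ}
    (hf : ContDiff ℝ ((m + L.length : ℕ)) f) : ContDiff ℝ m (L.foldr pd f) := by
  induction L generalizing m with
  | nil => simpa using hf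
  | cons a L ih =>
    simp only [List.foldr_cons]
    apply pd_contDiff
    apply ih
    convert hf using 2
    simp; ring

lemma pd_comm_s3 {n : ℕ} (i j : Fin n) {f : (Fin n → ℝ) → ℝ}
    (hf : ContDiff ℝ 2 f) : pd i (pd j f) = pd j (pd i f) := by
  have key : ∀ (a b : Fin n) x, pd a (pd b f) x
      = fderiv ℝ (fderiv ℝ f) x (Pi.single a 1) (Pi.single b 1) := by
    intro a b x
    have hd : DifferentiableAt ℝ (fderiv ℝ f) x :=
      ((hf.fderiv_right (m := 1) (by norm_num)).differentiable (by norm_num)) x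
    unfold pd
    rw [fderiv_clm_apply hd (differentiableAt_const _)]
    simp
  funext x
  rw [key, key]
  exact (hf.contDiffAt.isSymmSndFDerivAt (by simp)) _ _

lemma pdL_perm {n : ℕ} {L L' : List (Fin n)} (h : L.Perm L') {f : (Fin n → ℝ) → ℝ} {m : ℕ}
    (hm : L.length ≤ m) (hf : ContDiff ℝ m f) : L.foldr pd f = L'.foldr pd f := by
  induction h with
  | nil => rfl
  | cons x _ ih => simp only [List.foldr_cons]; rw [ih (by simp at hm; omega)]
  | swap x y l =>
    simp only [List.foldr_cons]
    apply pd_comm_s3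
    simp at hm
    exact pdL_contDiff (m := 2) l (hf.of_le (by exact_mod_cast (by omega)))
  | trans h1 _ ih1 ih2 => rw [ih1 hm, ih2 (by rw [← h1.length_eq]; exact hm)]

lemma iterFD_eq_pdL {n : ℕ} {f : (Fin n → ℝ) → ℝ} (m : ℕ) (hf : ContDiff ℝ m f)
    (v : Fin m → Fin n) (x : Fin n → ℝ) :
    iteratedFDeriv ℝ m f x (fun i => Pi.single (v i) 1) = (List.ofFn v).foldr pd f x := by
  induction m generalizing x with
  | zero => simp
  | succ m ih =>
    rw [List.ofFn_succ, List.foldr_cons, iteratedFDeriv_succ_apply_left]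
    have h1 : (List.ofFn fun i : Fin m => v i.succ).foldr pd f
        = fun y => iteratedFDeriv ℝ m f y (fun i => Pi.single (v i.succ) 1) := by
      funext y
      exact (ih (hf.of_le (by exact_mod_cast Nat.le_succ m)) (fun i => v i.succ) y).symm
    rw [h1]
    have hd : DifferentiableAt ℝ (iteratedFDeriv ℝ m f) x :=
      (hf.differentiable_iteratedFDeriv (by exact_mod_cast Nat.lt_succ_self m)) x
    unfold pd
    have h2 := (hd.hasFDerivAt.continuousMultilinear_apply_const
      (fun i => Pi.single (v i.succ) (1:ℝ))).fderiv
    rw [h2]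
    rfl

lemma md_eq_pdL {n : ℕ} (γ : Fin n → ℕ) (f : (Fin n → ℝ) → ℝ) :
    md γ f = ((List.finRange n).flatMap (fun j => List.replicate (γ j) j)).foldr pd f := by
  unfold md
  generalize List.finRange n = l
  induction l with
  | nil => simp
  | cons a l ih =>
    rw [List.foldr_cons, List.flatMap_cons, List.foldr_append, ih]
    generalize (l.flatMap (fun j => List.replicate (γ j) j)).foldr pd f = F
    induction γ a with
    | zero => simp
    | succ k ihk => rw [Function.iterate_succ_apply', ihk, List.replicate_succ, List.foldr_cons]

lemma iterFD_zero {n : ℕ} {g : (Fin n → ℝ) → ℝ} (P m : ℕ) (hg : ContDiff ℝ m g)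
    (hm1 : 1 ≤ m) (hm : m ≤ P)
    (hgd : ∀ k : Fin n → ℕ, 1 ≤ ∑ j, k j → ∑ j, k j ≤ P → md k g 0 = 0) :
    iteratedFDeriv ℝ m g 0 = 0 := by
  apply ContinuousMultilinearMap.toMultilinearMap_injective
  apply Module.Basis.ext_multilinear (fun _ => Pi.basisFun ℝ (Fin n))
  intro v
  simp only [Pi.basisFun_apply]
  change iteratedFDeriv ℝ m g 0 (fun i => Pi.single (v i) 1) = 0
  rw [iterFD_eq_pdL m hg]
  have hsum : ∑ j, (List.ofFn v).count j = m := by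
    have := List.sum_toFinset_count_eq_length (List.ofFn v)
    rw [List.length_ofFn] at this
    refine Eq.trans ?_ this
    symm
    apply Finset.sum_subset (Finset.subset_univ _)
    intro x _ hx
    simpa [List.count_eq_zero] using hx
  have h := hgd (fun j => (List.ofFn v).count j) (by rw [hsum]; exact hm1) (by rw [hsum]; exact hm)
  rw [md_eq_pdL] at h
  rw [pdL_perm (L' := (List.finRange n).flatMap
    (fun j => List.replicate ((List.ofFn v).count j) j)) _ (by simp) hg, h]
  rw [List.perm_iff_count]
  intro a
  rw [List.count_flatMap]
  have : (List.count a ∘ fun j => List.replicate ((List.ofFn v).count j) j)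
     = fun j => if j = a then (List.ofFn v).count a else 0 := by
    funext j
    simp only [Function.comp, List.count_replicate, beq_iff_eq]
    split_ifs with h
    · rw [h]
    · rfl
  rw [this, ← List.ofFn_eq_map, List.sum_ofFn]
  simp

lemma pdIter_eq {n : ℕ} {f : (Fin n → ℝ) → ℝ} (j : Fin n) (m : ℕ) (hf : ContDiff ℝ m f)
    (x : Fin n → ℝ) :
    (pd j)^[m] f x = iteratedFDeriv ℝ m f x (fun _ => Pi.single j 1) := by
  rw [iterFD_eq_pdL m hf (fun _ => j), List.ofFn_const]
  have : ∀ k, (pd j)^[k] f = (List.replicate k j).foldr pd f := by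
    intro k
    induction k with
    | zero => simp
    | succ k ihk => rw [Function.iterate_succ_apply', ihk, List.replicate_succ, List.foldr_cons]
  rw [this]

lemma pdIter_bound {n : ℕ} {f : (Fin n → ℝ) → ℝ} (j : Fin n) (m : ℕ) (hf : ContDiff ℝ m f)
    (x : Fin n → ℝ) : |(pd j)^[m] f x| ≤ ‖iteratedFDeriv ℝ m f x‖ := by
  rw [pdIter_eq j m hf, ← Real.norm_eq_abs]
  refine (ContinuousMultilinearMap.le_opNorm _ _).trans ?_
  simp [Pi.norm_single]

lemma rpow_cmp (a : ℝ) {x z : ℝ} (hz : 0 < z) (h1 : z / 3 ≤ x) (h2 : x ≤ 3 * z) :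
    x ^ a ≤ 3 ^ |a| * z ^ a := by
  have hx : 0 < x := by linarith
  rcases le_total 0 a with ha | ha
  · rw [abs_of_nonneg ha, ← Real.mul_rpow (by norm_num) hz.le]
    exact Real.rpow_le_rpow hx.le h2 ha
  · rw [abs_of_nonpos ha, Real.rpow_neg (by norm_num), ← Real.inv_rpow (by norm_num),
      ← Real.mul_rpow (by norm_num) hz.le]
    exact Real.rpow_le_rpow_of_nonpos (by positivity) (by linarith) ha

lemma symb_Phi {n : ℕ} {Φ : (Fin n → ℝ) → ℝ} (d : ℝ) (hΦ : ∀ m : ℕ, ContDiff ℝ m Φ)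
    (hhom : ∀ (y : Fin n → ℝ) (t : ℝ), 1 < ‖y‖ → 1 ≤ t → Φ (t • y) = t ^ d * Φ y) (m : ℕ) :
    ∃ K : ℝ, 0 ≤ K ∧ ∀ y, ‖iteratedFDeriv ℝ m Φ y‖ ≤ K * (1 + ‖y‖) ^ (d - m) := by
  have hc : Continuous (iteratedFDeriv ℝ m Φ) := (hΦ m).continuous_iteratedFDeriv le_rfl
  obtain ⟨K, hK⟩ := (isCompact_closedBall (0 : Fin n → ℝ) 2).exists_bound_of_continuousOn
    hc.continuousOn
  have hK0 : 0 ≤ K := (norm_nonneg _).trans (hK 0 (by simp))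
  refine ⟨K * 3 ^ |d - m|, by positivity, fun y => ?_⟩
  have hy0 := norm_nonneg y
  rw [mul_assoc]
  rcases le_total ‖y‖ 2 with hy | hy
  · refine (hK y (by simpa using hy)).trans ?_
    have := rpow_cmp (d - m) (x := 1) (z := 1 + ‖y‖) (by linarith) (by linarith) (by linarith)
    rw [Real.one_rpow] at this
    exact le_mul_of_one_le_right hK0 this
  · set t := ‖y‖ / 2 with ht
    have ht1 : 1 ≤ t := by rw [ht]; linarith
    have ht0 : 0 < t := by linarith
    set u := t⁻¹ • y with hu
    have hy' : y = t • u := by rw [hu, smul_smul, mul_inv_cancel₀ ht0.ne', one_smul]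
    have hun : ‖u‖ = 2 := by
      rw [hu, norm_smul, norm_inv, Real.norm_of_nonneg ht0.le, ht]
      field_simp
    have hev : (fun z => Φ (t • z)) =ᶠ[nhds u] (t ^ d) • Φ := by
      have : ∀ᶠ z in nhds u, 1 < ‖z‖ :=
        continuous_norm.continuousAt.eventually (lt_mem_nhds (by simp only [hun]; norm_num))
      filter_upwards [this] with z hz
      rw [hhom z t hz ht1]; rfl
    have h1 := (hev.iteratedFDeriv ℝ m).eq_of_nhds
    rw [iteratedFDeriv_comp_const_smul t (hΦ m), iteratedFDeriv_const_smul_apply (hΦ m).contDiffAt] at h1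
    simp only [← hy'] at h1
    have h2 : ‖iteratedFDeriv ℝ m Φ y‖ = t ^ (d - m) * ‖iteratedFDeriv ℝ m Φ u‖ := by
      have := congrArg norm h1
      rw [norm_smul, norm_smul, Real.norm_of_nonneg (by positivity),
        Real.norm_of_nonneg (by positivity)] at this
      rw [Real.rpow_sub ht0, Real.rpow_natCast, div_mul_eq_mul_div, ← this]
      field_simp
    rw [h2, mul_comm]
    refine mul_le_mul (hK u (by simp [hun])) ?_ (by positivity) hK0
    exact rpow_cmp _ (by linarith) (by rw [ht]; linarith) (by rw [ht]; linarith)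

lemma taylor_G {n : ℕ} {g : (Fin n → ℝ) → ℝ} {M P : ℕ} (hg : ContDiff ℝ M g) (hPM : P + 1 ≤ M)
    (hbd : ∀ m, 1 ≤ m → m ≤ M → ∃ K : ℝ, 0 ≤ K ∧ ∀ z, ‖iteratedFDeriv ℝ m g z‖ ≤ K)
    (hz0 : g 0 = 0)
    (hz : ∀ m, 1 ≤ m → m ≤ P → iteratedFDeriv ℝ m g 0 = 0) (i : ℕ) (hi : i ≤ P + 1) :
    ∃ K : ℝ, 0 ≤ K ∧ ∀ z, ‖iteratedFDeriv ℝ (P + 1 - i) g z‖ ≤ K * ‖z‖ ^ i := by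
  induction i with
  | zero =>
    obtain ⟨K, hK, h⟩ := hbd (P + 1) (by omega) hPM
    exact ⟨K, hK, by simpa using h⟩
  | succ i ih =>
    obtain ⟨K, hK, h⟩ := ih (by omega)
    refine ⟨K, hK, fun z => ?_⟩
    have e : P + 1 - i = (P + 1 - (i + 1)) + 1 := by omega
    rw [e] at h
    set m := P + 1 - (i + 1) with hm
    have h0 : ‖iteratedFDeriv ℝ m g 0‖ = 0 := by
      rcases Nat.eq_zero_or_pos m with h0 | h0
      · rw [h0, norm_iteratedFDeriv_zero, hz0, norm_zero]
      · rw [hz m h0 (by omega), norm_zero]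
    have hd : Differentiable ℝ (iteratedFDeriv ℝ m g) :=
      hg.differentiable_iteratedFDeriv (by exact_mod_cast (by omega))
    have := Convex.norm_image_sub_le_of_norm_fderiv_le (𝕜 := ℝ) (f := iteratedFDeriv ℝ m g)
      (s := Metric.closedBall 0 ‖z‖) (x := 0) (y := z) (C := K * ‖z‖ ^ i)
      (fun x _ => hd x) (fun x hx => by
        rw [norm_fderiv_iteratedFDeriv]
        refine (h x).trans ?_
        have : ‖x‖ ≤ ‖z‖ := by simpa using hx
        gcongr) (convex_closedBall _ _) (by simp) (by simp)
    rw [norm_eq_zero.mp h0, sub_zero, sub_zero] at this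
    rw [pow_succ, ← mul_assoc]
    exact this

lemma symb_G {n : ℕ} {g : (Fin n → ℝ) → ℝ} {M P : ℕ} (hg : ContDiff ℝ M g) (hPM : P + 1 ≤ M)
    (hgc : HasCompactSupport g)
    (hz : ∀ m, 1 ≤ m → m ≤ P → iteratedFDeriv ℝ m g 0 = 0) (m : ℕ) (hm : m ≤ M) :
    ∃ K : ℝ, 0 ≤ K ∧ ∀ h : ℝ, 0 < h → h ≤ 1 → ∀ y,
      ‖iteratedFDeriv ℝ m (fun y => g (h • y) - g 0) y‖
        ≤ K * h ^ (P + 1) * (1 + ‖y‖) ^ (((P + 1 : ℕ) : ℝ) - m) := by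
  set G : (Fin n → ℝ) → ℝ := fun x => g x - g 0 with hG
  have hGc : ContDiff ℝ M G := hg.sub contDiff_const
  have hGg : ∀ m, 1 ≤ m → m ≤ M → iteratedFDeriv ℝ m G = iteratedFDeriv ℝ m g := by
    intro m h1 h2
    funext z
    have : G = g - fun _ => g 0 := rfl
    rw [this, iteratedFDeriv_sub_apply (hg.of_le (by exact_mod_cast h2)).contDiffAt
      contDiff_const.contDiffAt, iteratedFDeriv_const_of_ne (by omega)]
    simp
  have hbd : ∀ m, 1 ≤ m → m ≤ M → ∃ K : ℝ, 0 ≤ K ∧ ∀ z, ‖iteratedFDeriv ℝ m G z‖ ≤ K := by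
    intro m h1 h2
    obtain ⟨K, hK⟩ := (hgc.iteratedFDeriv (𝕜 := ℝ) m).exists_bound_of_continuous
      (hg.continuous_iteratedFDeriv (by exact_mod_cast h2))
    rw [hGg m h1 h2]
    exact ⟨K, (norm_nonneg _).trans (hK 0), hK⟩
  have hmG : ContDiff ℝ m G := hGc.of_le (by exact_mod_cast hm)
  have hsc : ∀ (h : ℝ), 0 < h → ∀ y, ‖iteratedFDeriv ℝ m (fun y => g (h • y) - g 0) y‖
      = h ^ m * ‖iteratedFDeriv ℝ m G (h • y)‖ := by
    intro h hh y
    have := congrFun (iteratedFDeriv_comp_const_smul h hmG) y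
    change iteratedFDeriv ℝ m (fun y => g (h • y) - g 0) y = _ at this
    rw [this, norm_smul, Real.norm_of_nonneg (by positivity)]
  rcases le_total m (P + 1) with hmP | hmP
  · obtain ⟨K, hK0, hK⟩ := taylor_G hGc hPM hbd (by simp [hG])
      (fun m h1 h2 => by rw [hGg m h1 (by omega)]; exact hz m h1 h2) (P + 1 - m) (by omega)
    rw [show P + 1 - (P + 1 - m) = m by omega] at hK
    refine ⟨K, hK0, fun h hh hh1 y => ?_⟩
    rw [hsc h hh]
    have e : (1 + ‖y‖) ^ (((P + 1 : ℕ) : ℝ) - m) = (1 + ‖y‖) ^ (P + 1 - m) := by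
      rw [← Real.rpow_natCast, Nat.cast_sub hmP]
    have e2 : h ^ (P + 1) = h ^ m * h ^ (P + 1 - m) := by
      rw [← pow_add]; congr 1; omega
    rw [e, e2]
    calc h ^ m * ‖iteratedFDeriv ℝ m G (h • y)‖ ≤ h ^ m * (K * ‖h • y‖ ^ (P + 1 - m)) := by
          gcongr; exact hK _
      _ = K * (h ^ m * h ^ (P + 1 - m)) * ‖y‖ ^ (P + 1 - m) := by
          rw [norm_smul, Real.norm_of_nonneg hh.le, mul_pow]; ring
      _ ≤ _ := by gcongr; linarith
  · obtain ⟨K, hK0, hK⟩ := hbd m (by omega) hm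
    obtain ⟨R, hR⟩ := (hgc.isCompact.isBounded).exists_norm_le
    have hR' : ∀ z, iteratedFDeriv ℝ m G z ≠ 0 → ‖z‖ ≤ |R| := by
      intro z hz
      rw [hGg m (by omega) hm] at hz
      exact (hR z (support_iteratedFDeriv_subset m hz)).trans (le_abs_self R)
    refine ⟨K * (1 + |R|) ^ (m - (P + 1)), by positivity, fun h hh hh1 y => ?_⟩
    rw [hsc h hh]
    by_cases h0 : iteratedFDeriv ℝ m G (h • y) = 0
    · rw [h0, norm_zero, mul_zero]; positivity
    have hy := hR' _ h0
    rw [norm_smul, Real.norm_of_nonneg hh.le] at hy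
    have e : (1 + ‖y‖) ^ (((P + 1 : ℕ) : ℝ) - m) = ((1 + ‖y‖) ^ (m - (P + 1)))⁻¹ := by
      rw [← Real.rpow_natCast, Nat.cast_sub hmP, ← Real.rpow_neg (by positivity), neg_sub]
    have e2 : h ^ m = h ^ (P + 1) * h ^ (m - (P + 1)) := by
      rw [← pow_add]; congr 1; omega
    rw [e, e2, ← div_eq_mul_inv, le_div_iff₀ (by positivity)]
    calc _ = h ^ (P + 1) * ‖iteratedFDeriv ℝ m G (h • y)‖ * (h * (1 + ‖y‖)) ^ (m - (P + 1)) := by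
          rw [mul_pow]; ring
      _ ≤ h ^ (P + 1) * K * (1 + |R|) ^ (m - (P + 1)) := by
          gcongr
          · exact hK _
          · linarith
      _ = _ := by ring

lemma prod_bound {n : ℕ} {g Φ : (Fin n → ℝ) → ℝ} {M P : ℕ} (hg : ContDiff ℝ M g)
    (hPM : P + 1 ≤ M) (hgc : HasCompactSupport g)
    (hz : ∀ m, 1 ≤ m → m ≤ P → iteratedFDeriv ℝ m g 0 = 0)
    (d : ℝ) (hΦ : ∀ m : ℕ, ContDiff ℝ m Φ)
    (hhom : ∀ (y : Fin n → ℝ) (t : ℝ), 1 < ‖y‖ → 1 ≤ t → Φ (t • y) = t ^ d * Φ y) :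
    ∃ K : ℝ, 0 ≤ K ∧ ∀ h : ℝ, 0 < h → h ≤ 1 → ∀ y,
      ‖iteratedFDeriv ℝ M (fun y => (g (h • y) - g 0) * Φ y) y‖
        ≤ K * h ^ (P + 1) * (1 + ‖y‖) ^ (((P + 1 : ℕ) : ℝ) + d - M) := by
  choose A hA0 hA using symb_Phi d hΦ hhom
  choose B hB0 hB using symb_G hg hPM hgc hz
  refine ⟨∑ i ∈ (Finset.range (M + 1)).attach, (M.choose i : ℝ) *
    B i.1 (by have := Finset.mem_range.mp i.2; omega) * A (M - i), ?_, fun h hh hh1 y => ?_⟩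
  · exact Finset.sum_nonneg fun i _ => mul_nonneg (mul_nonneg (by positivity) (hB0 _ _)) (hA0 _)
  have hf : ContDiff ℝ M (fun y : Fin n → ℝ => g (h • y) - g 0) :=
    (hg.comp (contDiff_const_smul h)).sub contDiff_const
  refine (norm_iteratedFDeriv_mul_le hf (hΦ M) y le_rfl).trans ?_
  rw [← Finset.sum_attach, Finset.sum_mul, Finset.sum_mul]
  refine Finset.sum_le_sum fun i _ => ?_
  have hi : i.1 ≤ M := by have := Finset.mem_range.mp i.2; omega
  have h1 := hB i.1 hi h hh hh1 y
  have h2 := hA (M - i) y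
  have hp : (0:ℝ) < 1 + ‖y‖ := by positivity
  have e : (1 + ‖y‖) ^ (((P + 1 : ℕ) : ℝ) + d - M)
      = (1 + ‖y‖) ^ (((P + 1 : ℕ) : ℝ) - i.1) * (1 + ‖y‖) ^ (d - (M - i.1 : ℕ)) := by
    rw [← Real.rpow_add hp, Nat.cast_sub hi]; congr 1; ring
  rw [e]
  have := mul_le_mul h1 h2 (norm_nonneg _) (by have := hB0 i.1 hi; positivity)
  rw [mul_assoc]
  refine (mul_le_mul_of_nonneg_left this (by positivity)).trans (le_of_eq ?_)
  ring

lemma euclNorm_nonneg {n : ℕ} (x : Fin n → ℝ) : 0 ≤ euclNorm x := Real.sqrt_nonneg _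

lemma euclNorm_smul {n : ℕ} {t : ℝ} (ht : 0 ≤ t) (x : Fin n → ℝ) :
    euclNorm (t • x) = t * euclNorm x := by
  unfold euclNorm
  simp only [Pi.smul_apply, smul_eq_mul, mul_pow]
  rw [← Finset.mul_sum, Real.sqrt_mul (by positivity), Real.sqrt_sq ht]

lemma norm_le_euclNorm {n : ℕ} (x : Fin n → ℝ) : ‖x‖ ≤ euclNorm x := by
  rw [pi_norm_le_iff_of_nonneg (euclNorm_nonneg x)]
  intro i
  apply Real.le_sqrt_of_sq_le
  rw [Real.norm_eq_abs, sq_abs]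
  exact Finset.single_le_sum (f := fun j => x j ^ 2) (fun j _ => sq_nonneg _) (Finset.mem_univ i)

lemma euclNorm_cont {n : ℕ} : Continuous (euclNorm (n := n)) := by
  unfold euclNorm; fun_prop

lemma s_hom {n : ℕ} (hn : 0 < n) (α : ℝ) (ξ : Fin n → ℕ) (t : ℝ) (ht : 0 < t) (y : Fin n → ℝ) :
    ((∏ i, (t • y) i ^ (2 * ξ i)) * (t • y) ⟨0, hn⟩ ^ 2 / euclNorm (t • y) ^ ((n : ℝ) + α))
    = t ^ (2 * (∑ i, (ξ i : ℝ)) + 2 - α - n) *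
      ((∏ i, y i ^ (2 * ξ i)) * y ⟨0, hn⟩ ^ 2 / euclNorm y ^ ((n : ℝ) + α)) := by
  rw [euclNorm_smul ht.le, Real.mul_rpow ht.le (euclNorm_nonneg y)]
  simp only [Pi.smul_apply, smul_eq_mul, mul_pow]
  rw [Finset.prod_mul_distrib, Finset.prod_pow_eq_pow_sum]
  have e : t ^ (2 * (∑ i, (ξ i : ℝ)) + 2 - α - n)
      = t ^ (∑ i, 2 * ξ i) * t ^ 2 / t ^ ((n : ℝ) + α) := by
    rw [show 2 * (∑ i, (ξ i : ℝ)) + 2 - α - n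
      = ((∑ i, 2 * ξ i : ℕ) : ℝ) + ((2 : ℕ) : ℝ) - (n + α) by
        push_cast; rw [Finset.mul_sum]; ring,
      Real.rpow_sub ht, Real.rpow_add ht, Real.rpow_natCast, Real.rpow_natCast]
  rw [e, div_mul_div_comm]
  congr 1
  ring

lemma Phi_smooth {n : ℕ} (hn : 0 < n) (α : ℝ) (ξ : Fin n → ℕ)
    (Ψ : (Fin n → ℝ) → ℝ) (hΨ : ContDiff ℝ (⊤ : ℕ∞) Ψ)
    (hΨ0 : ∀ x, euclNorm x ≤ 1 / 2 → Ψ x = 0) (m : ℕ) :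
    ContDiff ℝ m (fun y => Ψ y *
      ((∏ i, y i ^ (2 * ξ i)) * y ⟨0, hn⟩ ^ 2 / euclNorm y ^ ((n : ℝ) + α))) := by
  rw [contDiff_iff_contDiffAt]
  intro x
  rcases lt_or_ge (euclNorm x) (1 / 2) with hx | hx
  · have : ∀ᶠ z in nhds x, euclNorm z < 1 / 2 :=
      euclNorm_cont.continuousAt.eventually (gt_mem_nhds hx)
    refine (contDiffAt_const (c := (0:ℝ))).congr_of_eventuallyEq ?_
    filter_upwards [this] with z hz
    rw [hΨ0 z hz.le, zero_mul]
  · have hpos : 0 < euclNorm x := by linarith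
    have hs : (∑ j, x j ^ 2) ≠ 0 := by
      intro h; unfold euclNorm at hpos; rw [h] at hpos; simp at hpos
    have h1 : ContDiffAt ℝ m Ψ x := (hΨ.of_le (by exact_mod_cast le_top)).contDiffAt
    have h2 : ContDiffAt ℝ m (euclNorm (n := n)) x := by
      unfold euclNorm
      refine ContDiffAt.sqrt (f := fun x : Fin n → ℝ => ∑ j, x j ^ 2) ?_ hs
      fun_prop
    have h3 : ContDiffAt ℝ m (fun y : Fin n → ℝ => euclNorm y ^ ((n : ℝ) + α)) x :=
      h2.rpow_const_of_ne hpos.ne'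
    refine h1.mul (ContDiffAt.div ?_ h3 (Real.rpow_pos_of_pos hpos _).ne')
    apply ContDiffAt.mul
    · apply contDiffAt_prod
      intro i _
      fun_prop
    · fun_prop

noncomputable def cexpk {n : ℕ} (k : Fin n → ℤ) (x : Fin n → ℝ) : ℂ :=
  Complex.exp (-2 * (Real.pi : ℂ) * Complex.I * (∑ l, (k l : ℂ) * (x l : ℂ)))

lemma cexpk_hasFDeriv {n : ℕ} (k : Fin n → ℤ) (x : Fin n → ℝ) :
    DifferentiableAt ℝ (cexpk k) x ∧ ∀ j, fderiv ℝ (cexpk k) x (Pi.single j 1)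
      = -2 * (Real.pi : ℂ) * Complex.I * (k j : ℂ) * cexpk k x := by
  let L : (Fin n → ℝ) →L[ℝ] ℂ := (-2 * (Real.pi : ℂ) * Complex.I) •
    ∑ l, (k l : ℂ) • (Complex.ofRealCLM.comp (ContinuousLinearMap.proj (R := ℝ) l))
  have hL : ∀ x, L x = -2 * (Real.pi : ℂ) * Complex.I * (∑ l, (k l : ℂ) * (x l : ℂ)) := by
    intro x; simp [L]
  have he : cexpk k = fun x => Complex.exp (L x) := by
    funext x; rw [hL]; rfl
  have hd : HasFDerivAt (cexpk k) (Complex.exp (L x) • L) x := by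
    rw [he]
    exact L.hasFDerivAt.cexp
  refine ⟨hd.differentiableAt, fun j => ?_⟩
  rw [hd.fderiv, he]
  simp only [smul_apply, smul_eq_mul]
  rw [hL (Pi.single j 1)]
  have : ∑ l, (k l : ℂ) * (((Pi.single j 1 : Fin n → ℝ) l : ℝ) : ℂ) = k j := by
    rw [Finset.sum_eq_single j]
    · simp
    · intro b _ hb; simp [hb]
    · simp
  rw [this]; ring

lemma cexpk_cont {n : ℕ} (k : Fin n → ℤ) : Continuous (cexpk k) := by
  unfold cexpk; fun_prop

lemma cexpk_norm {n : ℕ} (k : Fin n → ℤ) (x : Fin n → ℝ) : ‖cexpk k x‖ = 1 := by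
  unfold cexpk
  rw [show (-2 * (Real.pi : ℂ) * Complex.I * (∑ l, (k l : ℂ) * (x l : ℂ)))
    = ((-2 * Real.pi * ∑ l, (k l : ℝ) * x l : ℝ) : ℂ) * Complex.I by push_cast; ring]
  exact Complex.norm_exp_ofReal_mul_I _

lemma pd_supp_s3 {n : ℕ} (j : Fin n) {F : (Fin n → ℝ) → ℝ} (hc : HasCompactSupport F) :
    HasCompactSupport (pd j F) := hc.fderiv_apply ℝ _

lemma int_cpt {n : ℕ} (k : Fin n → ℤ) {F : (Fin n → ℝ) → ℝ} (hF : Continuous F)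
    (hc : HasCompactSupport F) : Integrable (fun x => (F x : ℂ) * cexpk k x) := by
  apply Continuous.integrable_of_hasCompactSupport
  · exact (Complex.continuous_ofReal.comp hF).mul (cexpk_cont k)
  · exact HasCompactSupport.mul_right (hc.comp_left (g := fun r : ℝ => (r : ℂ)) (by simp))

lemma ibp1 {n : ℕ} (j : Fin n) (k : Fin n → ℤ) {F : (Fin n → ℝ) → ℝ} (hF : ContDiff ℝ 1 F)
    (hc : HasCompactSupport F) :
    ∫ x, (pd j F x : ℂ) * cexpk k x
      = (2 * (Real.pi : ℂ) * Complex.I * (k j : ℂ)) * ∫ x, (F x : ℂ) * cexpk k x := by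
  have hdF : ∀ x, HasFDerivAt (fun x => (F x : ℂ)) (Complex.ofRealCLM.comp (fderiv ℝ F x)) x :=
    fun x => Complex.ofRealCLM.hasFDerivAt.comp x
      ((hF.differentiable (by norm_num)) x).hasFDerivAt
  have h1 : ∀ x, fderiv ℝ (fun x => (F x : ℂ)) x (Pi.single j 1) = (pd j F x : ℂ) := by
    intro x; rw [(hdF x).fderiv]; rfl
  have hpc : Continuous (pd j F) := (pd_contDiff (m := 0) j (by simpa using hF)).continuous
  have hI := int_cpt k hF.continuous hc
  have hE : ∀ x, (F x : ℂ) * fderiv ℝ (cexpk k) x (Pi.single j 1)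
      = (-2 * (Real.pi : ℂ) * Complex.I * (k j : ℂ)) * ((F x : ℂ) * cexpk k x) := by
    intro x; rw [(cexpk_hasFDeriv k x).2 j]; ring
  have := integral_mul_fderiv_eq_neg_fderiv_mul_of_integrable (μ := volume)
    (f := fun x => (F x : ℂ)) (g := cexpk k) (v := Pi.single j 1)
    (by simp only [h1]; exact int_cpt k hpc (pd_supp_s3 j hc))
    (by simp only [hE]; exact hI.const_mul _) hI (fun x _ => (hdF x).differentiableAt)
    (fun x _ => (cexpk_hasFDeriv k x).1)
  simp only [h1, hE] at this
  rw [integral_const_mul] at this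
  rw [← neg_eq_iff_eq_neg.mpr this]
  ring

lemma ibpM {n : ℕ} (j : Fin n) (k : Fin n → ℤ) (m : ℕ) {F : (Fin n → ℝ) → ℝ}
    (hF : ContDiff ℝ m F) (hc : HasCompactSupport F) :
    ∫ x, ((pd j)^[m] F x : ℂ) * cexpk k x
      = (2 * (Real.pi : ℂ) * Complex.I * (k j : ℂ)) ^ m * ∫ x, (F x : ℂ) * cexpk k x := by
  induction m generalizing F with
  | zero => simp
  | succ m ih =>
    rw [Function.iterate_succ_apply, ih (pd_contDiff j hF) (pd_supp_s3 j hc),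
      ibp1 j k (hF.of_le (by exact_mod_cast Nat.le_add_left 1 m)) hc]
    ring

lemma pdIter_cont {n : ℕ} {f : (Fin n → ℝ) → ℝ} (j : Fin n) (m : ℕ) (hf : ContDiff ℝ m f) :
    Continuous ((pd j)^[m] f) := by
  rw [funext (pdIter_eq j m hf)]
  have := hf.continuous_iteratedFDeriv (m := m) le_rfl
  fun_prop

lemma int_decay {n : ℕ} (j : Fin n) (k : Fin n → ℤ) (m : ℕ) {F : (Fin n → ℝ) → ℝ}
    (hF : ContDiff ℝ m F) (K r : ℝ) (hr : r < -n)
    (hb : ∀ y, ‖iteratedFDeriv ℝ m F y‖ ≤ K * (1 + ‖y‖) ^ r) :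
    Integrable (fun x => ((pd j)^[m] F x : ℂ) * cexpk k x) ∧
    ‖∫ x, ((pd j)^[m] F x : ℂ) * cexpk k x‖ ≤ K * ∫ x : Fin n → ℝ, (1 + ‖x‖) ^ r := by
  have hi : Integrable (fun x : Fin n → ℝ => (1 + ‖x‖) ^ r) := by
    have := integrable_one_add_norm (E := Fin n → ℝ) (μ := volume) (r := -r) (by simp; linarith)
    simpa using this
  have hn : ∀ x, ‖((pd j)^[m] F x : ℂ) * cexpk k x‖ ≤ K * (1 + ‖x‖) ^ r := by
    intro x
    rw [norm_mul, cexpk_norm, mul_one, Complex.norm_real]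
    exact (pdIter_bound j m hF x).trans (hb x)
  have hcn : Continuous (fun x => ((pd j)^[m] F x : ℂ) * cexpk k x) :=
    (Complex.continuous_ofReal.comp (pdIter_cont j m hF)).mul (cexpk_cont k)
  refine ⟨(hi.const_mul K).mono' hcn.aestronglyMeasurable (.of_forall hn), ?_⟩
  rw [← integral_const_mul]
  exact norm_integral_le_of_norm_le (hi.const_mul K) (.of_forall hn)

lemma euclNorm_k {n : ℕ} (k : Fin n → ℤ) (j : Fin n) (hj : ∀ l, |k l| ≤ |k j|) :
    euclNorm (fun l => (k l : ℝ)) ≤ Real.sqrt n * |(k j : ℝ)| := by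
  unfold euclNorm
  rw [← Real.sqrt_sq (abs_nonneg (k j : ℝ)), ← Real.sqrt_mul (by positivity)]
  apply Real.sqrt_le_sqrt
  calc ∑ l, (k l : ℝ) ^ 2 ≤ ∑ l : Fin n, |(k j : ℝ)| ^ 2 := by
        apply Finset.sum_le_sum
        intro l _
        rw [← sq_abs]
        have : |(k l : ℝ)| ≤ |(k j : ℝ)| := by exact_mod_cast hj l
        gcongr
    _ = _ := by simp

/-- pointwise estimate of the Fourier-type integrals `I_ξ(h,k)` in terms of
the quantity `W(ξ,k)`. -/
theorem fourier_mode_estimate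
    (n : ℕ) (hn : 0 < n) (p : ℕ) (α : ℝ) (hα0 : 0 < α) (hα2 : α < 2)
    (M : ℕ) (hM : M = max (4 * p + 4) (n + 1))
    (ξ : Fin n → ℕ) (hξ : (∑ j, ξ j) ≤ p)
    (Ψ : (Fin n → ℝ) → ℝ) (hΨ : ContDiff ℝ (⊤ : ℕ∞) Ψ)
    (hΨrad : ∀ x y, euclNorm x = euclNorm y → Ψ x = Ψ y)
    (hΨ0 : ∀ x, euclNorm x ≤ 1 / 2 → Ψ x = 0)
    (hΨ1 : ∀ x, 1 ≤ euclNorm x → Ψ x = 1)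
    (Nsm : ℕ) (hNsm : M ≤ Nsm)
    (g : (Fin n → ℝ) → ℝ) (hg : ContDiff ℝ (Nsm : ℕ∞) g) (hgc : HasCompactSupport g)
    (hgd : ∀ k : Fin n → ℕ, 1 ≤ ∑ j, k j → ∑ j, k j ≤ 2 * p + 1 → md k g 0 = 0) :
    ∃ C > (0:ℝ), ∀ h : ℝ, 0 < h → h ≤ 1 → ∀ k : Fin n → ℤ, k ≠ 0 →
      ∀ j : Fin n, (∀ l, |k l| ≤ |k j|) →
      ‖(∫ x : Fin n → ℝ,
            Complex.exp (-2 * (Real.pi : ℂ) * Complex.I * (∑ l, (k l : ℂ) * (x l : ℂ)) / (h : ℂ)) *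
              ((g x * ((∏ i, x i ^ (2 * ξ i)) * x ⟨0, hn⟩ ^ 2 / euclNorm x ^ ((n : ℝ) + α)) *
                  Ψ (fun i => x i / h) : ℝ) : ℂ)) -
          (g 0 : ℂ) *
            ((-Complex.I) ^ M *
              ∫ x : Fin n → ℝ,
                (((pd j)^[M] (fun y =>
                    Ψ y * ((∏ i, y i ^ (2 * ξ i)) * y ⟨0, hn⟩ ^ 2 / euclNorm y ^ ((n : ℝ) + α))) x
                  : ℝ) : ℂ) *
                  Complex.exp (-2 * (Real.pi : ℂ) * Complex.I * (∑ l, (k l : ℂ) * (x l : ℂ)))) *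
            ((h ^ (2 * (∑ i, (ξ i : ℝ)) + 2 - α) : ℝ) : ℂ) *
            ((((2 * Real.pi * (k j : ℝ)) ^ M : ℝ) : ℂ))⁻¹‖ ≤
        C * (h ^ (2 * (p : ℝ) + 4 - α + 2 * ∑ i, (ξ i : ℝ)) + h ^ (M : ℝ)) /
          euclNorm (fun l => (k l : ℝ)) ^ M := by
  have hgM : ContDiff ℝ M g := hg.of_le (by exact_mod_cast hNsm)
  have hM4 : 4 * p + 4 ≤ M := hM ▸ le_max_left _ _
  set S : ℝ := ∑ i, (ξ i : ℝ) with hS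
  have hSp : S ≤ p := by rw [hS]; exact_mod_cast hξ
  have hS0 : 0 ≤ S := Finset.sum_nonneg fun i _ => Nat.cast_nonneg _
  set β : ℝ := 2 * S + 2 - α with hβ
  set Φ : (Fin n → ℝ) → ℝ := fun y =>
    Ψ y * ((∏ i, y i ^ (2 * ξ i)) * y ⟨0, hn⟩ ^ 2 / euclNorm y ^ ((n : ℝ) + α)) with hΦdef
  have hΦ : ∀ m : ℕ, ContDiff ℝ m Φ := Phi_smooth hn α ξ Ψ hΨ hΨ0
  have hhom : ∀ (y : Fin n → ℝ) (t : ℝ), 1 < ‖y‖ → 1 ≤ t → Φ (t • y) = t ^ (β - n) * Φ y := by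
    intro y t hy ht
    have h1 := norm_le_euclNorm y
    simp only [hΦdef]
    rw [s_hom hn α ξ t (by linarith) y, hΨ1 y (by linarith),
      hΨ1 (t • y) (by rw [euclNorm_smul (by linarith)]; nlinarith)]
    ring
  have hz : ∀ m, 1 ≤ m → m ≤ 2 * p + 1 → iteratedFDeriv ℝ m g 0 = 0 := fun m h1 h2 =>
    iterFD_zero (2 * p + 1) m (hgM.of_le (by exact_mod_cast (by omega))) h1 h2 hgd
  obtain ⟨K, hK0, hK⟩ := prod_bound hgM (P := 2 * p + 1) (by omega) hgc hz (β - n) hΦ hhom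
  obtain ⟨K', hK'0, hK'⟩ := symb_Phi (β - n) hΦ hhom M
  have hM4r : (4 : ℝ) * p + 4 ≤ M := by exact_mod_cast hM4
  set r : ℝ := ((2 * p + 1 + 1 : ℕ) : ℝ) + (β - n) - M with hr
  have hrn : r < -n := by rw [hr, hβ]; push_cast; linarith
  have hrn' : (β - n) - M < -n := by rw [hβ]; linarith
  set J : ℝ := ∫ x : Fin n → ℝ, (1 + ‖x‖) ^ r with hJ
  have hJ0 : 0 ≤ J := integral_nonneg fun x => by positivity
  refine ⟨K * J * Real.sqrt n ^ M + 1, by positivity, fun h hh hh1 k hk j hj => ?_⟩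
  set Fh : (Fin n → ℝ) → ℝ := fun y => g (h • y) * Φ y with hFh
  have hgh : ContDiff ℝ M (fun y : Fin n → ℝ => g (h • y)) := hgM.comp (contDiff_const_smul h)
  have hFhC : ContDiff ℝ M Fh := hgh.mul (hΦ M)
  have hFhc : HasCompactSupport Fh :=
    HasCompactSupport.mul_right (hgc.comp_smul hh.ne')
  -- the nonzero component
  have hkj : (k j : ℝ) ≠ 0 := by
    intro h0
    apply hk
    funext l
    have : k j = 0 := by exact_mod_cast h0
    have h2 := hj l
    rw [this, abs_zero] at h2
    exact abs_nonpos_iff.mp h2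
  -- rescaling
  have e1 : (∫ x : Fin n → ℝ,
            Complex.exp (-2 * (Real.pi : ℂ) * Complex.I * (∑ l, (k l : ℂ) * (x l : ℂ)) / (h : ℂ)) *
              ((g x * ((∏ i, x i ^ (2 * ξ i)) * x ⟨0, hn⟩ ^ 2 / euclNorm x ^ ((n : ℝ) + α)) *
                  Ψ (fun i => x i / h) : ℝ) : ℂ))
      = ((h ^ β : ℝ) : ℂ) * ∫ y, (Fh y : ℂ) * cexpk k y := by
    set f : (Fin n → ℝ) → ℂ := fun x =>
      Complex.exp (-2 * (Real.pi : ℂ) * Complex.I * (∑ l, (k l : ℂ) * (x l : ℂ)) / (h : ℂ)) *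
              ((g x * ((∏ i, x i ^ (2 * ξ i)) * x ⟨0, hn⟩ ^ 2 / euclNorm x ^ ((n : ℝ) + α)) *
                  Ψ (fun i => x i / h) : ℝ) : ℂ) with hf
    have h1 := Measure.integral_comp_smul (volume : Measure (Fin n → ℝ)) f h
    rw [Module.finrank_fin_fun, abs_of_pos (by positivity)] at h1
    have h2 : ∀ y, f (h • y) = ((h ^ (β - n) : ℝ) : ℂ) * ((Fh y : ℂ) * cexpk k y) := by
      intro y
      simp only [hf]
      rw [s_hom hn α ξ h hh y]
      have a1 : (fun i => (h • y) i / h) = y := by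
        funext i; simp only [Pi.smul_apply, smul_eq_mul]; field_simp
      have hhC : (h : ℂ) ≠ 0 := by exact_mod_cast hh.ne'
      have a2 : -2 * (Real.pi : ℂ) * Complex.I * (∑ l, (k l : ℂ) * (((h • y) l : ℝ) : ℂ)) / (h : ℂ)
          = -2 * (Real.pi : ℂ) * Complex.I * (∑ l, (k l : ℂ) * (y l : ℂ)) := by
        rw [div_eq_iff hhC, mul_assoc _ (∑ l, _) (h : ℂ), Finset.sum_mul]
        congr 1
        apply Finset.sum_congr rfl
        intro l _
        simp only [Pi.smul_apply, smul_eq_mul]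
        push_cast; ring
      rw [a1, a2]
      simp only [hFh, hΦdef, cexpk, hβ, hS]
      push_cast
      ring
    simp only [h2] at h1
    rw [integral_const_mul] at h1
    have h3 : ∫ x, f x = ((h ^ n : ℝ) : ℂ) * ((h ^ n)⁻¹ • ∫ x, f x) := by
      rw [Complex.real_smul, ← mul_assoc, ← Complex.ofReal_mul,
        mul_inv_cancel₀ (by positivity)]
      simp
    rw [h3, ← h1, ← mul_assoc, ← Complex.ofReal_mul]
    congr 2
    rw [Real.rpow_sub hh, Real.rpow_natCast]
    field_simp
  have e2 := ibpM j k M hFhC hFhc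
  obtain ⟨hi1, -⟩ := int_decay j k M (hΦ M) K' _ hrn' hK'
  have hFG : ContDiff ℝ M (fun y => (g (h • y) - g 0) * Φ y) :=
    (hgh.sub contDiff_const).mul (hΦ M)
  obtain ⟨-, hD⟩ := int_decay j k M hFG (K * h ^ (2 * p + 1 + 1)) r hrn (hK h hh hh1)
  have hi2 : Integrable (fun x => ((pd j)^[M] Fh x : ℂ) * cexpk k x) := by
    apply int_cpt k (pdIter_cont j M hFhC)
    rw [funext (pdIter_eq j M hFhC)]
    exact (hFhc.iteratedFDeriv (𝕜 := ℝ) M).comp_left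
      (g := fun T : ContinuousMultilinearMap ℝ (fun _ : Fin M => Fin n → ℝ) ℝ =>
        T (fun _ => Pi.single j 1)) (by simp)
  have e3 : ∫ x, ((pd j)^[M] (fun y => (g (h • y) - g 0) * Φ y) x : ℂ) * cexpk k x
      = (∫ x, ((pd j)^[M] Fh x : ℂ) * cexpk k x)
        - (g 0 : ℂ) * ∫ x, ((pd j)^[M] Φ x : ℂ) * cexpk k x := by
    rw [← integral_const_mul, ← integral_sub hi2 (hi1.const_mul _)]
    congr 1
    funext x
    have : (pd j)^[M] (fun y => (g (h • y) - g 0) * Φ y) x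
        = (pd j)^[M] Fh x - g 0 * (pd j)^[M] Φ x := by
      rw [pdIter_eq j M hFG, pdIter_eq j M hFhC, pdIter_eq j M (hΦ M)]
      have a : (fun y => (g (h • y) - g 0) * Φ y) = Fh - (g 0) • Φ := by
        funext y; simp [hFh]; ring
      have b : ContDiff ℝ M ((g 0) • Φ) := (hΦ M).const_smul (g 0)
      rw [a, iteratedFDeriv_sub_apply hFhC.contDiffAt b.contDiffAt,
        iteratedFDeriv_const_smul_apply (hΦ M).contDiffAt]
      simp
    rw [this]; push_cast; ring
  rw [e1]
  change ‖_ - (g 0 : ℂ) * ((-Complex.I) ^ M * ∫ x, ((pd j)^[M] Φ x : ℂ) * cexpk k x) *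
    ((h ^ β : ℝ) : ℂ) * _‖ ≤ _
  set A := ∫ y, (Fh y : ℂ) * cexpk k y
  set W := ∫ x, ((pd j)^[M] Φ x : ℂ) * cexpk k x
  set D := ∫ x, ((pd j)^[M] (fun y => (g (h • y) - g 0) * Φ y) x : ℂ) * cexpk k x
  rw [e2] at e3
  set q : ℝ := 2 * Real.pi * (k j : ℝ) with hq
  have hq0 : q ≠ 0 := by rw [hq]; have := Real.pi_pos.ne'; positivity
  have hqM : ((q ^ M : ℝ) : ℂ) ≠ 0 := by exact_mod_cast pow_ne_zero M hq0
  have e4 : (2 * (Real.pi : ℂ) * Complex.I * (k j : ℂ)) ^ M = ((q ^ M : ℝ) : ℂ) * Complex.I ^ M := by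
    rw [hq]; push_cast; rw [← mul_pow]; ring
  have e5 : (-Complex.I) ^ M * Complex.I ^ M = 1 := by
    rw [← mul_pow]; simp
  have e6 : ((h ^ β : ℝ) : ℂ) * A - (g 0 : ℂ) * ((-Complex.I) ^ M * W) * ((h ^ β : ℝ) : ℂ)
      * (((q ^ M : ℝ) : ℂ))⁻¹ = ((h ^ β : ℝ) : ℂ) * (((q ^ M : ℝ) : ℂ))⁻¹ * (-Complex.I) ^ M * D := by
    rw [e3, e4]
    have : A = (((q ^ M : ℝ) : ℂ))⁻¹ * (-Complex.I) ^ M * (((q ^ M : ℝ) : ℂ) * Complex.I ^ M * A) := by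
      calc A = ((((q ^ M : ℝ) : ℂ))⁻¹ * ((q ^ M : ℝ) : ℂ)) *
            ((-Complex.I) ^ M * Complex.I ^ M) * A := by
            rw [e5, inv_mul_cancel₀ hqM]; simp
        _ = _ := by ring
    nth_rewrite 1 [this]
    ring
  rw [e6, norm_mul, norm_mul, norm_mul, norm_inv, Complex.norm_real, Complex.norm_real,
    norm_pow, norm_pow, norm_neg, Complex.norm_I, one_pow, mul_one,
    Real.norm_of_nonneg (by positivity), Real.norm_eq_abs]
  set N := euclNorm (fun l => (k l : ℝ)) with hN
  have hN0 : 0 < N := by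
    refine lt_of_lt_of_le ?_ (norm_le_euclNorm _)
    rw [norm_pos_iff]
    intro h0
    exact hkj (congrFun h0 j)
  have hNq : N ≤ Real.sqrt n * |q| := by
    refine (euclNorm_k k j hj).trans ?_
    have : |(k j : ℝ)| ≤ |q| := by
      rw [hq, abs_mul, abs_of_pos (by positivity : 0 < 2 * Real.pi)]
      have := Real.pi_gt_three
      nlinarith [abs_nonneg (k j : ℝ)]
    gcongr
  have hqi : (|q| ^ M)⁻¹ ≤ Real.sqrt n ^ M / N ^ M := by
    have : 0 < |q| := abs_pos.mpr hq0
    rw [le_div_iff₀ (by positivity), inv_mul_le_iff₀ (by positivity), ← mul_pow, mul_comm]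
    exact pow_le_pow_left₀ hN0.le hNq M
  have hpow : h ^ β * h ^ (2 * p + 1 + 1) = h ^ (2 * (p : ℝ) + 4 - α + 2 * S) := by
    rw [← Real.rpow_natCast, ← Real.rpow_add hh]
    congr 1; rw [hβ]; push_cast; ring
  calc h ^ β * (|q| ^ M)⁻¹ * ‖D‖
      ≤ h ^ β * (Real.sqrt n ^ M / N ^ M) * (K * h ^ (2 * p + 1 + 1) * J) := by gcongr
    _ = K * J * Real.sqrt n ^ M * h ^ (2 * (p : ℝ) + 4 - α + 2 * S) / N ^ M := by
        rw [← hpow]; ring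
    _ ≤ _ := by
        have := Real.rpow_nonneg hh.le (M : ℝ)
        gcongr
        · linarith
        · linarith
end
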